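/- arXiv:1810.02879 — 3 statements merged into one kernel-verified Lean document; each statement's English description precedes it below -/
import Mathlib

section
/- (Radial L²_t L^q_x Strichartz estimates.) Let u₀, u₁ be radially symmetric and let u solve the free wave equation u_tt − Δu = 0 on ℝ × ℝ³ with u(0) = u₀, u_t(0) = u₁. If q > 4 and s satisfies 1/2 + 3/q = 3/2 − s, then ‖u‖_{L²_t L^q_x(ℝ×ℝ³)} ≤ C(q) (‖u₀‖_{Ḣ^s(ℝ³)} + ‖u₁‖_{Ḣ^{s−1}(ℝ³)}). -/
open MeasureTheory Real Set Filter Topology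
open scoped FourierTransform ENNReal NNReal

noncomputable section

abbrev E3 := EuclideanSpace ℝ (Fin 3)

/-- A function on `ℝ³` is radially symmetric. -/
def IsRadial (f : E3 → ℝ) : Prop := ∀ x y : E3, ‖x‖ = ‖y‖ → f x = f y

/-- The homogeneous Sobolev norm `‖f‖_{Ḣ^s(ℝ³)} = ‖ |ξ|^s f̂(ξ) ‖_{L²}`. -/
def sobNorm (s : ℝ) (f : E3 → ℝ) : ℝ≥0∞ :=
  (∫⁻ ξ : E3, ENNReal.ofReal (‖ξ‖ ^ (2 * s)) *
      (‖𝓕 (fun x => (f x : ℂ)) ξ‖₊ : ℝ≥0∞) ^ (2 : ℝ)) ^ (1 / 2 : ℝ)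

/-- Membership in the homogeneous Sobolev space `Ḣ^s(ℝ³)`. -/
def MemSob (s : ℝ) (f : E3 → ℝ) : Prop := sobNorm s f < ⊤

/-- The critical Sobolev exponent `s_c = 3/2 - 2/(p-1)`. -/
def sCrit (p : ℝ) : ℝ := 3 / 2 - 2 / (p - 1)

/-- Time derivative `∂_t u`. -/
def timeDeriv {α : Type*} (u : ℝ → α → ℝ) : ℝ → α → ℝ := fun t x => deriv (fun s => u s x) t

/-- Second time derivative `∂_tt u`. -/
def timeDeriv2 {α : Type*} (u : ℝ → α → ℝ) : ℝ → α → ℝ := timeDeriv (timeDeriv u)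

/-- The Laplacian on `ℝ³`, as the sum of second partial derivatives. -/
def lap (f : E3 → ℝ) (x : E3) : ℝ :=
  ∑ i : Fin 3, iteratedFDeriv ℝ 2 f x ![EuclideanSpace.single i (1 : ℝ), EuclideanSpace.single i (1 : ℝ)]

/-- `u` solves the defocusing nonlinear wave equation `u_tt - Δu + |u|^{p-1}u = 0`
for times `t ∈ I`. -/
def IsNLWSol (p : ℝ) (I : Set ℝ) (u : ℝ → E3 → ℝ) : Prop :=
  ∀ t ∈ I, ∀ x : E3, timeDeriv2 u t x - lap (u t) x + |u t x| ^ (p - 1) * u t x = 0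

/-- The Fourier multiplier symbol of the free wave propagator
`S(t)(f,g) = cos(t√(-Δ)) f + (sin(t√(-Δ))/√(-Δ)) g`. -/
def waveSymbol (t : ℝ) (f g : E3 → ℝ) (ξ : E3) : ℂ :=
  (Real.cos (2 * π * t * ‖ξ‖) : ℂ) * 𝓕 (fun x => (f x : ℂ)) ξ +
    (if ‖ξ‖ = 0 then (t : ℂ) else ((Real.sin (2 * π * t * ‖ξ‖) / (2 * π * ‖ξ‖) : ℝ) : ℂ)) *
      𝓕 (fun x => (g x : ℂ)) ξ

/-- The free wave propagator `S(t)(f,g)`. -/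
def waveProp (t : ℝ) (f g : E3 → ℝ) : E3 → ℝ := fun x => (𝓕⁻ (waveSymbol t f g) x).re

/-- The time derivative `∂_t S(t)(f,g)` of the free wave propagator. -/
def wavePropDt (t : ℝ) (f g : E3 → ℝ) : E3 → ℝ := fun x => deriv (fun t' => waveProp t' f g x) t

/-- `u` scatters (along the filter `l`, i.e. forward `atTop` or backward `atBot` in time) to a
free wave with data in `Ḣ^{s_c} × Ḣ^{s_c - 1}`. -/
def ScattersAt (p : ℝ) (u : ℝ → E3 → ℝ) (l : Filter ℝ) : Prop :=
  ∃ f g : E3 → ℝ, MemSob (sCrit p) f ∧ MemSob (sCrit p - 1) g ∧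
    Filter.Tendsto
      (fun t => sobNorm (sCrit p) (fun x => u t x - waveProp t f g x) +
        sobNorm (sCrit p - 1) (fun x => timeDeriv u t x - wavePropDt t f g x)) l (nhds 0)

/-- The space-time Lebesgue norm `‖u‖_{L^q_{t,x}(I × ℝ³)}`. -/
def stNorm (q : ℝ) (I : Set ℝ) (u : ℝ → E3 → ℝ) : ℝ≥0∞ :=
  eLpNorm (fun z : ℝ × E3 => u z.1 z.2) (ENNReal.ofReal q) ((volume.restrict I).prod volume)

/-- The mixed space-time norm `‖u‖_{L^{pt}_t L^{qx}_x(I × ℝ³)}`. -/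
def mixNorm (pt qx : ℝ≥0∞) (I : Set ℝ) (u : ℝ → E3 → ℝ) : ℝ≥0∞ :=
  if pt = ⊤ then essSup (fun t => eLpNorm (u t) qx volume) (volume.restrict I)
  else (∫⁻ t in I, eLpNorm (u t) qx volume ^ pt.toReal) ^ (1 / pt.toReal)

/-- The dual (conjugate) exponent of `a ∈ [1,∞]`. -/
def dualExp (a : ℝ≥0∞) : ℝ≥0∞ := 1 + (a - 1)⁻¹

/-- The energy of `u` at time `t`. -/
def energy (p : ℝ) (u : ℝ → E3 → ℝ) (t : ℝ) : ℝ :=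
  (1 / 2) * (∫ x : E3, (timeDeriv u t x) ^ 2) +
    (1 / 2) * (∫ x : E3, ‖fderiv ℝ (u t) x‖ ^ 2) +
    (1 / (p + 1)) * ∫ x : E3, |u t x| ^ (p + 1)

/-- The Littlewood–Paley projection onto frequencies `|ξ| ≤ N`, given by convolution with
`N³ ψ(N ·)`. -/
def lpLe (ψ : E3 → ℝ) (N : ℝ) (f : E3 → ℝ) : E3 → ℝ :=
  fun x => ∫ y : E3, N ^ 3 * ψ (N • (x - y)) * f y

/-- `ψ` is an admissible Littlewood–Paley kernel: radial, total integral one, and its Fourier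
transform is a bump equal to `1` near the origin. -/
def IsLPKernel (ψ : E3 → ℝ) : Prop :=
  IsRadial ψ ∧ (∫ x : E3, ψ x) = 1 ∧
    (∀ ξ : E3, ‖ξ‖ ≤ 1 → 𝓕 (fun x => (ψ x : ℂ)) ξ = 1) ∧
    (∀ ξ : E3, 2 ≤ ‖ξ‖ → 𝓕 (fun x => (ψ x : ℂ)) ξ = 0)


/-- The hyperbolic-coordinates unknown `ũ(τ,s) = (e^τ sinh s / s) u(e^τ cosh s, e^τ sinh s)`,
for a radial function `u = u(t,r)`. -/
def hypU (U : ℝ → ℝ → ℝ) : ℝ → ℝ → ℝ := fun τ s =>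
  (Real.exp τ * Real.sinh s / s) * U (Real.exp τ * Real.cosh s) (Real.exp τ * Real.sinh s)

/-- The hyperbolic energy of `ũ` at hyperbolic time `τ`. -/
def hypEnergy (p : ℝ) (v : ℝ → ℝ → ℝ) (τ : ℝ) : ℝ :=
  (1 / 2) * (∫ s in Set.Ioi (0 : ℝ), (deriv (v τ) s) ^ 2 * s ^ 2) +
    (1 / 2) * (∫ s in Set.Ioi (0 : ℝ), (timeDeriv v τ s) ^ 2 * s ^ 2) +
    (1 / (p + 1)) * ∫ s in Set.Ioi (0 : ℝ),
      Real.exp (-(p - 3) * τ) * (s / Real.sinh s) ^ (p - 1) * |v τ s| ^ (p + 1) * s ^ 2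

/-!
For radial data, `r * u(t, r)` solves the one-dimensional wave equation, so
`u(t, r) = (A (t + r) - A (t - r)) / r` for some `A : ℝ → ℂ`. In polar coordinates the
`L²_t L^q_x` norm of `u` becomes the `L²_t L^q(dr / r)` norm of
`r ^ (-s) * |A (t + r) - A (t - r)|`, and by Plancherel the Sobolev norms of the data bound the
Gagliardo energy of `A` in `Ḣ^s(ℝ)`.

It remains to control increments of `A` by its Gagliardo energy. Chain the averages of `A` over
`(t + r, t + r + 2 ^ (-k) * r]` down to `A (t + r)`, and likewise at `t - r`. Each link is bounded
by the mean-square oscillation of `A` over a shell of relative width `2 ^ (-k)`. As shells are short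
in `dr / r`, the `k`-th link gains `2 ^ (-k / q)` in `L^q(dr / r)`; the sum over `k` converges for
`s > 1 / 2 - 1 / q`, and with `s = 1 - 3 / q` this is exactly `q > 4`.

To make sense of `A` for general data, the frequencies are first truncated to a ball; the
truncation is removed by Fatou's lemma.
-/

section Fourier

variable {V : Type*} [NormedAddCommGroup V] [InnerProductSpace ℝ V] [MeasurableSpace V]
  [BorelSpace V] [FiniteDimensional ℝ V]

section Integrable

variable {F : Type*} [NormedAddCommGroup F] [NormedSpace ℂ F]

lemma continuous_fourier (f : V → F) : Continuous (𝓕 f) := by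
  by_cases hf : Integrable f
  · rw [← Real.fourierTransform_toLp (memLp_one_iff_integrable.2 hf)]
    exact map_continuous _
  · have : 𝓕 f = 0 := funext fun ξ =>
      integral_undef <| mt (Real.fourierIntegral_convergent_iff ξ).1 hf
    exact this ▸ continuous_zero

lemma continuous_fourierInv (f : V → F) : Continuous (𝓕⁻ f) := by
  rw [funext (Real.fourierInv_eq_fourier_neg f)]
  exact (continuous_fourier f).comp continuous_neg

lemma fourierInv_eq_zero_of_not_integrable {f : V → F} (hf : ¬Integrable f) : 𝓕⁻ f = 0 := by
  funext x
  rw [Real.fourierInv_eq_fourier_neg]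
  exact integral_undef <| mt (Real.fourierIntegral_convergent_iff (-x)).1 hf

lemma integrable_fourierChar_smul {f : V → F} (hf : Integrable f) (x : V) :
    Integrable fun v => 𝐞 (inner ℝ v x) • f v := by
  simpa using (Real.fourierIntegral_convergent_iff (-x)).2 hf

lemma tendsto_fourierInv_indicator_ball {f : V → F} (hf : Integrable f) (x : V) :
    Tendsto (fun n : ℕ => 𝓕⁻ ((Metric.ball (0 : V) n).indicator f) x) atTop (𝓝 (𝓕⁻ f x)) := by
  have hcover := aecover_ball (μ := (volume : Measure V)) (x := 0) tendsto_natCast_atTop_atTop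
  have hlim := hcover.integral_tendsto_of_countably_generated (integrable_fourierChar_smul hf x)
  simp only [← integral_indicator Metric.isOpen_ball.measurableSet, indicator_smul] at hlim
  simpa only [Real.fourierInv_eq] using hlim

end Integrable

section Plancherel

variable {F : Type*} [NormedAddCommGroup F] [InnerProductSpace ℂ F] [CompleteSpace F]

lemma integral_smul_fourierInv_eq_flip {g : V → ℂ} {f : V → F} (hg : Integrable g)
    (hf : Integrable f) : ∫ x, 𝓕⁻ g x • f x = ∫ x, g x • 𝓕⁻ f x := by
  have hflip := VectorFourier.integral_fourierIntegral_smul_eq_flip (L := -innerₗ V)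
    Real.continuous_fourierChar (by simpa using by fun_prop) hg hf
  simpa [VectorFourier.fourierIntegral, Real.fourierInv_eq, real_inner_comm] using hflip

open scoped SchwartzMap in
lemma coeFn_fourierInv_toLp {f : V → F} (hf : Integrable f) (hf₂ : MemLp f 2) :
    (𝓕⁻ (hf₂.toLp f) : Lp F 2 (volume : Measure V)) =ᵐ[volume] 𝓕⁻ f := by
  refine ae_eq_of_integral_contDiff_smul_eq ((Lp.memLp _).locallyIntegrable one_le_two)
    (continuous_fourierInv f).locallyIntegrable fun g hg hgc => ?_
  have hgC : HasCompactSupport fun x => (g x : ℂ) := hgc.comp_left Complex.ofReal_zero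
  let G : 𝓢(V, ℂ) := hgC.toSchwartzMap (Complex.ofRealCLM.contDiff.comp hg)
  have htempered := congrArg (fun T => T G) (Lp.fourierInv_toTemperedDistribution_eq (hf₂.toLp f))
  simp only [TemperedDistribution.fourierInv_apply, Lp.toTemperedDistribution_apply] at htempered
  calc ∫ x, g x • (𝓕⁻ (hf₂.toLp f) : Lp F 2 (volume : Measure V)) x
      = ∫ x, 𝓕⁻ G x • hf₂.toLp f x := htempered.symm
    _ = ∫ x, 𝓕⁻ (G : V → ℂ) x • f x := by
      rw [← SchwartzMap.fourierInv_coe]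
      exact integral_congr_ae (hf₂.coeFn_toLp.mono fun x hx => by simp only [hx])
    _ = ∫ x, g x • 𝓕⁻ f x := integral_smul_fourierInv_eq_flip G.integrable hf

theorem lintegral_enorm_sq_fourierInv {f : V → F} (hf : Integrable f) (hf₂ : MemLp f 2) :
    ∫⁻ x, ‖𝓕⁻ f x‖ₑ ^ 2 = ∫⁻ x, ‖f x‖ₑ ^ 2 := by
  have hnorm : eLpNorm (𝓕⁻ f) 2 volume = eLpNorm f 2 volume := by
    rw [← eLpNorm_congr_ae (coeFn_fourierInv_toLp hf hf₂), ← eLpNorm_congr_ae hf₂.coeFn_toLp,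
      ← Lp.enorm_def, ← Lp.enorm_def]
    exact (Lp.fourierTransformₗᵢ V F).symm.enorm_map (hf₂.toLp f)
  have hsq (g : V → F) : eLpNorm g 2 volume ^ 2 = ∫⁻ x, ‖g x‖ₑ ^ 2 := by
    simpa using eLpNorm_nnreal_pow_eq_lintegral (f := g) (p := 2) (μ := volume) two_ne_zero
  rw [← hsq, hnorm, hsq]

end Plancherel

end Fourier

section Gagliardo

/-- The square of the Gagliardo seminorm of the homogeneous Sobolev space `Ḣ^s(ℝ)`, written in
terms of increments. -/
def gagliardoEnergy {E : Type*} [NormedAddCommGroup E] (s : ℝ) (A : ℝ → E) : ℝ≥0∞ :=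
  ∫⁻ h, ENNReal.ofReal (|h| ^ (-1 - 2 * s)) * ∫⁻ t, ‖A (t + h) - A t‖ₑ ^ 2

/-- The constant relating the Gagliardo energy to the Fourier side, see
`gagliardoEnergy_fourierInv`. -/
def gagliardoConst (s : ℝ) : ℝ≥0∞ :=
  ∫⁻ h, ENNReal.ofReal (|h| ^ (-1 - 2 * s)) * ‖(𝐞 h : ℂ) - 1‖ₑ ^ 2

lemma lintegral_comp_mul_left {c : ℝ} (hc : c ≠ 0) (f : ℝ → ℝ≥0∞) :
    ∫⁻ x, f (c * x) = ENNReal.ofReal |c⁻¹| * ∫⁻ x, f x := by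
  rw [← (measurableEmbedding_mulLeft₀ hc).lintegral_map, Real.map_volume_mul_left hc,
    lintegral_smul_measure, smul_eq_mul]

lemma gagliardoEnergy_comp_neg {E : Type*} [NormedAddCommGroup E] (s : ℝ) (A : ℝ → E) :
    gagliardoEnergy s (fun t => A (-t)) = gagliardoEnergy s A := by
  have hneg (f : ℝ → ℝ≥0∞) : ∫⁻ x, f (-x) = ∫⁻ x, f x := by
    simpa using lintegral_comp_mul_left (c := -1) (by simp) f
  unfold gagliardoEnergy
  rw [← hneg]
  refine lintegral_congr fun h => ?_
  rw [abs_neg, ← hneg]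
  simp only [neg_add, neg_neg]

lemma norm_fourierChar_sub_one_le (h : ℝ) : ‖(𝐞 h : ℂ) - 1‖ ≤ min 2 (2 * π * |h|) := by
  refine le_min ?_ ?_
  · calc ‖(𝐞 h : ℂ) - 1‖ ≤ ‖(𝐞 h : ℂ)‖ + ‖(1 : ℂ)‖ := norm_sub_le _ _
      _ = 2 := by rw [Circle.norm_coe, norm_one, one_add_one_eq_two]
  · have hle := Real.norm_exp_I_mul_ofReal_sub_one_le (x := 2 * π * h)
    rwa [mul_comm, norm_mul, norm_mul, Real.norm_ofNat, Real.norm_of_nonneg pi_pos.le,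
      Real.norm_eq_abs, ← Real.fourierChar_apply] at hle

lemma integrableOn_Ioi_rpow_mul_min_sq {s c : ℝ} (hs₀ : 0 < s) (hs₁ : s < 1) (hc : 0 ≤ c) :
    IntegrableOn (fun y : ℝ => y ^ (-1 - 2 * s) * min 2 (c * y) ^ 2) (Ioi 0) := by
  have hmeas (S : Set ℝ) : AEStronglyMeasurable
      (fun y : ℝ => y ^ (-1 - 2 * s) * min 2 (c * y) ^ 2) (volume.restrict S) :=
    Measurable.aestronglyMeasurable (by fun_prop)
  rw [← Ioc_union_Ioi_eq_Ioi zero_le_one]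
  refine IntegrableOn.union ?_ ?_
  · have hnear : IntegrableOn (fun y : ℝ => c ^ 2 * y ^ (1 - 2 * s)) (Ioc 0 1) := by
      rw [integrableOn_Ioc_iff_integrableOn_Ioo]
      exact ((intervalIntegral.integrableOn_Ioo_rpow_iff one_pos).2 (by linarith)).const_mul _
    refine hnear.mono' (hmeas _) ((ae_restrict_mem measurableSet_Ioc).mono fun y hy => ?_)
    have hy₀ : 0 < y := hy.1
    rw [Real.norm_of_nonneg (by positivity)]
    calc y ^ (-1 - 2 * s) * min 2 (c * y) ^ 2 ≤ y ^ (-1 - 2 * s) * (c * y) ^ 2 := by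
          gcongr; exact min_le_right _ _
      _ = c ^ 2 * y ^ (1 - 2 * s) := by
          rw [show 1 - 2 * s = (-1 - 2 * s) + (2 : ℕ) by push_cast; ring,
            Real.rpow_add_natCast hy₀.ne']
          ring
  · have hfar : IntegrableOn (fun y : ℝ => y ^ (-1 - 2 * s) * 2 ^ 2) (Ioi 1) :=
      (integrableOn_Ioi_rpow_of_lt (by linarith) one_pos).mul_const _
    refine hfar.mono' (hmeas _) ((ae_restrict_mem measurableSet_Ioi).mono fun y hy => ?_)
    have hy₀ : 0 < y := one_pos.trans hy
    rw [Real.norm_of_nonneg (by positivity)]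
    gcongr
    exact min_le_left _ _

lemma gagliardoConst_lt_top {s : ℝ} (hs₀ : 0 < s) (hs₁ : s < 1) : gagliardoConst s < ⊤ := by
  have h_int : Integrable fun h : ℝ => ‖h‖ ^ (-1 - 2 * s) * min 2 (2 * π * ‖h‖) ^ 2 := by
    rw [integrable_fun_norm_addHaar volume
      (f := fun y : ℝ => y ^ (-1 - 2 * s) * min 2 (2 * π * y) ^ 2)]
    simpa using integrableOn_Ioi_rpow_mul_min_sq hs₀ hs₁ two_pi_pos.le
  refine lt_of_le_of_lt (lintegral_mono fun h => ?_) h_int.lintegral_lt_top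
  rw [← ofReal_norm, ← ENNReal.ofReal_pow (norm_nonneg _), ← ENNReal.ofReal_mul (by positivity),
    Real.norm_eq_abs h]
  gcongr
  exact norm_fourierChar_sub_one_le h

lemma lintegral_rpow_mul_fourierChar_sub_one (s : ℝ) {ρ : ℝ} (hρ : ρ ≠ 0) :
    ∫⁻ h, ENNReal.ofReal (|h| ^ (-1 - 2 * s)) * ‖(𝐞 (ρ * h) : ℂ) - 1‖ₑ ^ 2 =
      ENNReal.ofReal (|ρ| ^ (2 * s)) * gagliardoConst s := by
  have hρ' : 0 < |ρ| := abs_pos.2 hρ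
  have hscale (h : ℝ) : ENNReal.ofReal (|h| ^ (-1 - 2 * s)) =
      ENNReal.ofReal (|ρ| ^ (1 + 2 * s)) * ENNReal.ofReal (|ρ * h| ^ (-1 - 2 * s)) := by
    rw [← ENNReal.ofReal_mul (by positivity), abs_mul, Real.mul_rpow hρ'.le (abs_nonneg h),
      ← mul_assoc, ← Real.rpow_add hρ', show 1 + 2 * s + (-1 - 2 * s) = 0 by ring, Real.rpow_zero,
      one_mul]
  calc ∫⁻ h, ENNReal.ofReal (|h| ^ (-1 - 2 * s)) * ‖(𝐞 (ρ * h) : ℂ) - 1‖ₑ ^ 2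
      = ENNReal.ofReal (|ρ| ^ (1 + 2 * s)) * ∫⁻ h, ENNReal.ofReal (|ρ * h| ^ (-1 - 2 * s)) *
          ‖(𝐞 (ρ * h) : ℂ) - 1‖ₑ ^ 2 := by
        rw [← lintegral_const_mul' _ _ ENNReal.ofReal_ne_top]
        exact lintegral_congr fun h => by rw [hscale h, mul_assoc]
    _ = ENNReal.ofReal (|ρ| ^ (1 + 2 * s)) * (ENNReal.ofReal |ρ⁻¹| * gagliardoConst s) := by
        rw [lintegral_comp_mul_left hρ
          fun h => ENNReal.ofReal (|h| ^ (-1 - 2 * s)) * ‖(𝐞 h : ℂ) - 1‖ₑ ^ 2, gagliardoConst]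
    _ = ENNReal.ofReal (|ρ| ^ (2 * s)) * gagliardoConst s := by
        rw [← mul_assoc, ← ENNReal.ofReal_mul (by positivity), abs_inv, ← Real.rpow_neg_one,
          ← Real.rpow_add hρ', show 1 + 2 * s + -1 = 2 * s by ring]

variable {F : Type*} [NormedAddCommGroup F]

lemma fourierInv_add_sub_fourierInv [NormedSpace ℂ F] {k : ℝ → F} (hk : Integrable k) (t h : ℝ) :
    𝓕⁻ k (t + h) - 𝓕⁻ k t = 𝓕⁻ (fun ρ => ((𝐞 (ρ * h) : ℂ) - 1) • k ρ) t := by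
  simp only [Real.fourierInv_eq]
  rw [← integral_sub (integrable_fourierChar_smul hk _) (integrable_fourierChar_smul hk _)]
  refine integral_congr_ae (.of_forall fun ρ => ?_)
  simp only [RCLike.inner_apply, conj_trivial, Circle.smul_def, smul_smul, ← sub_smul]
  rw [add_mul, mul_comm h, AddChar.map_add_eq_mul, Circle.coe_mul, mul_sub, mul_one]

lemma lintegral_enorm_sq_fourierInv_add_sub [InnerProductSpace ℂ F] [CompleteSpace F] {k : ℝ → F}
    (hk : Integrable k) (hk₂ : MemLp k 2) (h : ℝ) :
    ∫⁻ t, ‖𝓕⁻ k (t + h) - 𝓕⁻ k t‖ₑ ^ 2 = ∫⁻ ρ, ‖(𝐞 (ρ * h) : ℂ) - 1‖ₑ ^ 2 * ‖k ρ‖ₑ ^ 2 := by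
  have hcont : Continuous fun ρ : ℝ => (𝐞 (ρ * h) : ℂ) - 1 := by fun_prop
  have hbound (ρ : ℝ) : ‖(𝐞 (ρ * h) : ℂ) - 1‖ ≤ 2 :=
    (norm_fourierChar_sub_one_le _).trans (min_le_left _ _)
  have hsmul : MemLp (fun ρ => ((𝐞 (ρ * h) : ℂ) - 1) • k ρ) 2 :=
    hk₂.smul (memLp_top_of_bound hcont.aestronglyMeasurable 2 (.of_forall hbound))
  simp only [fourierInv_add_sub_fourierInv hk]
  calc ∫⁻ t, ‖𝓕⁻ (fun ρ => ((𝐞 (ρ * h) : ℂ) - 1) • k ρ) t‖ₑ ^ 2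
      = ∫⁻ ρ, ‖((𝐞 (ρ * h) : ℂ) - 1) • k ρ‖ₑ ^ 2 := lintegral_enorm_sq_fourierInv
        (hk.bdd_smul 2 hcont.aestronglyMeasurable (.of_forall hbound)) hsmul
    _ = _ := by simp only [enorm_smul, mul_pow]

theorem gagliardoEnergy_fourierInv [InnerProductSpace ℂ F] [CompleteSpace F] (s : ℝ) {k : ℝ → F}
    (hk : Integrable k) (hk₂ : MemLp k 2) :
    gagliardoEnergy s (𝓕⁻ k) =
      gagliardoConst s * ∫⁻ ρ, ENNReal.ofReal (|ρ| ^ (2 * s)) * ‖k ρ‖ₑ ^ 2 := by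
  have hkm : AEMeasurable (fun ρ => ‖k ρ‖ₑ ^ 2) := hk.aestronglyMeasurable.enorm.pow_const 2
  have hchar : Measurable fun z : ℝ × ℝ => ‖(𝐞 (z.2 * z.1) : ℂ) - 1‖ₑ ^ 2 := by
    have : Continuous fun z : ℝ × ℝ => (𝐞 (z.2 * z.1) : ℂ) - 1 := by fun_prop
    fun_prop
  calc gagliardoEnergy s (𝓕⁻ k)
      = ∫⁻ h, ∫⁻ ρ, ENNReal.ofReal (|h| ^ (-1 - 2 * s)) *
          (‖(𝐞 (ρ * h) : ℂ) - 1‖ₑ ^ 2 * ‖k ρ‖ₑ ^ 2) := by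
        simp only [gagliardoEnergy, lintegral_enorm_sq_fourierInv_add_sub hk hk₂,
          lintegral_const_mul' _ _ ENNReal.ofReal_ne_top]
    _ = ∫⁻ ρ, ∫⁻ h, ENNReal.ofReal (|h| ^ (-1 - 2 * s)) *
          (‖(𝐞 (ρ * h) : ℂ) - 1‖ₑ ^ 2 * ‖k ρ‖ₑ ^ 2) := by
        refine lintegral_lintegral_swap ?_
        exact (by fun_prop : Measurable fun z : ℝ × ℝ =>
          ENNReal.ofReal (|z.1| ^ (-1 - 2 * s))).aemeasurable.mul
            (hchar.aemeasurable.mul (hkm.comp_quasiMeasurePreserving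
              Measure.quasiMeasurePreserving_snd))
    _ = ∫⁻ ρ, gagliardoConst s * (ENNReal.ofReal (|ρ| ^ (2 * s)) * ‖k ρ‖ₑ ^ 2) := by
        refine lintegral_congr_ae ((Measure.ae_ne volume 0).mono fun ρ hρ => ?_)
        simp only [← mul_assoc]
        rw [lintegral_mul_const' _ _ (by simp), lintegral_rpow_mul_fourierChar_sub_one s hρ,
          mul_comm (gagliardoConst s)]
    _ = _ := lintegral_const_mul'' _ (by fun_prop)

end Gagliardo

section Averages

variable {E : Type*} [NormedAddCommGroup E] [NormedSpace ℝ E]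

lemma enorm_integral_sub_integral_sq_le {α β : Type*} [MeasurableSpace α] [MeasurableSpace β]
    {μ : Measure α} {ν : Measure β} [IsProbabilityMeasure μ] [IsProbabilityMeasure ν]
    {f : α → E} {g : β → E} (hf : Integrable f μ) (hg : Integrable g ν) :
    ‖∫ a, f a ∂μ - ∫ b, g b ∂ν‖ₑ ^ 2 ≤ ∫⁻ a, ∫⁻ b, ‖f a - g b‖ₑ ^ 2 ∂ν ∂μ := by
  have hfst : Integrable (fun z : α × β => f z.1) (μ.prod ν) := hf.comp_fst ν
  have hsnd : Integrable (fun z : α × β => g z.2) (μ.prod ν) := hg.comp_snd μ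
  have hmeas := (hfst.sub hsnd).aestronglyMeasurable
  have hdiff : ∫ a, f a ∂μ - ∫ b, g b ∂ν = ∫ z, (f z.1 - g z.2) ∂μ.prod ν := by
    rw [integral_sub hfst hsnd, integral_fun_fst, integral_fun_snd]
    simp
  have hjensen := eLpNorm_le_eLpNorm_of_exponent_le (one_le_two (α := ℝ≥0∞)) hmeas
  rw [eLpNorm_one_eq_lintegral_enorm] at hjensen
  calc ‖∫ a, f a ∂μ - ∫ b, g b ∂ν‖ₑ ^ 2
      ≤ eLpNorm (fun z : α × β => f z.1 - g z.2) 2 (μ.prod ν) ^ 2 := by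
        rw [hdiff]
        gcongr
        exact (enorm_integral_le_lintegral_enorm _).trans hjensen
    _ = ∫⁻ z, ‖f z.1 - g z.2‖ₑ ^ 2 ∂μ.prod ν := by
        simpa using eLpNorm_nnreal_pow_eq_lintegral (p := 2) (μ := μ.prod ν)
          (f := fun z : α × β => f z.1 - g z.2) two_ne_zero
    _ = _ := lintegral_prod _ (hmeas.enorm.pow_const 2)

lemma enorm_average_sub_average_sq_le {α β : Type*} [MeasurableSpace α] [MeasurableSpace β]
    {μ : Measure α} {ν : Measure β} [IsFiniteMeasure μ] [NeZero μ] [IsFiniteMeasure ν] [NeZero ν]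
    {f : α → E} {g : β → E} (hf : Integrable f μ) (hg : Integrable g ν) :
    ‖⨍ a, f a ∂μ - ⨍ b, g b ∂ν‖ₑ ^ 2 ≤ ⨍⁻ a, ⨍⁻ b, ‖f a - g b‖ₑ ^ 2 ∂ν ∂μ :=
  enorm_integral_sub_integral_sq_le hf.to_average hg.to_average

lemma enorm_intervalAverage_sub_sq_le {A : ℝ → E} (hA : Continuous A) {a b c d δ R : ℝ}
    (hδ : 0 < δ) (hab : δ ≤ b - a) (hcd : δ ≤ d - c)
    (hR : ∀ x ∈ Ioc a b, Ioc c d ⊆ Icc (x - R) (x + R)) :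
    ‖(⨍ x in a..b, A x) - ⨍ y in c..d, A y‖ₑ ^ 2 ≤
      ENNReal.ofReal δ⁻¹ ^ 2 * ∫⁻ x in Ioc a b, ∫⁻ v in Icc (-R) R, ‖A (x + v) - A x‖ₑ ^ 2 := by
  have hlaverage {a b : ℝ} (hab : δ ≤ b - a) (f : ℝ → ℝ≥0∞) :
      ⨍⁻ x in Ioc a b, f x ∂volume ≤ ENNReal.ofReal δ⁻¹ * ∫⁻ x in Ioc a b, f x := by
    rw [setLAverage_eq, ENNReal.div_eq_inv_mul, Real.volume_Ioc, ENNReal.ofReal_inv_of_pos hδ]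
    gcongr
  have hinner (x : ℝ) (hx : x ∈ Ioc a b) : ∫⁻ y in Ioc c d, ‖A x - A y‖ₑ ^ 2 ≤
      ∫⁻ v in Icc (-R) R, ‖A (x + v) - A x‖ₑ ^ 2 := by
    refine (lintegral_mono_set (hR x hx)).trans_eq ?_
    rw [← (measurePreserving_add_left volume x).setLIntegral_comp_preimage_emb
      (measurableEmbedding_addLeft x), preimage_const_add_Icc]
    simp only [enorm_sub_rev (A x), sub_sub_cancel_left, add_sub_cancel_left]
  have hneZero {a b : ℝ} (hab : δ ≤ b - a) : NeZero (volume.restrict (Ioc a b)) :=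
    ⟨by simpa [Measure.restrict_eq_zero] using hδ.trans_le hab⟩
  have := hneZero hab
  have := hneZero hcd
  rw [uIoc_of_le (sub_nonneg.1 (hδ.le.trans hab)), uIoc_of_le (sub_nonneg.1 (hδ.le.trans hcd))]
  calc ‖(⨍ x in Ioc a b, A x) - ⨍ y in Ioc c d, A y‖ₑ ^ 2
      ≤ ⨍⁻ x in Ioc a b, ⨍⁻ y in Ioc c d, ‖A x - A y‖ₑ ^ 2 ∂volume ∂volume :=
        enorm_average_sub_average_sq_le hA.integrableOn_Ioc hA.integrableOn_Ioc
    _ ≤ ENNReal.ofReal δ⁻¹ * ∫⁻ x in Ioc a b, ENNReal.ofReal δ⁻¹ *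
          ∫⁻ v in Icc (-R) R, ‖A (x + v) - A x‖ₑ ^ 2 := by
        refine (hlaverage hab _).trans (mul_le_mul_right ?_ _)
        exact setLIntegral_mono' measurableSet_Ioc fun x hx =>
          (hlaverage hcd _).trans (mul_le_mul_right (hinner x hx) _)
    _ = _ := by rw [lintegral_const_mul' _ _ ENNReal.ofReal_ne_top, ← mul_assoc, sq]

lemma tendsto_intervalAverage [CompleteSpace E] {A : ℝ → E} (hA : Continuous A) (x : ℝ)
    {δ : ℕ → ℝ} (hδ : Tendsto δ atTop (𝓝[>] 0)) :
    Tendsto (fun n => ⨍ y in x..(x + δ n), A y) atTop (𝓝 (A x)) := by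
  have hslope := (hA.integral_hasStrictDerivAt x x).hasDerivAt.tendsto_slope_zero_right
  simp only [intervalIntegral.integral_same, sub_zero] at hslope
  simpa [interval_average_eq, Function.comp_def] using hslope.comp hδ

lemma intervalAverage_comp_neg (A : ℝ → E) (a b : ℝ) :
    ⨍ x in a..b, A (-x) = ⨍ x in (-b)..(-a), A x := by
  rw [interval_average_eq, interval_average_eq, intervalIntegral.integral_comp_neg, neg_sub_neg]

end Averages

section Chaining

variable {E : Type*} [NormedAddCommGroup E]

/-- Weighted mean-square oscillation of `A` around the point `t + h` at the scale `ε * h`. The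
factor `4` lets the window reach from `(t + r, t + 2 * r]` to its reflection `(t - 2 * r, t - r]`
when `ε = 1`. -/
def coneOsc (s ε : ℝ) (A : ℝ → E) (t h : ℝ) : ℝ≥0∞ :=
  ENNReal.ofReal (h ^ (-2 - 2 * s)) *
    ∫⁻ v in Icc (-(4 * ε * h)) (4 * ε * h), ‖A (t + h + v) - A (t + h)‖ₑ ^ 2

/-- Total oscillation of `A` at scale `ε * r` over the shell `t + (r, r + ε * r]`. -/
def shellOsc (s ε : ℝ) (A : ℝ → E) (t r : ℝ) : ℝ≥0∞ :=
  ∫⁻ h in Ioc r (r + ε * r), coneOsc s ε A t h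

/-- The increment of `A` between `t - r` and `t + r`, weighted by `r ^ (-s)` as in the Hölder
quotient of order `s`. -/
def scaledIncrement (s : ℝ) (A : ℝ → E) (t r : ℝ) : ℝ≥0∞ :=
  ENNReal.ofReal (r ^ (-s)) * ‖A (t + r) - A (t - r)‖ₑ

/-- The sum of the oscillations of `A` over the dyadic shells shrinking to `t + r`, weighted so
that it controls increments of `A`. -/
def chainSum (s : ℝ) (A : ℝ → E) (t r : ℝ) : ℝ≥0∞ :=
  ∑' k : ℕ, 2 ^ k * shellOsc s (1 / 2 ^ k) A t r ^ (1 / 2 : ℝ)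

lemma mul_lintegral_increment_le_coneOsc {s ε r h : ℝ} (hs : -1 ≤ s) (hε : 0 ≤ ε) (hr : 0 < r)
    (hrh : r ≤ h) (hhr : h ≤ 2 * r) (A : ℝ → E) (t : ℝ) :
    ENNReal.ofReal (r ^ (-2 - 2 * s)) *
        ∫⁻ v in Icc (-(4 * ε * r)) (4 * ε * r), ‖A (t + h + v) - A (t + h)‖ₑ ^ 2 ≤
      ENNReal.ofReal (2 ^ (2 + 2 * s)) * coneOsc s ε A t h := by
  have hweight : r ^ (-2 - 2 * s) ≤ 2 ^ (2 + 2 * s) * h ^ (-2 - 2 * s) := by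
    have hmono := Real.rpow_le_rpow_of_nonpos (z := -2 - 2 * s) (by linarith)
      (by linarith : h / 2 ≤ r) (by linarith)
    rwa [Real.div_rpow (by linarith) zero_le_two, div_eq_inv_mul, ← Real.rpow_neg zero_le_two,
      show -(-2 - 2 * s) = 2 + 2 * s by ring] at hmono
  rw [coneOsc, ← mul_assoc, ← ENNReal.ofReal_mul (by positivity)]
  gcongr

lemma rpow_neg_sq_mul_inv_sq (ε s : ℝ) {r : ℝ} (hr : 0 < r) :
    (r ^ (-s)) ^ 2 * ((ε * r / 2)⁻¹) ^ 2 = 4 / ε ^ 2 * r ^ (-2 - 2 * s) := by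
  rw [show -2 - 2 * s = -s * (2 : ℕ) - (2 : ℕ) by push_cast; ring, Real.rpow_sub_natCast hr.ne',
    Real.rpow_mul_natCast hr.le]
  field_simp
  norm_num

variable [NormedSpace ℝ E]

lemma enorm_intervalAverage_sub_le_shellOsc {A : ℝ → E} (hA : Continuous A) {s ε t r c d : ℝ}
    (hs : -1 ≤ s) (hε₀ : 0 < ε) (hε₁ : ε ≤ 1) (hr : 0 < r) (hc : t + r - 3 * ε * r ≤ c)
    (hd : d ≤ t + r + 4 * ε * r) (hcd : ε * r / 2 ≤ d - c) :
    ENNReal.ofReal (r ^ (-s)) *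
        ‖(⨍ x in (t + r)..(t + r + ε * r), A x) - ⨍ x in c..d, A x‖ₑ ≤
      ENNReal.ofReal (2 ^ (s + 2) / ε) * shellOsc s ε A t r ^ (1 / 2 : ℝ) := by
  have hεr : 0 < ε * r := mul_pos hε₀ hr
  have hjensen := enorm_intervalAverage_sub_sq_le hA (a := t + r) (b := t + r + ε * r) (c := c)
    (d := d) (δ := ε * r / 2) (R := 4 * ε * r) (by positivity) (by linarith) hcd
    fun x hx y hy => ⟨by linarith [hx.2, hy.1], by linarith [hx.1, hy.2]⟩
  rw [← (measurePreserving_add_left volume t).setLIntegral_comp_preimage_emb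
    (measurableEmbedding_addLeft t), preimage_const_add_Ioc, add_sub_cancel_left,
    show t + r + ε * r - t = r + ε * r by ring] at hjensen
  have hconst : 4 / ε ^ 2 * 2 ^ (2 + 2 * s) = (2 ^ (s + 2) / ε) ^ 2 := by
    rw [show 2 + 2 * s = (s + 2) * (2 : ℕ) - (2 : ℕ) by push_cast; ring,
      Real.rpow_sub_natCast two_ne_zero, Real.rpow_mul_natCast zero_le_two]
    field_simp
    norm_num
  have hroot : (shellOsc s ε A t r ^ (1 / 2 : ℝ)) ^ 2 = shellOsc s ε A t r := by
    simpa using ENNReal.rpow_inv_natCast_pow (n := 2) two_ne_zero (shellOsc s ε A t r)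
  rw [← ENNReal.pow_le_pow_left_iff two_ne_zero, mul_pow, mul_pow, hroot,
    ← ENNReal.ofReal_pow (by positivity), ← ENNReal.ofReal_pow (by positivity)]
  refine (mul_le_mul' le_rfl hjensen).trans ?_
  calc
    _ = ENNReal.ofReal (4 / ε ^ 2) * ∫⁻ h in Ioc r (r + ε * r), ENNReal.ofReal (r ^ (-2 - 2 * s)) *
          ∫⁻ v in Icc (-(4 * ε * r)) (4 * ε * r), ‖A (t + h + v) - A (t + h)‖ₑ ^ 2 := by
      rw [lintegral_const_mul' _ _ ENNReal.ofReal_ne_top, ← mul_assoc, ← mul_assoc,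
        ← ENNReal.ofReal_pow (by positivity), ← ENNReal.ofReal_mul (by positivity),
        ← ENNReal.ofReal_mul (by positivity), rpow_neg_sq_mul_inv_sq ε s hr]
    _ ≤ ENNReal.ofReal (4 / ε ^ 2) * ∫⁻ h in Ioc r (r + ε * r),
          ENNReal.ofReal (2 ^ (2 + 2 * s)) * coneOsc s ε A t h := by
      gcongr ENNReal.ofReal _ * ?_
      refine setLIntegral_mono' measurableSet_Ioc fun h hh => ?_
      exact mul_lintegral_increment_le_coneOsc hs hε₀.le hr hh.1.le (by nlinarith [hh.2]) A t
    _ = ENNReal.ofReal ((2 ^ (s + 2) / ε) ^ 2) * shellOsc s ε A t r := by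
      rw [lintegral_const_mul' _ _ ENNReal.ofReal_ne_top, ← mul_assoc,
        ← ENNReal.ofReal_mul (by positivity), hconst, shellOsc]

lemma enorm_dyadicAverage_sub_le_chainTerm {A : ℝ → E} (hA : Continuous A) {s t r c d : ℝ}
    (hs : -1 ≤ s) (hr : 0 < r) (k : ℕ) (hc : t + r - 3 * (1 / 2 ^ k) * r ≤ c)
    (hd : d ≤ t + r + 4 * (1 / 2 ^ k) * r) (hcd : 1 / 2 ^ k * r / 2 ≤ d - c) :
    ENNReal.ofReal (r ^ (-s)) *
        ‖(⨍ x in (t + r)..(t + r + 1 / 2 ^ k * r), A x) - ⨍ x in c..d, A x‖ₑ ≤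
      ENNReal.ofReal (2 ^ (s + 2)) * (2 ^ k * shellOsc s (1 / 2 ^ k) A t r ^ (1 / 2 : ℝ)) := by
  have hpow : (1 : ℝ) ≤ 2 ^ k := one_le_pow₀ one_le_two
  refine (enorm_intervalAverage_sub_le_shellOsc hA hs (by positivity)
    (div_le_one_of_le₀ hpow (by positivity)) hr hc hd hcd).trans_eq ?_
  rw [div_div_eq_mul_div, div_one, ENNReal.ofReal_mul (by positivity),
    ENNReal.ofReal_pow zero_le_two, ENNReal.ofReal_ofNat, mul_assoc]

lemma enorm_sub_intervalAverage_le_chainSum [CompleteSpace E] {A : ℝ → E} (hA : Continuous A)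
    {s r : ℝ} (hs : -1 ≤ s) (hr : 0 < r) (t : ℝ) :
    ENNReal.ofReal (r ^ (-s)) * ‖A (t + r) - ⨍ x in (t + r)..(t + 2 * r), A x‖ₑ ≤
      ENNReal.ofReal (2 ^ (s + 2)) * chainSum s A t r := by
  let avg (k : ℕ) : E := ⨍ x in (t + r)..(t + r + 1 / 2 ^ k * r), A x
  have hweight : ENNReal.ofReal (r ^ (-s)) = ‖r ^ (-s)‖ₑ :=
    (Real.enorm_of_nonneg (by positivity)).symm
  have hstep (k : ℕ) : edist (r ^ (-s) • avg k) (r ^ (-s) • avg (k + 1)) ≤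
      ENNReal.ofReal (2 ^ (s + 2)) * (2 ^ k * shellOsc s (1 / 2 ^ k) A t r ^ (1 / 2 : ℝ)) := by
    rw [edist_eq_enorm_sub, ← smul_sub, enorm_smul, ← hweight]
    have hhalf : (1 : ℝ) / 2 ^ (k + 1) * r = 1 / 2 ^ k * r / 2 := by rw [pow_succ]; ring
    have hpos : 0 < 1 / 2 ^ k * r := by positivity
    exact enorm_dyadicAverage_sub_le_chainTerm hA hs hr k (by linarith) (by linarith)
      (by linarith)
  have hlim : Tendsto (fun k => r ^ (-s) • avg k) atTop (𝓝 (r ^ (-s) • A (t + r))) := by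
    refine (tendsto_intervalAverage hA (t + r) ?_).const_smul _
    refine tendsto_nhdsWithin_iff.2 ⟨?_, .of_forall fun k => mem_Ioi.2 (by positivity)⟩
    simpa using (tendsto_pow_atTop_nhds_zero_of_lt_one (r := (1 / 2 : ℝ)) (by norm_num)
      (by norm_num)).mul_const r
  have hsum := edist_le_tsum_of_edist_le_of_tendsto₀ _ hstep hlim
  rwa [ENNReal.tsum_mul_left, edist_comm, edist_eq_enorm_sub, ← smul_sub, enorm_smul, ← hweight,
    show avg 0 = ⨍ x in (t + r)..(t + 2 * r), A x by
      simp only [avg, pow_zero, div_one, one_mul, add_assoc, ← two_mul]] at hsum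

lemma enorm_intervalAverage_sub_reflected_le_chainSum {A : ℝ → E} (hA : Continuous A)
    {s r : ℝ} (hs : -1 ≤ s) (hr : 0 < r) (t : ℝ) :
    ENNReal.ofReal (r ^ (-s)) *
        ‖(⨍ x in (t + r)..(t + 2 * r), A x) - ⨍ x in (t - 2 * r)..(t - r), A x‖ₑ ≤
      ENNReal.ofReal (2 ^ (s + 2)) * chainSum s A t r := by
  have hterm := enorm_dyadicAverage_sub_le_chainTerm hA (t := t) (c := t - 2 * r) (d := t - r)
    hs hr 0 (by linarith) (by linarith) (by linarith)
  rw [show t + r + 1 / 2 ^ 0 * r = t + 2 * r by ring] at hterm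
  exact hterm.trans (mul_le_mul' le_rfl (ENNReal.le_tsum 0))

lemma scaledIncrement_le_chainSum [CompleteSpace E] {A : ℝ → E} (hA : Continuous A) {s r : ℝ}
    (hs : -1 ≤ s) (hr : 0 < r) (t : ℝ) :
    scaledIncrement s A t r ≤ ENNReal.ofReal (2 ^ (s + 2)) * 2 *
      (chainSum s A t r + chainSum s (fun x => A (-x)) (-t) r) := by
  have hleft := enorm_sub_intervalAverage_le_chainSum (hA.comp continuous_neg) hs hr (-t)
  simp only [Function.comp_def, intervalAverage_comp_neg] at hleft
  rw [show -(-t + r) = t - r by ring, show -(-t + 2 * r) = t - 2 * r by ring, ← edist_eq_enorm_sub,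
    edist_comm] at hleft
  have hright := enorm_sub_intervalAverage_le_chainSum hA hs hr t
  have hmiddle := enorm_intervalAverage_sub_reflected_le_chainSum hA hs hr t
  rw [← edist_eq_enorm_sub] at hright hmiddle
  rw [scaledIncrement, ← edist_eq_enorm_sub]
  calc ENNReal.ofReal (r ^ (-s)) * edist (A (t + r)) (A (t - r))
      ≤ _ := mul_le_mul' le_rfl (edist_triangle4 _ (⨍ x in (t + r)..(t + 2 * r), A x)
        (⨍ x in (t - 2 * r)..(t - r), A x) _)
    _ ≤ ENNReal.ofReal (2 ^ (s + 2)) * chainSum s A t r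
        + ENNReal.ofReal (2 ^ (s + 2)) * chainSum s A t r
        + ENNReal.ofReal (2 ^ (s + 2)) * (2 * chainSum s (fun x => A (-x)) (-t) r) := by
      rw [mul_add, mul_add]
      exact add_le_add (add_le_add hright hmiddle)
        (hleft.trans (mul_le_mul' le_rfl (le_mul_of_one_le_left' one_le_two)))
    _ = _ := by ring

end Chaining

section MixedNorm

lemma eLpNorm'_tsum_le {α : Type*} [MeasurableSpace α] {μ : Measure α} {q : ℝ} (hq : 1 ≤ q)
    {f : ℕ → α → ℝ≥0∞} (hf : ∀ k, Measurable (f k)) :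
    eLpNorm' (fun x => ∑' k, f k x) q μ ≤ ∑' k, eLpNorm' (f k) q μ := by
  have hq₀ : 0 < q := one_pos.trans_le hq
  have hpartial (n : ℕ) : ∫⁻ x, (∑ k ∈ Finset.range n, f k x) ^ q ∂μ ≤
      (∑' k, eLpNorm' (f k) q μ) ^ q := by
    rw [← ENNReal.rpow_inv_le_iff hq₀]
    have hsum := (eLpNorm'_sum_le (s := Finset.range n) (μ := μ)
      (fun k _ => (hf k).aestronglyMeasurable) hq).trans (ENNReal.sum_le_tsum _)
    simpa only [eLpNorm', Finset.sum_apply, enorm_eq_self, one_div] using hsum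
  rw [eLpNorm', one_div, ENNReal.rpow_inv_le_iff hq₀]
  calc ∫⁻ x, ‖∑' k, f k x‖ₑ ^ q ∂μ
      = ∫⁻ x, ⨆ n, (∑ k ∈ Finset.range n, f k x) ^ q ∂μ := by
        refine lintegral_congr fun x => ?_
        rw [enorm_eq_self, ENNReal.tsum_eq_iSup_nat]
        exact (ENNReal.orderIsoRpow q hq₀).map_iSup _
    _ = ⨆ n, ∫⁻ x, (∑ k ∈ Finset.range n, f k x) ^ q ∂μ :=
        lintegral_iSup (fun n => by fun_prop) fun m n hmn x => by
          dsimp only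
          gcongr
    _ ≤ _ := iSup_le hpartial

/-- The scale-invariant measure `dr / r` on `(0, ∞)`. -/
def logMeasure : Measure ℝ := (volume.restrict (Ioi 0)).withDensity fun r => ENNReal.ofReal r⁻¹

instance : SFinite logMeasure := by
  rw [logMeasure]
  infer_instance

lemma ae_logMeasure_pos : ∀ᵐ r ∂logMeasure, 0 < r :=
  (withDensity_absolutelyContinuous _ _).ae_le (ae_restrict_mem measurableSet_Ioi)

lemma lintegral_logMeasure (f : ℝ → ℝ≥0∞) :
    ∫⁻ r, f r ∂logMeasure = ∫⁻ r in Ioi 0, ENNReal.ofReal r⁻¹ * f r := by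
  rw [logMeasure, lintegral_withDensity_eq_lintegral_mul_non_measurable _ (by fun_prop)
    (Eventually.of_forall fun _ => ENNReal.ofReal_lt_top)]
  rfl

/-- The mixed norm `L²_t L^q_r` of a function of `(t, r) ∈ ℝ × (0, ∞)`, taken with respect to the
scale-invariant measure `dr / r`. -/
def logMixedNorm (q : ℝ) (F : ℝ → ℝ → ℝ≥0∞) : ℝ≥0∞ :=
  eLpNorm' (fun t => eLpNorm' (F t) q logMeasure) 2 volume

lemma measurable_eLpNorm'_logMeasure (q : ℝ) {F : ℝ → ℝ → ℝ≥0∞}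
    (hF : Measurable (Function.uncurry F)) : Measurable fun t => eLpNorm' (F t) q logMeasure :=
  (Measurable.lintegral_prod_right' (hF.enorm.pow_const q)).pow_const _

lemma logMixedNorm_le_const_mul {q : ℝ} (hq : 0 < q) {c : ℝ≥0∞} {F G : ℝ → ℝ → ℝ≥0∞}
    (hG : Measurable (Function.uncurry G)) (hFG : ∀ t r, 0 < r → F t r ≤ c * G t r) :
    logMixedNorm q F ≤ c * logMixedNorm q G :=
  eLpNorm'_le_mul_eLpNorm'_of_ae_le_mul
    (measurable_eLpNorm'_logMeasure q hG).aestronglyMeasurable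
    (.of_forall fun t => eLpNorm'_le_mul_eLpNorm'_of_ae_le_mul
      hG.of_uncurry_left.aestronglyMeasurable
      (ae_logMeasure_pos.mono fun r hr => hFG t r hr) hq)
    two_pos

lemma logMixedNorm_add_le {q : ℝ} (hq : 1 ≤ q) {F G : ℝ → ℝ → ℝ≥0∞}
    (hF : Measurable (Function.uncurry F)) (hG : Measurable (Function.uncurry G)) :
    logMixedNorm q (fun t r => F t r + G t r) ≤ logMixedNorm q F + logMixedNorm q G :=
  (eLpNorm'_mono_enorm_ae zero_le_two (.of_forall fun _ => eLpNorm'_add_le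
    hF.of_uncurry_left.aestronglyMeasurable hG.of_uncurry_left.aestronglyMeasurable hq)).trans
    (eLpNorm'_add_le (measurable_eLpNorm'_logMeasure q hF).aestronglyMeasurable
      (measurable_eLpNorm'_logMeasure q hG).aestronglyMeasurable one_le_two)

lemma logMixedNorm_tsum_le {q : ℝ} (hq : 1 ≤ q) {F : ℕ → ℝ → ℝ → ℝ≥0∞}
    (hF : ∀ k, Measurable (Function.uncurry (F k))) :
    logMixedNorm q (fun t r => ∑' k, F k t r) ≤ ∑' k, logMixedNorm q (F k) :=
  (eLpNorm'_mono_enorm_ae zero_le_two (.of_forall fun _ =>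
    eLpNorm'_tsum_le hq fun k => (hF k).of_uncurry_left)).trans
    (eLpNorm'_tsum_le one_le_two fun k => measurable_eLpNorm'_logMeasure q (hF k))

lemma logMixedNorm_comp_neg (q : ℝ) (F : ℝ → ℝ → ℝ≥0∞) :
    logMixedNorm q (fun t => F (-t)) = logMixedNorm q F := by
  have hneg := lintegral_comp_mul_left (c := -1) (by simp)
    fun t => ‖eLpNorm' (F t) q logMeasure‖ₑ ^ (2 : ℝ)
  simp only [neg_one_mul, inv_neg, inv_one, abs_neg, abs_one, ENNReal.ofReal_one, one_mul] at hneg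
  rw [logMixedNorm, eLpNorm', hneg]
  rfl

lemma logMeasure_preimage_shell_le {ε h : ℝ} (hε : 0 ≤ ε) (hh : 0 < h) :
    logMeasure {r | h ∈ Ioc r (r + ε * r)} ≤ ENNReal.ofReal ε := by
  have hset : {r | h ∈ Ioc r (r + ε * r)} = Ico (h / (1 + ε)) h := by
    ext r
    rw [mem_ofPred_eq, mem_Ioc, mem_Ico, div_le_iff₀ (by positivity), and_comm,
      show r * (1 + ε) = r + ε * r by ring]
  have hpos : Ico (h / (1 + ε)) h ⊆ Ioi 0 := fun r hr =>
    (div_pos hh (by positivity)).trans_le hr.1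
  rw [hset, logMeasure, withDensity_apply _ measurableSet_Ico, Measure.restrict_restrict
    measurableSet_Ico, inter_eq_left.2 hpos]
  calc ∫⁻ r in Ico (h / (1 + ε)) h, ENNReal.ofReal r⁻¹
      ≤ ∫⁻ _ in Ico (h / (1 + ε)) h, ENNReal.ofReal (h / (1 + ε))⁻¹ :=
        setLIntegral_mono' measurableSet_Ico fun r hr => ENNReal.ofReal_le_ofReal
          (inv_anti₀ (div_pos hh (by positivity)) hr.1)
    _ = ENNReal.ofReal ε := by
        rw [setLIntegral_const, Real.volume_Ico, ← ENNReal.ofReal_mul (by positivity)]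
        congr 1
        field_simp
        ring

lemma measurableSet_shell (ε : ℝ) : MeasurableSet {z : ℝ × ℝ | z.2 ∈ Ioc z.1 (z.1 + ε * z.1)} :=
  (measurableSet_lt measurable_fst measurable_snd).inter
    (measurableSet_le measurable_snd (by fun_prop))

lemma measurable_setLIntegral_section {α β : Type*} [MeasurableSpace α] [MeasurableSpace β]
    {ν : Measure β} [SFinite ν] {S : Set (α × β)} (hS : MeasurableSet S) {f : α → β → ℝ≥0∞}
    (hf : Measurable (Function.uncurry f)) :
    Measurable fun a => ∫⁻ b in Prod.mk a ⁻¹' S, f a b ∂ν := by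
  refine (congrArg Measurable (funext fun a => ?_)).mp
    ((hf.indicator hS).lintegral_prod_right' (ν := ν))
  exact lintegral_indicator (measurable_prodMk_left hS) (f a)

lemma lintegral_setLIntegral_section_swap {α β : Type*} [MeasurableSpace α] [MeasurableSpace β]
    {μ : Measure α} {ν : Measure β} [SFinite μ] [SFinite ν] {S : Set (α × β)}
    (hS : MeasurableSet S) {f : α → β → ℝ≥0∞} (hf : Measurable (Function.uncurry f)) :
    ∫⁻ a, ∫⁻ b in Prod.mk a ⁻¹' S, f a b ∂ν ∂μ =
      ∫⁻ b, ∫⁻ a in (fun a => (a, b)) ⁻¹' S, f a b ∂μ ∂ν := by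
  simp only [← lintegral_indicator (measurable_prodMk_left hS),
    ← lintegral_indicator (measurable_prodMk_right hS)]
  exact lintegral_lintegral_swap (f := fun a b => S.indicator (Function.uncurry f) (a, b))
    (hf.indicator hS).aemeasurable

lemma lintegral_lintegral_shell_le {ε : ℝ} (hε : 0 ≤ ε) {g : ℝ → ℝ≥0∞} (hg : Measurable g) :
    ∫⁻ r, ∫⁻ h in Ioc r (r + ε * r), g h ∂volume ∂logMeasure ≤
      ENNReal.ofReal ε * ∫⁻ h in Ioi 0, g h := by
  have hrestrict (r : ℝ) (hr : 0 < r) : ∫⁻ h in Ioc r (r + ε * r), g h =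
      ∫⁻ h in Ioc r (r + ε * r), g h ∂volume.restrict (Ioi 0) := by
    rw [Measure.restrict_restrict measurableSet_Ioc,
      inter_eq_left.2 (Ioc_subset_Ioi_self.trans (Ioi_subset_Ioi hr.le))]
  calc ∫⁻ r, ∫⁻ h in Ioc r (r + ε * r), g h ∂volume ∂logMeasure
      = ∫⁻ h in Ioi 0, ∫⁻ _ in {r | h ∈ Ioc r (r + ε * r)}, g h ∂logMeasure :=
        (lintegral_congr_ae (ae_logMeasure_pos.mono hrestrict)).trans
          (lintegral_setLIntegral_section_swap (measurableSet_shell ε) (f := fun _ h => g h)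
            (hg.comp measurable_snd))
    _ ≤ ∫⁻ h in Ioi 0, ENNReal.ofReal ε * g h := by
        refine setLIntegral_mono' measurableSet_Ioi fun h hh => ?_
        rw [setLIntegral_const, mul_comm]
        gcongr
        exact logMeasure_preimage_shell_le hε hh
    _ = _ := lintegral_const_mul _ hg

lemma lintegral_rpow_shell_le {ε p : ℝ} (hε : 0 ≤ ε) (hp : 1 ≤ p) {g : ℝ → ℝ≥0∞}
    (hg : Measurable g) :
    ∫⁻ r, (∫⁻ h in Ioc r (r + ε * r), g h) ^ p ∂logMeasure ≤
      ENNReal.ofReal ε * (∫⁻ h in Ioi 0, g h) ^ p := by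
  set M : ℝ≥0∞ := ∫⁻ h in Ioi 0, g h
  have hsplit (x : ℝ≥0∞) : x ^ p = x ^ (p - 1) * x := by
    nth_rw 3 [← ENNReal.rpow_one x]
    rw [← ENNReal.rpow_add_of_nonneg _ _ (by linarith) zero_le_one, sub_add_cancel]
  have hmeas : Measurable fun r => ∫⁻ h in Ioc r (r + ε * r), g h :=
    measurable_setLIntegral_section (measurableSet_shell ε) (f := fun _ h => g h)
      (hg.comp measurable_snd)
  calc ∫⁻ r, (∫⁻ h in Ioc r (r + ε * r), g h) ^ p ∂logMeasure
      ≤ ∫⁻ r, M ^ (p - 1) * ∫⁻ h in Ioc r (r + ε * r), g h ∂volume ∂logMeasure := by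
        refine lintegral_mono_ae (ae_logMeasure_pos.mono fun r hr => ?_)
        rw [hsplit]
        gcongr ?_ ^ (p - 1) * _
        exact lintegral_mono_set (Ioc_subset_Ioi_self.trans (Ioi_subset_Ioi hr.le))
    _ ≤ M ^ (p - 1) * (ENNReal.ofReal ε * M) := by
        rw [lintegral_const_mul _ hmeas]
        gcongr
        exact lintegral_lintegral_shell_le hε hg
    _ = ENNReal.ofReal ε * M ^ p := by rw [hsplit, mul_left_comm]

end MixedNorm

section SquareFunction

variable {E : Type*} [NormedAddCommGroup E] {A : ℝ → E}

lemma measurable_scaledIncrement (hA : Continuous A) (s : ℝ) :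
    Measurable (Function.uncurry (scaledIncrement s A)) := by
  have hcont : Continuous fun z : ℝ × ℝ => ‖A (z.1 + z.2) - A (z.1 - z.2)‖ₑ := by fun_prop
  exact (by fun_prop : Measurable fun z : ℝ × ℝ => ENNReal.ofReal (z.2 ^ (-s))).mul hcont.measurable

lemma measurable_coneOsc (hA : Continuous A) (s ε : ℝ) :
    Measurable (Function.uncurry (coneOsc s ε A)) := by
  have hcone : MeasurableSet {z : (ℝ × ℝ) × ℝ | z.2 ∈ Icc (-(4 * ε * z.1.2)) (4 * ε * z.1.2)} :=
    (measurableSet_le (by fun_prop) measurable_snd).inter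
      (measurableSet_le measurable_snd (by fun_prop))
  have hcont : Continuous fun z : (ℝ × ℝ) × ℝ =>
      ‖A (z.1.1 + z.1.2 + z.2) - A (z.1.1 + z.1.2)‖ₑ ^ 2 := by fun_prop
  exact Measurable.mul (by fun_prop) (measurable_setLIntegral_section hcone hcont.measurable)

lemma measurable_shellOsc (hA : Continuous A) (s ε : ℝ) :
    Measurable (Function.uncurry (shellOsc s ε A)) := by
  have hshell : MeasurableSet {z : (ℝ × ℝ) × ℝ | z.2 ∈ Ioc z.1.2 (z.1.2 + ε * z.1.2)} :=
    (measurableSet_lt (by fun_prop) measurable_snd).inter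
      (measurableSet_le measurable_snd (by fun_prop))
  exact measurable_setLIntegral_section hshell ((measurable_coneOsc hA s ε).comp
    ((measurable_fst.comp measurable_fst).prodMk measurable_snd))

lemma lintegral_Ioi_rpow_cone_le {s ε : ℝ} (hs : 0 ≤ s) (hε : 0 < ε) {v : ℝ} (hv : v ≠ 0) :
    ∫⁻ h in {h | v ∈ Icc (-(4 * ε * h)) (4 * ε * h)} ∩ Ioi 0, ENNReal.ofReal (h ^ (-2 - 2 * s)) ≤
      ENNReal.ofReal ((4 * ε) ^ (1 + 2 * s)) * ENNReal.ofReal (|v| ^ (-1 - 2 * s)) := by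
  have hv' : 0 < |v| / (4 * ε) := by positivity
  have hset : {h | v ∈ Icc (-(4 * ε * h)) (4 * ε * h)} ∩ Ioi 0 ⊆ Ici (|v| / (4 * ε)) :=
    fun h hh => (div_le_iff₀' (by positivity)).2 (abs_le.2 hh.1)
  calc ∫⁻ h in {h | v ∈ Icc (-(4 * ε * h)) (4 * ε * h)} ∩ Ioi 0, ENNReal.ofReal (h ^ (-2 - 2 * s))
      ≤ ∫⁻ h in Ioi (|v| / (4 * ε)), ENNReal.ofReal (h ^ (-2 - 2 * s)) :=
        (lintegral_mono_set hset).trans_eq (setLIntegral_congr Ioi_ae_eq_Ici.symm)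
    _ = ENNReal.ofReal (∫ h in Ioi (|v| / (4 * ε)), h ^ (-2 - 2 * s)) :=
        (ofReal_integral_eq_lintegral_ofReal (integrableOn_Ioi_rpow_of_lt (by linarith) hv')
          ((ae_restrict_mem measurableSet_Ioi).mono fun h hh =>
            Real.rpow_nonneg (hv'.trans hh).le _)).symm
    _ ≤ ENNReal.ofReal ((4 * ε) ^ (1 + 2 * s) * |v| ^ (-1 - 2 * s)) := by
        refine ENNReal.ofReal_le_ofReal ?_
        rw [integral_Ioi_rpow_of_lt (by linarith) hv', show -2 - 2 * s + 1 = -(1 + 2 * s) by ring,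
          neg_div_neg_eq, Real.div_rpow (by positivity) (by positivity),
          Real.rpow_neg (by positivity : (0 : ℝ) ≤ 4 * ε), div_inv_eq_mul, mul_comm (|v| ^ _),
          show -(1 + 2 * s) = -1 - 2 * s by ring]
        exact div_le_self (by positivity) (by linarith)
    _ = _ := ENNReal.ofReal_mul (by positivity)

lemma lintegral_coneOsc_eq_time (hA : Continuous A) (s ε h : ℝ) :
    ∫⁻ t, coneOsc s ε A t h = ENNReal.ofReal (h ^ (-2 - 2 * s)) *
      ∫⁻ v in Icc (-(4 * ε * h)) (4 * ε * h), ∫⁻ t, ‖A (t + v) - A t‖ₑ ^ 2 := by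
  unfold coneOsc
  rw [lintegral_const_mul' _ _ ENNReal.ofReal_ne_top, lintegral_lintegral_swap
    (f := fun t v => ‖A (t + h + v) - A (t + h)‖ₑ ^ 2) (by fun_prop)]
  congr 1
  exact lintegral_congr fun v =>
    lintegral_add_right_eq_self (fun t => ‖A (t + v) - A t‖ₑ ^ 2) h

lemma lintegral_coneOsc_le_gagliardoEnergy (hA : Continuous A) {s ε : ℝ} (hs : 0 ≤ s)
    (hε : 0 < ε) :
    ∫⁻ t, ∫⁻ h in Ioi 0, coneOsc s ε A t h ≤
      ENNReal.ofReal ((4 * ε) ^ (1 + 2 * s)) * gagliardoEnergy s A := by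
  let D (v : ℝ) : ℝ≥0∞ := ∫⁻ t, ‖A (t + v) - A t‖ₑ ^ 2
  let cone : Set (ℝ × ℝ) := {z | z.2 ∈ Icc (-(4 * ε * z.1)) (4 * ε * z.1)}
  have hcone : MeasurableSet cone :=
    (measurableSet_le (by fun_prop) measurable_snd).inter
      (measurableSet_le measurable_snd (by fun_prop))
  have hD : Measurable D := by
    have hcont : Continuous fun z : ℝ × ℝ => ‖A (z.2 + z.1) - A z.2‖ₑ ^ 2 := by fun_prop
    exact hcont.measurable.lintegral_prod_right'
  calc ∫⁻ t, ∫⁻ h in Ioi 0, coneOsc s ε A t h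
      = ∫⁻ h in Ioi 0, ∫⁻ t, coneOsc s ε A t h :=
        lintegral_lintegral_swap (measurable_coneOsc hA s ε).aemeasurable
    _ = ∫⁻ h in Ioi 0, ∫⁻ v in Prod.mk h ⁻¹' cone, ENNReal.ofReal (h ^ (-2 - 2 * s)) * D v := by
        refine lintegral_congr fun h => ?_
        rw [lintegral_coneOsc_eq_time hA, ← lintegral_const_mul' _ _ ENNReal.ofReal_ne_top]
        rfl
    _ = ∫⁻ v, ∫⁻ h in (fun h => (h, v)) ⁻¹' cone, ENNReal.ofReal (h ^ (-2 - 2 * s)) * D v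
          ∂volume.restrict (Ioi 0) :=
        lintegral_setLIntegral_section_swap hcone (by fun_prop)
    _ ≤ ∫⁻ v, ENNReal.ofReal ((4 * ε) ^ (1 + 2 * s)) *
          (ENNReal.ofReal (|v| ^ (-1 - 2 * s)) * D v) := by
        refine lintegral_mono_ae ((Measure.ae_ne volume 0).mono fun v hv => ?_)
        rw [Measure.restrict_restrict (measurable_prodMk_right hcone),
          lintegral_mul_const _ (by fun_prop), ← mul_assoc]
        exact mul_le_mul' (lintegral_Ioi_rpow_cone_le hs hε hv) le_rfl
    _ = _ := lintegral_const_mul' _ _ ENNReal.ofReal_ne_top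

lemma eLpNorm'_shellOsc_le (hA : Continuous A) (s : ℝ) {ε q : ℝ} (hε : 0 < ε) (hq : 2 ≤ q)
    (t : ℝ) :
    eLpNorm' (fun r => shellOsc s ε A t r ^ (1 / 2 : ℝ)) q logMeasure ≤
      ENNReal.ofReal (ε ^ (1 / q)) * (∫⁻ h in Ioi 0, coneOsc s ε A t h) ^ (1 / 2 : ℝ) := by
  have : 0 < q := by linarith
  have hshell := lintegral_rpow_shell_le hε.le (p := q / 2) (by linarith)
    (measurable_coneOsc hA s ε).of_uncurry_left (g := coneOsc s ε A t)
  calc eLpNorm' (fun r => shellOsc s ε A t r ^ (1 / 2 : ℝ)) q logMeasure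
      = (∫⁻ r, shellOsc s ε A t r ^ (q / 2) ∂logMeasure) ^ (1 / q) := by
        simp only [eLpNorm', enorm_eq_self, ← ENNReal.rpow_mul, one_div_mul_eq_div]
    _ ≤ (ENNReal.ofReal ε * (∫⁻ h in Ioi 0, coneOsc s ε A t h) ^ (q / 2)) ^ (1 / q) := by
        gcongr
        exact hshell
    _ = _ := by
        rw [ENNReal.mul_rpow_of_nonneg _ _ (by positivity), ← ENNReal.rpow_mul,
          ENNReal.ofReal_rpow_of_pos hε]
        congr 2
        field_simp

lemma logMixedNorm_shellOsc_le (hA : Continuous A) {s ε q : ℝ} (hs : 0 ≤ s) (hε : 0 < ε)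
    (hq : 2 ≤ q) :
    logMixedNorm q (fun t r => shellOsc s ε A t r ^ (1 / 2 : ℝ)) ≤
      ENNReal.ofReal (ε ^ (1 / q) * (4 * ε) ^ (1 / 2 + s)) * gagliardoEnergy s A ^ (1 / 2 : ℝ) := by
  have hmeas : Measurable fun t => (∫⁻ h in Ioi 0, coneOsc s ε A t h) ^ (1 / 2 : ℝ) :=
    (measurable_coneOsc hA s ε).lintegral_prod_right'.pow_const _
  calc logMixedNorm q (fun t r => shellOsc s ε A t r ^ (1 / 2 : ℝ))
      ≤ ENNReal.ofReal (ε ^ (1 / q)) *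
          eLpNorm' (fun t => (∫⁻ h in Ioi 0, coneOsc s ε A t h) ^ (1 / 2 : ℝ)) 2 volume :=
        eLpNorm'_le_mul_eLpNorm'_of_ae_le_mul hmeas.aestronglyMeasurable
          (.of_forall fun t => eLpNorm'_shellOsc_le hA s hε hq t) two_pos
    _ = ENNReal.ofReal (ε ^ (1 / q)) * (∫⁻ t, ∫⁻ h in Ioi 0, coneOsc s ε A t h) ^ (1 / 2 : ℝ) := by
        simp only [eLpNorm', enorm_eq_self, ← ENNReal.rpow_mul]
        norm_num
    _ ≤ ENNReal.ofReal (ε ^ (1 / q)) *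
          (ENNReal.ofReal ((4 * ε) ^ (1 + 2 * s)) * gagliardoEnergy s A) ^ (1 / 2 : ℝ) := by
        gcongr
        exact lintegral_coneOsc_le_gagliardoEnergy hA hs hε
    _ = _ := by
        rw [ENNReal.mul_rpow_of_nonneg _ _ (by positivity), ENNReal.ofReal_rpow_of_pos
          (by positivity), ← Real.rpow_mul (by positivity), ← mul_assoc,
          ← ENNReal.ofReal_mul (by positivity), show (1 + 2 * s) * (1 / 2) = 1 / 2 + s by ring]

lemma tsum_dyadic_weight_lt_top {s q : ℝ} (hs : 1 / 2 - 1 / q < s) :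
    ∑' k : ℕ, 2 ^ k * ENNReal.ofReal ((1 / 2 ^ k) ^ (1 / q) * (4 * (1 / 2 ^ k)) ^ (1 / 2 + s)) <
      ⊤ := by
  let ρ : ℝ := 2 ^ (1 / 2 - 1 / q - s)
  have hρ : ρ < 1 := Real.rpow_lt_one_of_one_lt_of_neg one_lt_two (by linarith)
  have hterm (k : ℕ) : 2 ^ k * ENNReal.ofReal ((1 / 2 ^ k) ^ (1 / q) *
      (4 * (1 / 2 ^ k)) ^ (1 / 2 + s)) = ENNReal.ofReal (4 ^ (1 / 2 + s) * ρ ^ k) := by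
    rw [← ENNReal.ofReal_ofNat 2, ← ENNReal.ofReal_pow zero_le_two,
      ← ENNReal.ofReal_mul (by positivity), Real.mul_rpow (by norm_num) (by positivity)]
    have hpow (x : ℝ) : ((1 : ℝ) / 2 ^ k) ^ x = 2 ^ (-(k * x)) := by
      rw [one_div, Real.inv_rpow (by positivity), ← Real.rpow_natCast_mul zero_le_two,
        Real.rpow_neg zero_le_two]
    have hρk : ρ ^ k = 2 ^ k * (2 ^ (-(k * (1 / q))) * 2 ^ (-(k * (1 / 2 + s)))) := by
      rw [← Real.rpow_natCast 2 k, ← Real.rpow_add two_pos, ← Real.rpow_add two_pos,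
        ← Real.rpow_mul_natCast zero_le_two]
      ring_nf
    rw [hpow, hpow, hρk]
    ring_nf
  simp only [hterm]
  exact ((summable_geometric_of_lt_one (by positivity) hρ).mul_left _).tsum_ofReal_lt_top

lemma measurable_chainTerm (hA : Continuous A) (s : ℝ) (k : ℕ) :
    Measurable (Function.uncurry fun t r =>
      (2 : ℝ≥0∞) ^ k * shellOsc s (1 / 2 ^ k) A t r ^ (1 / 2 : ℝ)) :=
  ((measurable_shellOsc hA s _).pow_const _).const_mul _

lemma measurable_chainSum (hA : Continuous A) (s : ℝ) :
    Measurable (Function.uncurry (chainSum s A)) :=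
  Measurable.tsum fun k => measurable_chainTerm hA s k

lemma logMixedNorm_chainSum_le (hA : Continuous A) {s q : ℝ} (hs : 0 ≤ s) (hq : 2 ≤ q) :
    logMixedNorm q (chainSum s A) ≤
      (∑' k : ℕ, 2 ^ k * ENNReal.ofReal ((1 / 2 ^ k) ^ (1 / q) * (4 * (1 / 2 ^ k)) ^ (1 / 2 + s))) *
        gagliardoEnergy s A ^ (1 / 2 : ℝ) := by
  rw [← ENNReal.tsum_mul_right]
  refine (logMixedNorm_tsum_le (by linarith) (measurable_chainTerm hA s)).trans
    (ENNReal.tsum_le_tsum fun k => ?_)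
  refine (logMixedNorm_le_const_mul (by linarith) ((measurable_shellOsc hA s _).pow_const _)
    fun _ _ _ => le_rfl).trans ?_
  rw [mul_assoc]
  gcongr
  exact logMixedNorm_shellOsc_le hA hs (by positivity) hq

theorem exists_logMixedNorm_scaledIncrement_le [NormedSpace ℝ E] [CompleteSpace E] {q s : ℝ}
    (hq : 2 ≤ q) (hs : 1 / 2 - 1 / q < s) :
    ∃ C < (⊤ : ℝ≥0∞), ∀ A : ℝ → E, Continuous A →
      logMixedNorm q (scaledIncrement s A) ≤ C * gagliardoEnergy s A ^ (1 / 2 : ℝ) := by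
  have hs₀ : 0 ≤ s := by
    have hq' : 1 / q ≤ 1 / 2 := one_div_le_one_div_of_le two_pos hq
    linarith
  refine ⟨_, ENNReal.mul_lt_top (ENNReal.mul_lt_top (ENNReal.ofReal_lt_top (r := 2 ^ (s + 2)))
    (ENNReal.ofNat_lt_top (n := 2)))
    (ENNReal.mul_lt_top (ENNReal.ofNat_lt_top (n := 2)) (tsum_dyadic_weight_lt_top hs)),
    fun A hA => ?_⟩
  have hmeas := measurable_chainSum hA s
  have hmeas_neg : Measurable (Function.uncurry fun t => chainSum s (fun x => A (-x)) (-t)) :=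
    (measurable_chainSum (hA.comp continuous_neg) s).comp (measurable_fst.neg.prodMk measurable_snd)
  have hreflected := logMixedNorm_chainSum_le (hA.comp continuous_neg) hs₀ hq
  simp only [Function.comp_def, gagliardoEnergy_comp_neg] at hreflected
  refine (logMixedNorm_le_const_mul
    (G := fun t r => chainSum s A t r + chainSum s (fun x => A (-x)) (-t) r) (by linarith)
    (hmeas.add hmeas_neg) fun t r hr => scaledIncrement_le_chainSum hA (by linarith) hr t).trans ?_
  rw [mul_assoc _ (2 * _)]
  gcongr
  refine (logMixedNorm_add_le (by linarith) hmeas hmeas_neg).trans ?_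
  rw [logMixedNorm_comp_neg, mul_assoc, two_mul]
  exact add_le_add (logMixedNorm_chainSum_le hA hs₀ hq) hreflected

end SquareFunction

section RadialFourier

variable {F : Type*} [NormedAddCommGroup F] [NormedSpace ℂ F]

section Rotation

variable {V : Type*} [NormedAddCommGroup V] [InnerProductSpace ℝ V] [MeasurableSpace V]
  [BorelSpace V] [FiniteDimensional ℝ V] {f : V → F}

lemma fourier_congr_norm (hf : ∀ x y, ‖x‖ = ‖y‖ → f x = f y) {ξ η : V} (h : ‖ξ‖ = ‖η‖) :
    𝓕 f ξ = 𝓕 f η := by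
  let A := Submodule.reflection (Submodule.span ℝ {ξ - η})ᗮ
  have hfA : f ∘ A = f := funext fun x => hf _ _ (A.norm_map x)
  rw [← Submodule.reflection_sub h, ← Real.fourier_comp_linearIsometry A, hfA]

lemma fourierInv_congr_norm (hf : ∀ x y, ‖x‖ = ‖y‖ → f x = f y) {x y : V} (h : ‖x‖ = ‖y‖) :
    𝓕⁻ f x = 𝓕⁻ f y := by
  simp only [Real.fourierInv_eq_fourier_neg]
  exact fourier_congr_norm hf (by simpa using h)

end Rotation

lemma integral_Ioi_smul_comp_sqrt_add_sq {F : Type*} [NormedAddCommGroup F] [NormedSpace ℝ F]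
    (f : ℝ → F) (a : ℝ) :
    ∫ y in Ioi 0, y • f √(a ^ 2 + y ^ 2) = ∫ ρ in Ioi |a|, ρ • f ρ := by
  have himage : (fun y => √(a ^ 2 + y ^ 2)) '' Ioi 0 = Ioi |a| := by
    ext ρ
    constructor
    · rintro ⟨y, hy, rfl⟩
      refine (Real.lt_sqrt (abs_nonneg a)).2 ?_
      rw [sq_abs]
      exact lt_add_of_pos_right _ (pow_pos hy 2)
    · intro hρ
      have hρ' : |a| < ρ := hρ
      have hlt : 0 < ρ ^ 2 - a ^ 2 := sub_pos.2 (sq_lt_sq.2 (hρ'.trans_le (le_abs_self ρ)))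
      refine ⟨√(ρ ^ 2 - a ^ 2), Real.sqrt_pos.2 hlt, ?_⟩
      simp only [Real.sq_sqrt hlt.le, add_sub_cancel]
      exact Real.sqrt_sq ((abs_nonneg a).trans hρ'.le)
  have hderiv : ∀ y ∈ Ioi (0 : ℝ), HasDerivWithinAt (fun y => √(a ^ 2 + y ^ 2))
      (y / √(a ^ 2 + y ^ 2)) (Ioi 0) y := by
    intro y (hy : 0 < y)
    have h := ((hasDerivAt_pow 2 y).const_add (a ^ 2)).sqrt (by positivity)
    refine h.hasDerivWithinAt.congr_deriv ?_
    simp [mul_div_mul_left]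
  have hinj : InjOn (fun y => √(a ^ 2 + y ^ 2)) (Ioi 0) := by
    intro y (hy : 0 < y) z (hz : 0 < z) h
    have h' := (Real.sqrt_inj (by positivity) (by positivity)).1 h
    exact (sq_eq_sq₀ hy.le hz.le).1 (add_left_cancel h')
  rw [← himage, integral_image_eq_integral_abs_deriv_smul measurableSet_Ioi hderiv hinj]
  refine setIntegral_congr_fun measurableSet_Ioi fun y (hy : 0 < y) => ?_
  have hpos : 0 < √(a ^ 2 + y ^ 2) := Real.sqrt_pos.2 (by positivity)
  simp only [smul_smul, abs_of_pos (div_pos hy hpos), div_mul_cancel₀ _ hpos.ne']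

lemma integral_plane_comp_sqrt_add_sq {F : Type*} [NormedAddCommGroup F] [NormedSpace ℝ F]
    (f : ℝ → F) (a : ℝ) :
    ∫ w : EuclideanSpace ℝ (Fin 2), f √(a ^ 2 + ‖w‖ ^ 2) =
      (2 * π) • ∫ ρ in Ioi |a|, ρ • f ρ := by
  have harea : volume.real (Metric.ball (0 : EuclideanSpace ℝ (Fin 2)) 1) = π := by
    simp [measureReal_def, EuclideanSpace.volume_ball_fin_two, Real.pi_pos.le]
  have h := integral_fun_norm_addHaar (volume : Measure (EuclideanSpace ℝ (Fin 2)))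
    fun y => f √(a ^ 2 + y ^ 2)
  simp only [finrank_euclideanSpace, Fintype.card_fin, harea, Nat.add_one_sub_one, pow_one] at h
  rw [h, integral_Ioi_smul_comp_sqrt_add_sq, ← Nat.cast_smul_eq_nsmul ℝ, smul_smul, Nat.cast_ofNat]

lemma integrable_indicator_abs_lt_smul {c : ℝ → ℂ} (hc : Continuous c) (hc₁ : ∀ a, ‖c a‖ ≤ 1)
    {g : ℝ → F} (hg : IntegrableOn (fun ρ => ρ • g ρ) (Ioi 0)) :
    Integrable ({p : ℝ × ℝ | |p.1| < p.2}.indicator fun p => c p.1 • g p.2)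
      (volume.prod (volume.restrict (Ioi 0))) := by
  have hgm : AEStronglyMeasurable g (volume.restrict (Ioi 0)) :=
    (measurable_id.inv.aestronglyMeasurable.smul hg.aestronglyMeasurable).congr <| by
      filter_upwards [ae_restrict_mem measurableSet_Ioi] with ρ (hρ : 0 < ρ)
      exact inv_smul_smul₀ hρ.ne' (g ρ)
  have hmeas := ((hc.comp continuous_fst).aestronglyMeasurable.smul
    (hgm.comp_snd (μ := volume))).indicator (measurableSet_lt measurable_fst.abs measurable_snd)
  have hsection (ρ : ℝ) :
      (fun a => {p : ℝ × ℝ | |p.1| < p.2}.indicator (fun p => c p.1 • g p.2) (a, ρ)) =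
        (Ioo (-ρ) ρ).indicator fun a => c a • g ρ := by
    ext a
    simp only [indicator, mem_ofPred_eq, mem_Ioo, abs_lt]
  have hslice (ρ : ℝ) : IntegrableOn (fun a => c a • g ρ) (Ioo (-ρ) ρ) :=
    (hc.smul continuous_const).integrableOn_Icc.mono_set Ioo_subset_Icc_self
  refine (integrable_prod_iff' hmeas).2 ⟨ae_of_all _ fun ρ => ?_, ?_⟩
  · exact (hsection ρ).symm ▸ (hslice ρ).integrable_indicator measurableSet_Ioo
  refine (hg.norm.const_mul 2).mono' hmeas.norm.prod_swap.integral_prod_right' ?_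
  filter_upwards [ae_restrict_mem measurableSet_Ioi] with ρ (hρ : 0 < ρ)
  rw [Real.norm_of_nonneg (integral_nonneg fun _ => norm_nonneg _)]
  calc ∫ a, ‖{p : ℝ × ℝ | |p.1| < p.2}.indicator (fun p => c p.1 • g p.2) (a, ρ)‖
      = ∫ a in Ioo (-ρ) ρ, ‖c a • g ρ‖ := by
        rw [← integral_indicator measurableSet_Ioo]
        exact integral_congr_ae <| ae_of_all _ fun a =>
          (congrArg norm (congrFun (hsection ρ) a)).trans (norm_indicator_eq_indicator_norm _ a)
    _ ≤ ∫ _ in Ioo (-ρ) ρ, ‖g ρ‖ :=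
        setIntegral_mono (hslice ρ).norm (integrableOn_const (by simp)) fun a => by
          rw [norm_smul]
          exact mul_le_of_le_one_left (norm_nonneg _) (hc₁ a)
    _ = 2 * ‖ρ • g ρ‖ := by
        rw [setIntegral_const, measureReal_def, Real.volume_Ioo,
          ENNReal.toReal_ofReal (by linarith), norm_smul, Real.norm_of_nonneg hρ.le, smul_eq_mul]
        ring

lemma integral_smul_integral_Ioi_abs [CompleteSpace F] {c : ℝ → ℂ} (hc : Continuous c)
    (hc₁ : ∀ a, ‖c a‖ ≤ 1) {g : ℝ → F} (hg : IntegrableOn (fun ρ => ρ • g ρ) (Ioi 0)) :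
    ∫ a, c a • ∫ ρ in Ioi |a|, g ρ = ∫ ρ in Ioi 0, (∫ a in Ioo (-ρ) ρ, c a) • g ρ := by
  let G : ℝ → ℝ → F := fun a ρ =>
    {p : ℝ × ℝ | |p.1| < p.2}.indicator (fun p => c p.1 • g p.2) (a, ρ)
  have hG_left (a : ℝ) : G a = (Ioi |a|).indicator fun ρ => c a • g ρ := rfl
  have hG_right (ρ : ℝ) : (G · ρ) = (Ioo (-ρ) ρ).indicator fun a => c a • g ρ := by
    ext a
    simp only [G, indicator, mem_ofPred_eq, mem_Ioo, abs_lt]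
  calc ∫ a, c a • ∫ ρ in Ioi |a|, g ρ = ∫ a, ∫ ρ in Ioi 0, G a ρ := by
        congr with a
        rw [hG_left, setIntegral_indicator measurableSet_Ioi, integral_smul,
          inter_eq_right.2 (Ioi_subset_Ioi (abs_nonneg a))]
    _ = ∫ ρ in Ioi 0, ∫ a, G a ρ :=
        integral_integral_swap (integrable_indicator_abs_lt_smul hc hc₁ hg)
    _ = ∫ ρ in Ioi 0, (∫ a in Ioo (-ρ) ρ, c a) • g ρ := by
        congr with ρ
        rw [hG_right, integral_indicator measurableSet_Ioo, integral_smul_const]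

lemma setIntegral_Ioo_fourierChar {r : ℝ} (hr : r ≠ 0) {ρ : ℝ} (hρ : 0 < ρ) :
    ∫ a in Ioo (-ρ) ρ, (𝐞 (a * r) : ℂ) = (sin (2 * π * r * ρ) / (π * r) : ℝ) := by
  have hc : (2 * π * r * Complex.I : ℂ) ≠ 0 := by simp [Real.pi_ne_zero, hr]
  have hchar (a : ℝ) : (𝐞 (a * r) : ℂ) = Complex.exp (2 * π * r * Complex.I * a) := by
    rw [Real.fourierChar_apply]
    congr 1
    push_cast
    ring
  simp only [hchar]
  rw [← integral_Ioc_eq_integral_Ioo, ← intervalIntegral.integral_of_le (by linarith),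
    integral_exp_mul_complex hc]
  push_cast
  rw [Complex.sin]
  field_simp
  ring_nf
  simp only [Complex.I_sq]
  ring

/-- `ℝ³` as the orthogonal sum of a line and a plane. -/
abbrev LinePlane := WithLp 2 (ℝ × EuclideanSpace ℝ (Fin 2))

lemma norm_linePlane (y : LinePlane) : ‖y‖ = √(y.fst ^ 2 + ‖y.snd‖ ^ 2) := by
  rw [WithLp.prod_norm_eq_of_L2, Real.norm_eq_abs, sq_abs]

lemma integral_fst_smul_comp_norm {c : ℝ → ℂ} {m : ℝ → F}
    (h_int : Integrable fun y : LinePlane => c y.fst • m ‖y‖) :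
    ∫ y : LinePlane, c y.fst • m ‖y‖ = (2 * π) • ∫ a, c a • ∫ ρ in Ioi |a|, ρ • m ρ := by
  have hpres := WithLp.volume_preserving_toLp ℝ (EuclideanSpace ℝ (Fin 2))
  have hemb := (MeasurableEquiv.toLp 2 (ℝ × EuclideanSpace ℝ (Fin 2))).measurableEmbedding
  have hprod := (hpres.integrable_comp_emb hemb).2 h_int
  rw [Measure.volume_eq_prod] at hprod
  rw [← hpres.integral_comp hemb, Measure.volume_eq_prod]
  refine (integral_prod _ hprod).trans ?_
  rw [← integral_smul]
  congr with a
  simp only [Function.comp_apply, norm_linePlane, WithLp.toLp_fst, WithLp.toLp_snd]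
  rw [integral_smul, integral_plane_comp_sqrt_add_sq, smul_comm]

lemma fourierInv_comp_norm_axis [CompleteSpace F] {m : ℝ → F}
    (hm : Integrable fun y : LinePlane => m ‖y‖) {r : ℝ} (hr : r ≠ 0) :
    𝓕⁻ (fun y : LinePlane => m ‖y‖) (WithLp.toLp 2 (r, 0)) =
      (2 / r) • ∫ ρ in Ioi 0, sin (2 * π * r * ρ) • ρ • m ρ := by
  have hpolar : IntegrableOn (fun ρ : ℝ => ρ • ρ • m ρ) (Ioi 0) := by
    have hdim : Module.finrank ℝ LinePlane = 3 := by
      rw [(WithLp.linearEquiv 2 ℝ (ℝ × EuclideanSpace ℝ (Fin 2))).finrank_eq]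
      simp
    simpa only [hdim, Nat.add_one_sub_one, sq, mul_smul] using
      (integrable_fun_norm_addHaar volume).1 hm
  have hinner (y : LinePlane) : inner ℝ y (WithLp.toLp 2 (r, 0)) = y.fst * r := by
    simp [WithLp.prod_inner_apply, mul_comm]
  have h_int : Integrable fun y : LinePlane => (𝐞 (y.fst * r) : ℂ) • m ‖y‖ := by
    simpa only [hinner, Circle.smul_def] using
      integrable_fourierChar_smul hm (WithLp.toLp 2 (r, 0))
  calc 𝓕⁻ (fun y : LinePlane => m ‖y‖) (WithLp.toLp 2 (r, 0))
      = ∫ y : LinePlane, (𝐞 (y.fst * r) : ℂ) • m ‖y‖ := by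
        simp only [Real.fourierInv_eq, hinner, Circle.smul_def]
    _ = (2 * π) • ∫ ρ in Ioi 0, (∫ a in Ioo (-ρ) ρ, (𝐞 (a * r) : ℂ)) • ρ • m ρ := by
        rw [integral_fst_smul_comp_norm (c := fun a => (𝐞 (a * r) : ℂ)) h_int,
          integral_smul_integral_Ioi_abs (by fun_prop)
            (fun a => (Circle.norm_coe _).le) hpolar]
    _ = (2 / r) • ∫ ρ in Ioi 0, sin (2 * π * r * ρ) • ρ • m ρ := by
        rw [← integral_smul, ← integral_smul]
        refine setIntegral_congr_fun measurableSet_Ioi fun ρ hρ => ?_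
        simp only [setIntegral_Ioo_fourierChar hr hρ]
        rw [Complex.coe_smul, smul_smul, smul_smul (2 / r)]
        congr 1
        field_simp

theorem fourierInv_comp_norm [CompleteSpace F] {V : Type*} [NormedAddCommGroup V]
    [InnerProductSpace ℝ V] [MeasurableSpace V] [BorelSpace V] [FiniteDimensional ℝ V]
    (hV : Module.finrank ℝ V = 3) {m : ℝ → F} (hm : Integrable fun ξ : V => m ‖ξ‖) {x : V}
    (hx : x ≠ 0) :
    𝓕⁻ (fun ξ : V => m ‖ξ‖) x = (2 / ‖x‖) • ∫ ρ in Ioi 0, sin (2 * π * ‖x‖ * ρ) • ρ • m ρ := by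
  have hdim : Module.finrank ℝ LinePlane = Module.finrank ℝ V := by
    rw [hV, (WithLp.linearEquiv 2 ℝ (ℝ × EuclideanSpace ℝ (Fin 2))).finrank_eq]
    simp
  let e : LinePlane ≃ₗᵢ[ℝ] V :=
    (stdOrthonormalBasis ℝ LinePlane).equiv (stdOrthonormalBasis ℝ V) (finCongr hdim)
  have hcomp : (fun ξ : V => m ‖ξ‖) ∘ e = fun y => m ‖y‖ := funext fun y =>
    congrArg m (e.norm_map y)
  have hme : Integrable fun y : LinePlane => m ‖y‖ := hcomp ▸
    (e.measurePreserving.integrable_comp_emb e.toHomeomorph.measurableEmbedding).2 hm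
  have hnorm : ‖x‖ = ‖e (WithLp.toLp 2 (‖x‖, 0))‖ := by
    simp [e.norm_map]
  rw [fourierInv_congr_norm (fun ξ η h => congrArg m h) hnorm,
    ← Real.fourierInv_comp_linearIsometry, hcomp,
    fourierInv_comp_norm_axis hme (norm_ne_zero_iff.2 hx)]

end RadialFourier

section Polar

lemma lintegral_comp_norm {V : Type*} [NormedAddCommGroup V] [NormedSpace ℝ V] [Nontrivial V]
    [FiniteDimensional ℝ V] [MeasurableSpace V] [BorelSpace V] (μ : Measure V)
    [μ.IsAddHaarMeasure] {f : ℝ → ℝ≥0∞} (hf : Measurable f) :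
    ∫⁻ x, f ‖x‖ ∂μ = (Module.finrank ℝ V * μ (Metric.ball 0 1)) *
      ∫⁻ r in Ioi 0, ENNReal.ofReal (r ^ (Module.finrank ℝ V - 1)) * f r := by
  calc ∫⁻ x, f ‖x‖ ∂μ = ∫⁻ x : ({0}ᶜ : Set V), f ‖x.1‖ ∂μ.comap (↑) := by
        rw [lintegral_subtype_comap (measurableSet_singleton _).compl fun x => f ‖x‖,
          restrict_compl_singleton]
    _ = ∫⁻ x, f x.2 ∂μ.toSphere.prod (.volumeIoiPow (Module.finrank ℝ V - 1)) := by
        simpa using! μ.measurePreserving_homeomorphUnitSphereProd.lintegral_comp_emb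
          (Homeomorph.measurableEmbedding _) (f ∘ Subtype.val ∘ Prod.snd)
    _ = μ.toSphere univ * ∫⁻ r : Ioi (0 : ℝ), f r ∂.volumeIoiPow (Module.finrank ℝ V - 1) := by
        rw [lintegral_prod _ (by fun_prop)]
        simp only [lintegral_const, mul_comm]
    _ = _ := by
        rw [Measure.volumeIoiPow, lintegral_withDensity_eq_lintegral_mul _ (by fun_prop)
          (by fun_prop), μ.toSphere_apply_univ]
        exact congrArg _ (lintegral_subtype_comap measurableSet_Ioi
          fun r => ENNReal.ofReal (r ^ (Module.finrank ℝ V - 1)) * f r)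

lemma memLp_indicator_ball {V F : Type*} [NormedAddCommGroup V] [ProperSpace V]
    [MeasurableSpace V] [BorelSpace V] {μ : Measure V} [IsFiniteMeasureOnCompacts μ]
    [NormedAddCommGroup F] {f : V → F} (hf : Continuous f) (p : ℝ≥0∞) (R : ℝ) :
    MemLp ((Metric.ball 0 R).indicator f) p μ := by
  rw [memLp_indicator_iff_restrict Metric.isOpen_ball.measurableSet]
  obtain ⟨M, hM⟩ := (isCompact_closedBall (0 : V) R).exists_bound_of_continuousOn hf.continuousOn
  have : IsFiniteMeasure (μ.restrict (Metric.ball 0 R)) := ⟨by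
    simpa using measure_ball_lt_top⟩
  exact .of_bound hf.aestronglyMeasurable M
    ((ae_restrict_mem Metric.isOpen_ball.measurableSet).mono fun x hx =>
      hM x (Metric.ball_subset_closedBall hx))

lemma lintegral_comp_norm_E3 {f : ℝ → ℝ≥0∞} (hf : Measurable f) :
    ∫⁻ x : E3, f ‖x‖ = ENNReal.ofReal (4 * π) * ∫⁻ r in Ioi 0, ENNReal.ofReal (r ^ 2) * f r := by
  rw [lintegral_comp_norm volume hf, EuclideanSpace.volume_ball_fin_three, finrank_euclideanSpace]
  rw [Fintype.card_fin, ENNReal.ofReal_one, one_pow, one_mul, ← ENNReal.ofReal_natCast,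
    ← ENNReal.ofReal_mul (by positivity)]
  congr 2
  push_cast
  ring

lemma lintegral_comp_abs {f : ℝ → ℝ≥0∞} (hf : Measurable f) :
    ∫⁻ r, f |r| = 2 * ∫⁻ r in Ioi 0, f r := by
  simpa using lintegral_comp_norm (V := ℝ) volume hf

lemma integral_eq_setIntegral_Ioi_add_comp_neg {F : Type*} [NormedAddCommGroup F]
    [NormedSpace ℝ F] {f : ℝ → F} (hf : Integrable f) :
    ∫ ρ, f ρ = ∫ ρ in Ioi 0, (f ρ + f (-ρ)) := by
  rw [integral_add hf.integrableOn hf.comp_neg.integrableOn, integral_comp_neg_Ioi, neg_zero,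
    add_comm, intervalIntegral.integral_Iic_add_Ioi hf.integrableOn hf.integrableOn]

end Polar

section Wave

/-- The radial profile `ρ ↦ û(ξ)`, `‖ξ‖ = |ρ|`, of the Fourier transform of a radial function,
extended to an even function on the line. -/
def fourierProfile (u : E3 → ℝ) (ρ : ℝ) : ℂ :=
  𝓕 (fun x => (u x : ℂ)) (EuclideanSpace.single 0 |ρ|)

@[fun_prop]
lemma continuous_fourierProfile (u : E3 → ℝ) : Continuous (fourierProfile u) := by
  have hsingle : (fun ρ : ℝ => (EuclideanSpace.single 0 |ρ| : E3)) =
      fun ρ => |ρ| • EuclideanSpace.single 0 1 := by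
    funext ρ
    ext i
    simp
  have hcont : Continuous fun ρ : ℝ => (EuclideanSpace.single 0 |ρ| : E3) :=
    hsingle ▸ by fun_prop
  exact (continuous_fourier _).comp hcont

lemma fourierProfile_abs (u : E3 → ℝ) (ρ : ℝ) : fourierProfile u |ρ| = fourierProfile u ρ := by
  rw [fourierProfile, abs_abs, fourierProfile]

lemma fourierProfile_neg (u : E3 → ℝ) (ρ : ℝ) : fourierProfile u (-ρ) = fourierProfile u ρ := by
  rw [← fourierProfile_abs, abs_neg, fourierProfile_abs]

lemma IsRadial.fourier_eq_fourierProfile {u : E3 → ℝ} (hu : IsRadial u) (ξ : E3) :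
    𝓕 (fun x => (u x : ℂ)) ξ = fourierProfile u ‖ξ‖ :=
  fourier_congr_norm (fun x y hxy => congrArg _ (hu x y hxy)) (by simp)

/-- The radial profile of `waveSymbol`, with `sinc` taking care of the origin. -/
def waveProfile (t : ℝ) (u₀ u₁ : E3 → ℝ) (ρ : ℝ) : ℂ :=
  cos (2 * π * t * ρ) * fourierProfile u₀ ρ +
    (t * sinc (2 * π * t * ρ) : ℝ) * fourierProfile u₁ ρ

@[fun_prop]
lemma continuous_waveProfile (t : ℝ) (u₀ u₁ : E3 → ℝ) : Continuous (waveProfile t u₀ u₁) := by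
  have := continuous_sinc
  unfold waveProfile
  fun_prop

lemma waveProfile_of_ne_zero (t : ℝ) (u₀ u₁ : E3 → ℝ) {ρ : ℝ} (hρ : ρ ≠ 0) :
    waveProfile t u₀ u₁ ρ = cos (2 * π * t * ρ) * fourierProfile u₀ ρ +
      (sin (2 * π * t * ρ) / (2 * π * ρ) : ℝ) * fourierProfile u₁ ρ := by
  rw [waveProfile]
  congr 3
  rcases eq_or_ne t 0 with rfl | ht
  · simp
  · rw [sinc_of_ne_zero (by positivity)]
    field_simp

lemma waveSymbol_eq_waveProfile (t : ℝ) {u₀ u₁ : E3 → ℝ} (hu₀ : IsRadial u₀) (hu₁ : IsRadial u₁)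
    (ξ : E3) : waveSymbol t u₀ u₁ ξ = waveProfile t u₀ u₁ ‖ξ‖ := by
  rw [waveSymbol, hu₀.fourier_eq_fourierProfile, hu₁.fourier_eq_fourierProfile]
  split_ifs with hξ
  · simp [waveProfile, hξ]
  · rw [waveProfile_of_ne_zero t u₀ u₁ hξ]

/-- The free wave with its frequencies cut off sharply at `‖ξ‖ < R`. -/
def truncatedWave (R t : ℝ) (u₀ u₁ : E3 → ℝ) : E3 → ℂ :=
  𝓕⁻ ((Metric.ball 0 R).indicator (waveSymbol t u₀ u₁))

/-- The frequency density of the one-dimensional wave `A` for which the truncated radial wave at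
distance `r` from the origin is `(A (t + r) - A (t - r)) / r`. -/
def waveDensity (R : ℝ) (u₀ u₁ : E3 → ℝ) : ℝ → ℂ :=
  (Metric.ball 0 R).indicator fun ρ =>
    ρ * fourierProfile u₀ ρ / (2 * Complex.I) - fourierProfile u₁ ρ / (4 * π)

lemma memLp_waveDensity (p : ℝ≥0∞) (R : ℝ) (u₀ u₁ : E3 → ℝ) : MemLp (waveDensity R u₀ u₁) p :=
  memLp_indicator_ball (by fun_prop) p R

lemma integrable_waveDensity (R : ℝ) (u₀ u₁ : E3 → ℝ) : Integrable (waveDensity R u₀ u₁) :=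
  memLp_one_iff_integrable.1 (memLp_waveDensity 1 R u₀ u₁)

lemma fourierChar_sub_mul_waveDensity_add_neg (R t r : ℝ) (u₀ u₁ : E3 → ℝ) {ρ : ℝ} (hρ : ρ ≠ 0) :
    ((𝐞 ((t + r) * ρ) : ℂ) - 𝐞 ((t - r) * ρ)) * waveDensity R u₀ u₁ ρ +
        ((𝐞 ((t + r) * -ρ) : ℂ) - 𝐞 ((t - r) * -ρ)) * waveDensity R u₀ u₁ (-ρ) =
      2 * (sin (2 * π * r * ρ) * (ρ * (Metric.ball 0 R).indicator (waveProfile t u₀ u₁) ρ)) := by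
  by_cases hR : |ρ| < R
  · have hmem (x : ℝ) (hx : |x| = |ρ|) : x ∈ Metric.ball (0 : ℝ) R := by simpa [hx] using hR
    rw [waveDensity, indicator_of_mem (hmem ρ rfl), indicator_of_mem (hmem _ (abs_neg ρ)),
      indicator_of_mem (hmem ρ rfl), waveProfile_of_ne_zero t u₀ u₁ hρ, fourierProfile_neg,
      fourierProfile_neg]
    have hρ' : (ρ : ℂ) ≠ 0 := by exact_mod_cast hρ
    have hchar (x : ℝ) : (𝐞 x : ℂ) = cos (2 * π * x) + sin (2 * π * x) * Complex.I := by
      rw [Real.fourierChar_apply, Complex.exp_mul_I, Complex.ofReal_cos, Complex.ofReal_sin]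
    have hadd : 2 * π * ((t + r) * ρ) = 2 * π * t * ρ + 2 * π * r * ρ := by ring
    have hsub : 2 * π * ((t - r) * ρ) = 2 * π * t * ρ - 2 * π * r * ρ := by ring
    simp only [hchar, mul_neg, cos_neg, sin_neg, hadd, hsub, cos_add, cos_sub, sin_add,
      sin_sub]
    push_cast
    field_simp
    ring
  · simp [waveDensity, hR]

lemma fourierInv_waveDensity_sub (R t r : ℝ) (u₀ u₁ : E3 → ℝ) :
    𝓕⁻ (waveDensity R u₀ u₁) (t + r) - 𝓕⁻ (waveDensity R u₀ u₁) (t - r) =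
      2 * ∫ ρ in Ioi 0, sin (2 * π * r * ρ) •
        ρ • (Metric.ball 0 R).indicator (waveProfile t u₀ u₁) ρ := by
  have hk := integrable_waveDensity R u₀ u₁
  have h_int (x : ℝ) := integrable_fourierChar_smul hk x
  rw [Real.fourierInv_eq, Real.fourierInv_eq, ← integral_sub (h_int _) (h_int _),
    integral_eq_setIntegral_Ioi_add_comp_neg (f := fun ρ =>
      𝐞 (inner ℝ ρ (t + r)) • waveDensity R u₀ u₁ ρ - 𝐞 (inner ℝ ρ (t - r)) • waveDensity R u₀ u₁ ρ)
      ((h_int _).sub (h_int _)), ← integral_const_mul]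
  refine setIntegral_congr_fun measurableSet_Ioi fun ρ hρ => ?_
  have hfold := fourierChar_sub_mul_waveDensity_add_neg R t r u₀ u₁ (ne_of_gt hρ)
  simpa only [Circle.smul_def, smul_eq_mul, RCLike.inner_apply, conj_trivial, ← sub_mul,
    Complex.real_smul] using hfold

lemma truncatedWave_eq_increment (R t : ℝ) {u₀ u₁ : E3 → ℝ} (hu₀ : IsRadial u₀)
    (hu₁ : IsRadial u₁) {x : E3} (hx : x ≠ 0) :
    truncatedWave R t u₀ u₁ x = ‖x‖⁻¹ •
      (𝓕⁻ (waveDensity R u₀ u₁) (t + ‖x‖) - 𝓕⁻ (waveDensity R u₀ u₁) (t - ‖x‖)) := by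
  have hsymbol : (Metric.ball 0 R).indicator (waveSymbol t u₀ u₁) =
      fun ξ : E3 => (Metric.ball 0 R).indicator (waveProfile t u₀ u₁) ‖ξ‖ := by
    funext ξ
    by_cases hξ : ‖ξ‖ < R <;> simp [hξ, waveSymbol_eq_waveProfile t hu₀ hu₁]
  have h_int : Integrable ((Metric.ball 0 R).indicator (waveSymbol t u₀ u₁)) := by
    rw [funext (waveSymbol_eq_waveProfile t hu₀ hu₁)]
    exact memLp_one_iff_integrable.1 (memLp_indicator_ball (by fun_prop) 1 R)
  rw [truncatedWave, hsymbol, fourierInv_comp_norm (by simp) (hsymbol ▸ h_int) hx,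
    fourierInv_waveDensity_sub]
  rw [Complex.real_smul, Complex.real_smul, ← mul_assoc]
  push_cast
  ring

lemma eLpNorm_truncatedWave {q : ℝ} (hq : 0 < q) (R t : ℝ) {u₀ u₁ : E3 → ℝ} (hu₀ : IsRadial u₀)
    (hu₁ : IsRadial u₁) :
    eLpNorm (truncatedWave R t u₀ u₁) (ENNReal.ofReal q) volume =
      ENNReal.ofReal (4 * π) ^ (1 / q) *
        eLpNorm' (scaledIncrement (1 - 3 / q) (𝓕⁻ (waveDensity R u₀ u₁)) t) q logMeasure := by
  set A := 𝓕⁻ (waveDensity R u₀ u₁) with hA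
  have hAc : Continuous A := continuous_fourierInv _
  have hweight (r : ℝ) (hr : 0 < r) :
      ENNReal.ofReal (r ^ 2) * ‖r⁻¹ • (A (t + r) - A (t - r))‖ₑ ^ q =
        ENNReal.ofReal r⁻¹ * ‖scaledIncrement (1 - 3 / q) A t r‖ₑ ^ q := by
    rw [scaledIncrement, enorm_eq_self, enorm_smul, Real.enorm_of_nonneg (by positivity),
      ENNReal.mul_rpow_of_nonneg _ _ hq.le, ENNReal.mul_rpow_of_nonneg _ _ hq.le, ← mul_assoc,
      ← mul_assoc, ENNReal.ofReal_rpow_of_nonneg (by positivity) hq.le,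
      ENNReal.ofReal_rpow_of_nonneg (by positivity) hq.le, ← ENNReal.ofReal_mul (by positivity),
      ← ENNReal.ofReal_mul (by positivity), ← Real.rpow_mul hr.le, ← Real.rpow_neg_one,
      ← Real.rpow_mul hr.le, ← Real.rpow_add hr, ← Real.rpow_natCast, ← Real.rpow_add hr]
    congr 3
    field_simp
    push_cast
    ring
  rw [eLpNorm_eq_eLpNorm' (by simpa using hq) ENNReal.ofReal_ne_top, ENNReal.toReal_ofReal hq.le,
    eLpNorm', eLpNorm', ← ENNReal.mul_rpow_of_nonneg _ _ (by positivity), lintegral_logMeasure]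
  congr 1
  calc ∫⁻ x, ‖truncatedWave R t u₀ u₁ x‖ₑ ^ q
      = ∫⁻ x : E3, ‖‖x‖⁻¹ • (A (t + ‖x‖) - A (t - ‖x‖))‖ₑ ^ q :=
        lintegral_congr_ae ((Measure.ae_ne volume (0 : E3)).mono fun x hx => by
          simp only [truncatedWave_eq_increment R t hu₀ hu₁ hx, hA])
    _ = ENNReal.ofReal (4 * π) * ∫⁻ r in Ioi 0,
          ENNReal.ofReal (r ^ 2) * ‖r⁻¹ • (A (t + r) - A (t - r))‖ₑ ^ q :=
        lintegral_comp_norm_E3 (f := fun r => ‖r⁻¹ • (A (t + r) - A (t - r))‖ₑ ^ q) (by fun_prop)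
    _ = _ := congrArg _ (setLIntegral_congr_fun measurableSet_Ioi hweight)

lemma sobNorm_sq_eq (s : ℝ) {u : E3 → ℝ} (hu : IsRadial u) :
    sobNorm s u ^ 2 = ENNReal.ofReal (4 * π) * ∫⁻ r in Ioi 0,
      ENNReal.ofReal (r ^ 2) * (ENNReal.ofReal (r ^ (2 * s)) * ‖fourierProfile u r‖ₑ ^ 2) := by
  have hmeas : Measurable fun r =>
      ENNReal.ofReal (r ^ (2 * s)) * ‖fourierProfile u r‖ₑ ^ 2 := by fun_prop
  rw [sobNorm, ← ENNReal.rpow_mul_natCast, ← lintegral_comp_norm_E3 hmeas]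
  simp [hu.fourier_eq_fourierProfile, enorm_eq_nnnorm]

lemma enorm_sq_waveDensity_le (R : ℝ) (u₀ u₁ : E3 → ℝ) (ρ : ℝ) :
    ‖waveDensity R u₀ u₁ ρ‖ₑ ^ 2 ≤
      ENNReal.ofReal (|ρ| ^ 2) * ‖fourierProfile u₀ |ρ|‖ₑ ^ 2 + ‖fourierProfile u₁ |ρ|‖ₑ ^ 2 := by
  rw [fourierProfile_abs, fourierProfile_abs]
  set a : ℂ := ρ * fourierProfile u₀ ρ / (2 * Complex.I) with ha
  set b : ℂ := fourierProfile u₁ ρ / (4 * π) with hb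
  have ha' : ‖a‖ = |ρ| * ‖fourierProfile u₀ ρ‖ / 2 := by simp [ha]
  have hb' : ‖b‖ ≤ ‖fourierProfile u₁ ρ‖ / 2 := by
    rw [hb, norm_div]
    gcongr
    rw [norm_mul, Complex.norm_real, norm_of_nonneg pi_pos.le, Complex.norm_ofNat]
    linarith [pi_gt_three]
  have hk : ‖waveDensity R u₀ u₁ ρ‖ ≤ ‖a‖ + ‖b‖ :=
    (norm_indicator_le_norm_self _ ρ).trans (norm_sub_le a b)
  simp only [← ofReal_norm]
  rw [← ENNReal.ofReal_pow (norm_nonneg _), ← ENNReal.ofReal_pow (norm_nonneg _),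
    ← ENNReal.ofReal_pow (norm_nonneg _), ← ENNReal.ofReal_mul (sq_nonneg _),
    ← ENNReal.ofReal_add (by positivity) (sq_nonneg _), ← mul_pow]
  refine ENNReal.ofReal_le_ofReal ?_
  calc ‖waveDensity R u₀ u₁ ρ‖ ^ 2 ≤ (‖a‖ + ‖b‖) ^ 2 := by gcongr
    _ ≤ 2 * (‖a‖ ^ 2 + ‖b‖ ^ 2) := add_sq_le
    _ ≤ 4 * (‖a‖ ^ 2 + ‖b‖ ^ 2) := by gcongr; norm_num
    _ ≤ 4 * (‖a‖ ^ 2 + (‖fourierProfile u₁ ρ‖ / 2) ^ 2) := by gcongr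
    _ = _ := by rw [ha']; ring

lemma lintegral_rpow_mul_waveDensity_le (s R : ℝ) {u₀ u₁ : E3 → ℝ} (hu₀ : IsRadial u₀)
    (hu₁ : IsRadial u₁) :
    ∫⁻ ρ, ENNReal.ofReal (|ρ| ^ (2 * s)) * ‖waveDensity R u₀ u₁ ρ‖ₑ ^ 2 ≤
      sobNorm s u₀ ^ 2 + sobNorm (s - 1) u₁ ^ 2 := by
  let g (r : ℝ) : ℝ≥0∞ := ENNReal.ofReal (r ^ (2 * s)) *
    (ENNReal.ofReal (r ^ 2) * ‖fourierProfile u₀ r‖ₑ ^ 2 + ‖fourierProfile u₁ r‖ₑ ^ 2)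
  have hg : Measurable g := by fun_prop
  calc ∫⁻ ρ, ENNReal.ofReal (|ρ| ^ (2 * s)) * ‖waveDensity R u₀ u₁ ρ‖ₑ ^ 2
      ≤ ∫⁻ ρ, g |ρ| :=
        lintegral_mono fun ρ => mul_le_mul' le_rfl (enorm_sq_waveDensity_le R u₀ u₁ ρ)
    _ = 2 * ∫⁻ r in Ioi 0, g r := lintegral_comp_abs hg
    _ ≤ ENNReal.ofReal (4 * π) * ∫⁻ r in Ioi 0, g r := by
        gcongr
        rw [← ENNReal.ofReal_ofNat]
        exact ENNReal.ofReal_le_ofReal (by linarith [pi_gt_three])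
    _ = _ := by
        rw [sobNorm_sq_eq s hu₀, sobNorm_sq_eq (s - 1) hu₁, ← mul_add,
          ← lintegral_add_left (by fun_prop)]
        congr 1
        refine setLIntegral_congr_fun measurableSet_Ioi fun r hr => ?_
        have hsplit : ENNReal.ofReal (r ^ (2 * s)) =
            ENNReal.ofReal (r ^ 2) * ENNReal.ofReal (r ^ (2 * (s - 1))) := by
          rw [← ENNReal.ofReal_mul (sq_nonneg r), ← Real.rpow_natCast, ← Real.rpow_add hr]
          congr 2
          push_cast
          ring
        simp only [g, mul_add]
        congr 1
        · ring
        · rw [hsplit, mul_assoc]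

lemma gagliardoEnergy_fourierInv_waveDensity_le (s R : ℝ) {u₀ u₁ : E3 → ℝ} (hu₀ : IsRadial u₀)
    (hu₁ : IsRadial u₁) :
    gagliardoEnergy s (𝓕⁻ (waveDensity R u₀ u₁)) ≤
      gagliardoConst s * (sobNorm s u₀ + sobNorm (s - 1) u₁) ^ 2 := by
  rw [gagliardoEnergy_fourierInv s (integrable_waveDensity R u₀ u₁) (memLp_waveDensity 2 R u₀ u₁)]
  gcongr
  exact (lintegral_rpow_mul_waveDensity_le s R hu₀ hu₁).trans
    (pow_add_pow_le zero_le zero_le two_ne_zero)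

lemma eLpNorm_waveProp_le_liminf (p : ℝ≥0∞) (t : ℝ) (u₀ u₁ : E3 → ℝ) :
    eLpNorm (waveProp t u₀ u₁) p volume ≤
      liminf (fun n : ℕ => eLpNorm (truncatedWave n t u₀ u₁) p volume) atTop := by
  by_cases h_int : Integrable (waveSymbol t u₀ u₁)
  · refine (eLpNorm_mono fun x => Complex.abs_re_le_norm _).trans
      (Lp.eLpNorm_lim_le_liminf_eLpNorm
        (fun n => (continuous_fourierInv _).aestronglyMeasurable) (𝓕⁻ (waveSymbol t u₀ u₁))
        (.of_forall fun x => tendsto_fourierInv_indicator_ball h_int x))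
  · have hzero : waveProp t u₀ u₁ = 0 := by
      funext x
      simp [waveProp, fourierInv_eq_zero_of_not_integrable h_int]
    simp [hzero]

lemma mixNorm_two_waveProp_le {q : ℝ} (hq : 0 < q) {u₀ u₁ : E3 → ℝ} (hu₀ : IsRadial u₀)
    (hu₁ : IsRadial u₁) {M : ℝ≥0∞}
    (hM : ∀ n : ℕ,
      logMixedNorm q (scaledIncrement (1 - 3 / q) (𝓕⁻ (waveDensity n u₀ u₁))) ≤ M) :
    mixNorm 2 (ENNReal.ofReal q) univ (fun t => waveProp t u₀ u₁) ≤
      ENNReal.ofReal (4 * π) ^ (1 / q) * M := by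
  let c : ℝ≥0∞ := ENNReal.ofReal (4 * π) ^ (1 / q)
  let N (n : ℕ) (t : ℝ) : ℝ≥0∞ := eLpNorm (truncatedWave n t u₀ u₁) (ENNReal.ofReal q) volume
  have hN (n : ℕ) : N n = fun t => c *
      eLpNorm' (scaledIncrement (1 - 3 / q) (𝓕⁻ (waveDensity n u₀ u₁)) t) q logMeasure :=
    funext fun t => eLpNorm_truncatedWave hq n t hu₀ hu₁
  have hinner (n : ℕ) := measurable_eLpNorm'_logMeasure q (measurable_scaledIncrement
    (continuous_fourierInv (waveDensity n u₀ u₁)) (1 - 3 / q))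
  have hNmeas (n : ℕ) : Measurable (N n) := hN n ▸ (hinner n).const_mul c
  have hNM (n : ℕ) : eLpNorm' (N n) 2 volume ≤ c * M :=
    (eLpNorm'_le_mul_eLpNorm'_of_ae_le_mul (hinner n).aestronglyMeasurable
      (.of_forall fun t => (congrFun (hN n) t).le) two_pos).trans (mul_le_mul' le_rfl (hM n))
  have hfatou (t : ℝ) : eLpNorm (waveProp t u₀ u₁) (ENNReal.ofReal q) volume ^ (2 : ℝ) ≤
      liminf (fun n => N n t ^ (2 : ℝ)) atTop :=
    (ENNReal.rpow_le_rpow (eLpNorm_waveProp_le_liminf _ t u₀ u₁) zero_le_two).trans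
      ((ENNReal.orderIsoRpow 2 two_pos).liminf_apply).le
  rw [mixNorm, if_neg ENNReal.ofNat_ne_top, Measure.restrict_univ, ENNReal.toReal_ofNat, one_div,
    ENNReal.rpow_inv_le_iff two_pos]
  calc ∫⁻ t, eLpNorm (waveProp t u₀ u₁) (ENNReal.ofReal q) volume ^ (2 : ℝ)
      ≤ liminf (fun n => ∫⁻ t, N n t ^ (2 : ℝ)) atTop :=
        (lintegral_mono hfatou).trans (lintegral_liminf_le fun n => (hNmeas n).pow_const _)
    _ ≤ liminf (fun _ : ℕ => (c * M) ^ (2 : ℝ)) atTop := by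
        refine liminf_le_liminf (.of_forall fun n => ?_)
        rw [← ENNReal.rpow_inv_le_iff two_pos]
        simpa [eLpNorm'] using hNM n
    _ = (c * M) ^ (2 : ℝ) := liminf_const _

end Wave

/-- Radial `L²_t L^q_x` Strichartz estimates: for radial data, `q > 4` and
`1/2 + 3/q = 3/2 - s`, the free wave satisfies
`‖u‖_{L²_t L^q_x(ℝ×ℝ³)} ≤ C(q) (‖u₀‖_{Ḣ^s} + ‖u₁‖_{Ḣ^{s-1}})`. -/
theorem radial_strichartz_LtwoLq (q s : ℝ) (hq : 4 < q)
    (hscal : 1 / 2 + 3 / q = 3 / 2 - s) :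
    ∃ C : ℝ≥0∞, C < ⊤ ∧
      ∀ u₀ u₁ : E3 → ℝ, IsRadial u₀ → IsRadial u₁ →
        MemSob s u₀ → MemSob (s - 1) u₁ →
        mixNorm 2 (ENNReal.ofReal q) Set.univ (fun t => waveProp t u₀ u₁) ≤
          C * (sobNorm s u₀ + sobNorm (s - 1) u₁) := by
  have hq₀ : 0 < q := by linarith
  have hs : s = 1 - 3 / q := by linarith
  have hs' : s = 1 - 3 * (1 / q) := by rw [hs, mul_one_div]
  have hinv₀ : 0 < 1 / q := one_div_pos.2 hq₀
  have hinv : 1 / q < 1 / 4 := one_div_lt_one_div_of_lt four_pos hq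
  obtain ⟨C, hC, hincrement⟩ := exists_logMixedNorm_scaledIncrement_le (E := ℂ) (q := q) (s := s)
    (by linarith) (by linarith)
  have hgagliardo : gagliardoConst s < ⊤ := gagliardoConst_lt_top (by linarith) (by linarith)
  refine ⟨ENNReal.ofReal (4 * π) ^ (1 / q) * (C * gagliardoConst s ^ (1 / 2 : ℝ)), by finiteness,
    fun u₀ u₁ hu₀ hu₁ _ _ => ?_⟩
  rw [mul_assoc, mul_assoc]
  refine mixNorm_two_waveProp_le hq₀ hu₀ hu₁ fun n => ?_
  rw [← hs]
  refine (hincrement _ (continuous_fourierInv _)).trans ?_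
  gcongr
  calc _ ≤ (gagliardoConst s * (sobNorm s u₀ + sobNorm (s - 1) u₁) ^ 2) ^ (1 / 2 : ℝ) := by
        gcongr
        exact gagliardoEnergy_fourierInv_waveDensity_le s n hu₀ hu₁
    _ = _ := by
        rw [ENNReal.mul_rpow_of_nonneg _ _ one_half_pos.le, ← ENNReal.rpow_natCast_mul]
        norm_num

end
end

section
/- (Littlewood–Paley projections and the Morawetz weight.) Let 3 < p < 5. There is a constant C, independent of j and v, such that for every j ∈ ℤ and every measurable v : ℝ³ → ℝ with ∫ |v(x)|^{p+1}/|x| dx < ∞, ∫_{ℝ³} |P_{≤j} v(x)|^{p+1}/|x| dx + ∫_{ℝ³} |P_{≥j} v(x)|^{p+1}/|x| dx ≤ C ∫_{ℝ³} |v(x)|^{p+1}/|x| dx. -/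
open MeasureTheory Real Set Filter Topology
open scoped FourierTransform ENNReal NNReal

noncomputable section

/-! The projections are convolutions with `L¹`-normalized dilates of a rapidly decreasing kernel, so
the estimate is a Schur test: it needs the row integrals `∫ |K(x, y)| dy`, which are invariant under
dilation, and the weighted column bounds `∫ |K(x, y)| |x|⁻ᵃ dx ≲ |y|⁻ᵃ`. Homogeneity of the weight
reduces the latter to unit scale, where `|y| ≤ (1 + |x - y|) max(1, |x|)` moves the weight from `x`
to `y` at the price of a factor absorbed by the decay of the kernel, and only the local
integrability of `|x|⁻ᵃ` at the origin remains. -/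

section SchurTest

variable {α β : Type*} [MeasurableSpace α] [MeasurableSpace β] {μ : Measure α} {ν : Measure β}

lemma rpow_lintegral_mul_le {q : ℝ} (hq : 1 ≤ q) {k f : α → ℝ≥0∞}
    (hk : AEMeasurable k μ) (hf : AEMeasurable f μ) :
    (∫⁻ y, k y * f y ∂μ) ^ q ≤ (∫⁻ y, k y ∂μ) ^ (q - 1) * ∫⁻ y, k y * f y ^ q ∂μ := by
  have hq₀ : 0 < q := by linarith
  have hθ : 0 ≤ 1 - q⁻¹ := sub_nonneg.2 (inv_le_one_of_one_le₀ hq)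
  have split (y : α) : k y ^ (1 - q⁻¹) * (k y * f y ^ q) ^ q⁻¹ = k y * f y := by
    rw [ENNReal.mul_rpow_of_nonneg _ _ (by positivity), ENNReal.rpow_rpow_inv hq₀.ne', ← mul_assoc,
      ← ENNReal.rpow_add_of_nonneg _ _ hθ (by positivity), sub_add_cancel, ENNReal.rpow_one]
  have holder := ENNReal.lintegral_mul_norm_pow_le hk (hk.mul (hf.pow_const q)) hθ
    (inv_nonneg.2 hq₀.le) (sub_add_cancel 1 q⁻¹)
  simp only [Pi.mul_apply, split] at holder
  calc (∫⁻ y, k y * f y ∂μ) ^ q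
      ≤ ((∫⁻ y, k y ∂μ) ^ (1 - q⁻¹) * (∫⁻ y, k y * f y ^ q ∂μ) ^ q⁻¹) ^ q := by gcongr
    _ = (∫⁻ y, k y ∂μ) ^ (q - 1) * ∫⁻ y, k y * f y ^ q ∂μ := by
      rw [ENNReal.mul_rpow_of_nonneg _ _ hq₀.le, ENNReal.rpow_inv_rpow hq₀.ne', ← ENNReal.rpow_mul,
        sub_mul, one_mul, inv_mul_cancel₀ hq₀.ne']

theorem lintegral_rpow_lintegral_mul_le_of_schur [SFinite μ] [SFinite ν] {q : ℝ} (hq : 1 ≤ q)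
    {K : α → β → ℝ≥0∞} (hK : Measurable (Function.uncurry K))
    {w : α → ℝ≥0∞} (hw : AEMeasurable w μ) {w' : β → ℝ≥0∞} (hw' : AEMeasurable w' ν) {A B : ℝ≥0∞}
    (hA : ∀ᵐ x ∂μ, ∫⁻ y, K x y ∂ν ≤ A) (hB : ∀ᵐ y ∂ν, ∫⁻ x, K x y * w x ∂μ ≤ B * w' y)
    {f : β → ℝ≥0∞} (hf : AEMeasurable f ν) :
    ∫⁻ x, (∫⁻ y, K x y * f y ∂ν) ^ q * w x ∂μ ≤
      A ^ (q - 1) * B * ∫⁻ y, f y ^ q * w' y ∂ν := by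
  have hKx (x : α) : Measurable (K x) := hK.of_uncurry_left
  have hKfx (x : α) : AEMeasurable (fun y => K x y * f y ^ q) ν :=
    (hKx x).aemeasurable.mul (hf.pow_const q)
  have hKw (y : β) : AEMeasurable (fun x => K x y * w x) μ :=
    hK.of_uncurry_right.aemeasurable.mul hw
  have hF : AEMeasurable (Function.uncurry fun x y => K x y * f y ^ q * w x) (μ.prod ν) :=
    (hK.aemeasurable.mul (hf.comp_snd.pow_const q)).mul hw.comp_fst
  calc ∫⁻ x, (∫⁻ y, K x y * f y ∂ν) ^ q * w x ∂μ
      ≤ ∫⁻ x, A ^ (q - 1) * ∫⁻ y, K x y * f y ^ q * w x ∂ν ∂μ := by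
        refine lintegral_mono_ae (hA.mono fun x hx => ?_)
        rw [lintegral_mul_const'' _ (hKfx x), ← mul_assoc]
        gcongr
        refine (rpow_lintegral_mul_le hq (hKx x).aemeasurable hf).trans ?_
        gcongr
    _ = A ^ (q - 1) * ∫⁻ y, f y ^ q * ∫⁻ x, K x y * w x ∂μ ∂ν := by
        rw [lintegral_const_mul'' _ (by exact hF.lintegral_prod_right'),
          lintegral_lintegral_swap hF]
        refine congr_arg _ (lintegral_congr fun y => ?_)
        rw [← lintegral_const_mul'' _ (hKw y)]
        exact lintegral_congr fun x => by ring
    _ ≤ A ^ (q - 1) * ∫⁻ y, B * (f y ^ q * w' y) ∂ν := by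
        refine mul_le_mul_right (lintegral_mono_ae (hB.mono fun y hy => ?_)) _
        rw [mul_left_comm]
        gcongr
    _ = A ^ (q - 1) * B * ∫⁻ y, f y ^ q * w' y ∂ν := by
        rw [lintegral_const_mul'' _ (by fun_prop), mul_assoc]

lemma lintegral_enorm_sub_rpow_mul_le {F : Type*} [NormedAddCommGroup F] {q : ℝ} (hq : 1 ≤ q)
    {f : α → F} (hf : AEStronglyMeasurable f μ) (g : α → F)
    {w : α → ℝ≥0∞} (hw : AEMeasurable w μ) :
    ∫⁻ x, ‖f x - g x‖ₑ ^ q * w x ∂μ ≤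
      2 ^ (q - 1) * (∫⁻ x, ‖f x‖ₑ ^ q * w x ∂μ + ∫⁻ x, ‖g x‖ₑ ^ q * w x ∂μ) := by
  have pointwise (x : α) : ‖f x - g x‖ₑ ^ q ≤ 2 ^ (q - 1) * (‖f x‖ₑ ^ q + ‖g x‖ₑ ^ q) :=
    (ENNReal.rpow_le_rpow enorm_sub_le (by linarith)).trans
      (ENNReal.rpow_add_le_mul_rpow_add_rpow _ _ hq)
  rw [← lintegral_add_left' (by fun_prop),
    ← lintegral_const_mul' _ _ (ENNReal.rpow_ne_top_of_nonneg (by linarith) (by simp))]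
  refine lintegral_mono fun x => ?_
  rw [← add_mul, ← mul_assoc]
  gcongr
  exact pointwise x

end SchurTest

section Dilation

variable {E : Type*} [NormedAddCommGroup E] [NormedSpace ℝ E]

/-- The `L¹`-normalized dilate `|N|ᵈ k(N ·)`, where `d` is the dimension, of a nonnegative kernel;
the Littlewood–Paley projection to frequencies `≤ N` is convolution with such a dilate. -/
def l1Dilation (N : ℝ) (k : E → ℝ≥0∞) (x : E) : ℝ≥0∞ :=
  ‖N‖ₑ ^ Module.finrank ℝ E * k (N • x)

variable [MeasurableSpace E] [BorelSpace E]

lemma measurable_l1Dilation (N : ℝ) {k : E → ℝ≥0∞} (hk : Measurable k) :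
    Measurable (l1Dilation N k) :=
  (hk.comp (measurable_const_smul N)).const_mul _

variable [FiniteDimensional ℝ E] (μ : Measure E) [μ.IsAddHaarMeasure]

lemma lintegral_l1Dilation {N : ℝ} (hN : N ≠ 0) (k : E → ℝ≥0∞) :
    ∫⁻ x, l1Dilation N k x ∂μ = ∫⁻ x, k x ∂μ := by
  have hpow : ‖N‖ₑ ^ Module.finrank ℝ E ≠ 0 := pow_ne_zero _ (by simpa using hN)
  have hmap : ∫⁻ x, k (N • x) ∂μ = (‖N‖ₑ ^ Module.finrank ℝ E)⁻¹ * ∫⁻ x, k x ∂μ := by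
    have h := lintegral_map_equiv (μ := μ) k (MeasurableEquiv.smul₀ N hN)
    rw [MeasurableEquiv.coe_smul₀, Measure.map_addHaar_smul μ hN, lintegral_smul_measure,
      abs_inv, ENNReal.ofReal_inv_of_pos (by positivity), ← Real.enorm_eq_ofReal_abs,
      enorm_pow] at h
    exact h.symm
  simp only [l1Dilation]
  rw [lintegral_const_mul' _ _ (by finiteness), hmap, ← mul_assoc,
    ENNReal.mul_inv_cancel hpow (by finiteness), one_mul]

variable {μ}

lemma lintegral_l1Dilation_sub_mul_enorm_rpow_neg_le {N : ℝ} (hN : N ≠ 0) {k : E → ℝ≥0∞} {a : ℝ}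
    {B : ℝ≥0∞} (hB : ∀ y, ∫⁻ x, k (x - y) * ‖x‖ₑ ^ (-a) ∂μ ≤ B * ‖y‖ₑ ^ (-a)) (y : E) :
    ∫⁻ x, l1Dilation N k (x - y) * ‖x‖ₑ ^ (-a) ∂μ ≤ B * ‖y‖ₑ ^ (-a) := by
  have hN₀ : ‖N‖ₑ ≠ 0 := by simpa using hN
  have weight (x : E) : ‖x‖ₑ ^ (-a) = ‖N‖ₑ ^ a * ‖N • x‖ₑ ^ (-a) := by
    rw [enorm_smul, ENNReal.mul_rpow_of_ne_top (by simp) (by simp), ← mul_assoc,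
      ← ENNReal.rpow_add _ _ hN₀ (by simp), add_neg_cancel, ENNReal.rpow_zero, one_mul]
  calc ∫⁻ x, l1Dilation N k (x - y) * ‖x‖ₑ ^ (-a) ∂μ
      = ∫⁻ x, ‖N‖ₑ ^ a * l1Dilation N (fun z => k (z - N • y) * ‖z‖ₑ ^ (-a)) x ∂μ := by
        refine lintegral_congr fun x => ?_
        rw [weight x, l1Dilation, l1Dilation, smul_sub]
        ring
    _ = ‖N‖ₑ ^ a * ∫⁻ z, k (z - N • y) * ‖z‖ₑ ^ (-a) ∂μ := by
        rw [lintegral_const_mul' _ _ (ENNReal.rpow_ne_top_of_ne_zero hN₀ (by simp)),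
          lintegral_l1Dilation μ hN]
    _ ≤ ‖N‖ₑ ^ a * (B * ‖N • y‖ₑ ^ (-a)) := by
        gcongr
        exact hB _
    _ = B * ‖y‖ₑ ^ (-a) := by rw [weight y, mul_left_comm]

theorem lintegral_rpow_lintegral_l1Dilation_sub_mul_le {q : ℝ} (hq : 1 ≤ q) {N : ℝ} (hN : N ≠ 0)
    {k : E → ℝ≥0∞} (hk : Measurable k) {a : ℝ} {B : ℝ≥0∞}
    (hB : ∀ y, ∫⁻ x, k (x - y) * ‖x‖ₑ ^ (-a) ∂μ ≤ B * ‖y‖ₑ ^ (-a))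
    {f : E → ℝ≥0∞} (hf : AEMeasurable f μ) :
    ∫⁻ x, (∫⁻ y, l1Dilation N k (x - y) * f y ∂μ) ^ q * ‖x‖ₑ ^ (-a) ∂μ ≤
      (∫⁻ x, k x ∂μ) ^ (q - 1) * B * ∫⁻ x, f x ^ q * ‖x‖ₑ ^ (-a) ∂μ := by
  have row (x : E) : ∫⁻ y, l1Dilation N k (x - y) ∂μ = ∫⁻ y, k y ∂μ := by
    rw [lintegral_sub_left_eq_self, lintegral_l1Dilation μ hN]
  exact lintegral_rpow_lintegral_mul_le_of_schur (K := fun x y => l1Dilation N k (x - y)) hq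
    ((measurable_l1Dilation N hk).comp measurable_sub) (by fun_prop) (by fun_prop)
    (.of_forall fun x => (row x).le)
    (.of_forall (lintegral_l1Dilation_sub_mul_enorm_rpow_neg_le hN hB)) hf

end Dilation

section KernelBound

variable {E : Type*} [NormedAddCommGroup E]

lemma enorm_rpow_neg_le_one_add_enorm_sub_rpow_mul {a : ℝ} (ha : 0 ≤ a) (x y : E) :
    ‖x‖ₑ ^ (-a) ≤ (1 + ‖x - y‖ₑ) ^ a * ‖y‖ₑ ^ (-a) *
      (1 + (Metric.closedBall (0 : E) 1).indicator (fun z => ‖z‖ₑ ^ (-a)) x) := by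
  have triangle : ‖y‖ₑ ≤ ‖x‖ₑ + ‖x - y‖ₑ := by
    simpa only [sub_sub_cancel] using enorm_sub_le (a := x) (b := x - y)
  have peetre {m : ℝ≥0∞} (hm₁ : 1 ≤ m) (hm : m ≠ ⊤) (hxm : ‖x‖ₑ ≤ m) :
      m ^ (-a) ≤ (1 + ‖x - y‖ₑ) ^ a * ‖y‖ₑ ^ (-a) := by
    have hy : ‖y‖ₑ ≤ (1 + ‖x - y‖ₑ) * m := by
      calc ‖y‖ₑ ≤ m + ‖x - y‖ₑ * 1 := by rw [mul_one]; exact triangle.trans (by gcongr)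
        _ ≤ m + ‖x - y‖ₑ * m := by gcongr
        _ = (1 + ‖x - y‖ₑ) * m := by ring
    calc m ^ (-a) = (1 + ‖x - y‖ₑ) ^ a * ((1 + ‖x - y‖ₑ) * m) ^ (-a) := by
          rw [ENNReal.mul_rpow_of_ne_top (by simp) hm, ← mul_assoc,
            ← ENNReal.rpow_add _ _ (by simp) (by simp), add_neg_cancel, ENNReal.rpow_zero, one_mul]
      _ ≤ (1 + ‖x - y‖ₑ) ^ a * ‖y‖ₑ ^ (-a) := by
          rw [ENNReal.rpow_neg, ENNReal.rpow_neg]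
          gcongr
  by_cases hx : x ∈ Metric.closedBall (0 : E) 1
  · have hx₁ : ‖x‖ₑ ≤ 1 := by simpa [← ofReal_norm] using hx
    rw [indicator_of_mem hx]
    have h := peetre le_rfl ENNReal.one_ne_top hx₁
    rw [ENNReal.one_rpow] at h
    calc ‖x‖ₑ ^ (-a) ≤ 1 * (1 + ‖x‖ₑ ^ (-a)) := by rw [one_mul]; exact le_add_self
      _ ≤ _ := by gcongr
  · have hx₁ : 1 ≤ ‖x‖ₑ := by
      simpa [← ofReal_norm] using (not_le.1 (mt mem_closedBall_zero_iff.2 hx)).le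
    rw [indicator_of_notMem hx, add_zero, mul_one]
    exact peetre hx₁ enorm_ne_top le_rfl

lemma mul_enorm_rpow_neg_le_of_decay {a r : ℝ} (ha : 0 ≤ a) (har : a < r) {k : E → ℝ≥0∞}
    {M : ℝ≥0∞} (hkM : ∀ x, k x ≤ M * (1 + ‖x‖ₑ) ^ (-r)) (x y : E) :
    k (x - y) * ‖x‖ₑ ^ (-a) ≤ M * ‖y‖ₑ ^ (-a) * ((1 + ‖x - y‖ₑ) ^ (-(r - a)) +
      (Metric.closedBall (0 : E) 1).indicator (fun z => ‖z‖ₑ ^ (-a)) x) := by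
  set W := (Metric.closedBall (0 : E) 1).indicator (fun z => ‖z‖ₑ ^ (-a)) x
  have hle : (1 + ‖x - y‖ₑ) ^ (-(r - a)) ≤ 1 :=
    ENNReal.rpow_le_one_of_one_le_of_neg le_self_add (by linarith)
  calc k (x - y) * ‖x‖ₑ ^ (-a)
      ≤ M * (1 + ‖x - y‖ₑ) ^ (-r) * ((1 + ‖x - y‖ₑ) ^ a * ‖y‖ₑ ^ (-a) * (1 + W)) :=
        mul_le_mul' (hkM _) (enorm_rpow_neg_le_one_add_enorm_sub_rpow_mul ha x y)
    _ = M * ‖y‖ₑ ^ (-a) * ((1 + ‖x - y‖ₑ) ^ (-(r - a)) + (1 + ‖x - y‖ₑ) ^ (-(r - a)) * W) := by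
        rw [neg_sub, sub_eq_neg_add a r, ENNReal.rpow_add _ _ (by simp) (by simp)]
        ring
    _ ≤ M * ‖y‖ₑ ^ (-a) * ((1 + ‖x - y‖ₑ) ^ (-(r - a)) + W) := by
        gcongr
        exact mul_le_of_le_one_left' hle

lemma ofReal_one_add_norm_rpow (x : E) (s : ℝ) :
    ENNReal.ofReal ((1 + ‖x‖) ^ s) = (1 + ‖x‖ₑ) ^ s := by
  rw [← ENNReal.ofReal_rpow_of_pos (by positivity), ENNReal.ofReal_add zero_le_one (norm_nonneg x),
    ENNReal.ofReal_one, ofReal_norm]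

lemma exists_schwartzMap_enorm_le_one_add_enorm_rpow_neg [NormedSpace ℝ E] {F : Type*}
    [NormedAddCommGroup F] [NormedSpace ℝ F] (f : SchwartzMap E F) (r : ℝ) :
    ∃ M : ℝ≥0, ∀ x, ‖f x‖ₑ ≤ M * (1 + ‖x‖ₑ) ^ (-r) := by
  set M := 2 ^ ⌈r⌉₊ * (Finset.Iic (⌈r⌉₊, 0)).sup (fun m => SchwartzMap.seminorm ℝ m.1 m.2) f
  have bound (x : E) : (1 + ‖x‖) ^ r * ‖f x‖ ≤ M := by
    calc (1 + ‖x‖) ^ r * ‖f x‖ ≤ (1 + ‖x‖) ^ ⌈r⌉₊ * ‖f x‖ := by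
          rw [← Real.rpow_natCast]
          gcongr
          · linarith [norm_nonneg x]
          · exact Nat.le_ceil r
      _ ≤ M := by
          simpa only [norm_iteratedFDeriv_zero] using
            SchwartzMap.one_add_le_sup_seminorm_apply (𝕜 := ℝ) (m := (⌈r⌉₊, 0)) le_rfl le_rfl f x
  refine ⟨M.toNNReal, fun x => ?_⟩
  have hx : 0 < 1 + ‖x‖ := by positivity
  have hdiv : ‖f x‖ ≤ M * (1 + ‖x‖) ^ (-r) := by
    rw [Real.rpow_neg hx.le, ← div_eq_mul_inv, le_div_iff₀' (by positivity)]
    exact bound x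
  rw [← ofReal_norm, ← ofReal_one_add_norm_rpow, ENNReal.ofNNReal_toNNReal,
    ← ENNReal.ofReal_mul' (by positivity)]
  exact ENNReal.ofReal_le_ofReal hdiv

variable [NormedSpace ℝ E] [FiniteDimensional ℝ E] [MeasurableSpace E] [BorelSpace E]
  (μ : Measure E) [μ.IsAddHaarMeasure]

lemma lintegral_one_add_enorm_rpow_neg_lt_top {r : ℝ} (hr : Module.finrank ℝ E < r) :
    ∫⁻ x : E, (1 + ‖x‖ₑ) ^ (-r) ∂μ < ⊤ := by
  simpa only [ofReal_one_add_norm_rpow] using finite_integral_one_add_norm (μ := μ) hr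

lemma setLIntegral_closedBall_enorm_rpow_neg_lt_top {a : ℝ} (ha : 0 ≤ a)
    (had : a < Module.finrank ℝ E) (R : ℝ) :
    ∫⁻ x in Metric.closedBall (0 : E) R, ‖x‖ₑ ^ (-a) ∂μ < ⊤ := by
  have hdim : 0 < Module.finrank ℝ E := by exact_mod_cast ha.trans_lt had
  have : Nontrivial E := Module.nontrivial_of_finrank_pos hdim
  have hloc : LocallyIntegrable (fun x : E => ‖x‖ ^ (-a)) μ :=
    locallyIntegrable_of_norm_le_rpow (C := 1) hdim had
      (.of_forall fun x => by rw [one_mul, Real.norm_of_nonneg (by positivity)])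
      (measurable_norm.pow_const _).aestronglyMeasurable
  refine lt_of_eq_of_lt (lintegral_congr_ae (ae_restrict_of_ae ?_))
    (hloc.integrableOn_isCompact (isCompact_closedBall (0 : E) R)).2
  filter_upwards [Measure.ae_ne μ 0] with x hx
  rw [Real.enorm_of_nonneg (by positivity), ← ENNReal.ofReal_rpow_of_pos (norm_pos_iff.2 hx),
    ofReal_norm]

variable {μ}

theorem exists_lintegral_sub_mul_enorm_rpow_neg_le {a r : ℝ} (ha : 0 ≤ a)
    (had : a < Module.finrank ℝ E) (hr : a + Module.finrank ℝ E < r) {k : E → ℝ≥0∞} {M : ℝ≥0}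
    (hkM : ∀ x, k x ≤ M * (1 + ‖x‖ₑ) ^ (-r)) :
    ∃ B : ℝ≥0, ∀ y, ∫⁻ x, k (x - y) * ‖x‖ₑ ^ (-a) ∂μ ≤ B * ‖y‖ₑ ^ (-a) := by
  set ball := Metric.closedBall (0 : E) 1
  have har : a < r := by linarith
  have hball : MeasurableSet ball := Metric.isClosed_closedBall.measurableSet
  have hweight : Measurable (ball.indicator fun z : E => ‖z‖ₑ ^ (-a)) :=
    Measurable.indicator (by fun_prop) hball
  obtain ⟨J, hJ⟩ : ∃ J : ℝ≥0, ∫⁻ x : E, (1 + ‖x‖ₑ) ^ (-(r - a)) ∂μ = J :=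
    ⟨_, (ENNReal.coe_toNNReal
      (lintegral_one_add_enorm_rpow_neg_lt_top μ (by linarith)).ne).symm⟩
  obtain ⟨D, hD⟩ : ∃ D : ℝ≥0, ∫⁻ x in ball, ‖x‖ₑ ^ (-a) ∂μ = D :=
    ⟨_, (ENNReal.coe_toNNReal
      (setLIntegral_closedBall_enorm_rpow_neg_lt_top μ ha had 1).ne).symm⟩
  refine ⟨M * (J + D), fun y => ?_⟩
  calc ∫⁻ x, k (x - y) * ‖x‖ₑ ^ (-a) ∂μ
      ≤ ∫⁻ x, M * ‖y‖ₑ ^ (-a) *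
          ((1 + ‖x - y‖ₑ) ^ (-(r - a)) + ball.indicator (fun z => ‖z‖ₑ ^ (-a)) x) ∂μ :=
        lintegral_mono fun x => mul_enorm_rpow_neg_le_of_decay ha har hkM x y
    _ = M * ‖y‖ₑ ^ (-a) * (J + D) := by
        rw [lintegral_const_mul _ (by fun_prop), lintegral_add_right _ hweight,
          lintegral_sub_right_eq_self (fun z => (1 + ‖z‖ₑ) ^ (-(r - a))) y,
          lintegral_indicator hball, hJ, hD]
    _ = ↑(M * (J + D)) * ‖y‖ₑ ^ (-a) := by
        push_cast
        ring

end KernelBound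

lemma enorm_lpLe_le_lintegral_l1Dilation (ψ : E3 → ℝ) (N : ℝ) (v : E3 → ℝ) (x : E3) :
    ‖lpLe ψ N v x‖ₑ ≤ ∫⁻ y, l1Dilation N (fun z => ‖ψ z‖ₑ) (x - y) * ‖v y‖ₑ := by
  refine (enorm_integral_le_lintegral_enorm _).trans_eq (lintegral_congr fun y => ?_)
  rw [enorm_mul, enorm_mul, enorm_pow, l1Dilation, finrank_euclideanSpace_fin]

theorem exists_lintegral_enorm_lpLe_rpow_mul_enorm_rpow_neg_le {q a : ℝ} (hq : 1 ≤ q) (ha : 0 ≤ a)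
    (ha₃ : a < 3) (ψ : SchwartzMap E3 ℝ) :
    ∃ C : ℝ≥0, ∀ N : ℝ, N ≠ 0 → ∀ v : E3 → ℝ, AEMeasurable v →
      ∫⁻ x, ‖lpLe ψ N v x‖ₑ ^ q * ‖x‖ₑ ^ (-a) ≤ C * ∫⁻ x, ‖v x‖ₑ ^ q * ‖x‖ₑ ^ (-a) := by
  have had : a < Module.finrank ℝ E3 := by simpa using ha₃
  obtain ⟨M, hM⟩ := exists_schwartzMap_enorm_le_one_add_enorm_rpow_neg ψ
    (a + Module.finrank ℝ E3 + 1)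
  obtain ⟨B, hB⟩ := exists_lintegral_sub_mul_enorm_rpow_neg_le (μ := volume) ha had
    (lt_add_one _) hM
  have hψ₁ : ∫⁻ x, ‖ψ x‖ₑ ≠ ⊤ := (ψ.integrable (μ := volume)).2.ne
  have hC : (∫⁻ x, ‖ψ x‖ₑ) ^ (q - 1) * B ≠ ⊤ :=
    ENNReal.mul_ne_top (ENNReal.rpow_ne_top_of_nonneg (by linarith) hψ₁) ENNReal.coe_ne_top
  refine ⟨((∫⁻ x, ‖ψ x‖ₑ) ^ (q - 1) * B).toNNReal, fun N hN v hv => ?_⟩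
  rw [ENNReal.coe_toNNReal hC]
  calc ∫⁻ x, ‖lpLe ψ N v x‖ₑ ^ q * ‖x‖ₑ ^ (-a)
      ≤ ∫⁻ x, (∫⁻ y, l1Dilation N (fun z => ‖ψ z‖ₑ) (x - y) * ‖v y‖ₑ) ^ q * ‖x‖ₑ ^ (-a) := by
        gcongr
        exact enorm_lpLe_le_lintegral_l1Dilation ψ N v _
    _ ≤ _ := lintegral_rpow_lintegral_l1Dilation_sub_mul_le hq hN
        ψ.continuous.measurable.enorm hB hv.enorm

theorem littlewoodPaley_morawetz_weight_general {q a : ℝ} (hq : 1 ≤ q) (ha : 0 ≤ a) (ha₃ : a < 3)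
    (ψ : SchwartzMap E3 ℝ) :
    ∃ C : ℝ≥0, ∀ N : ℝ, N ≠ 0 → ∀ v : E3 → ℝ, AEMeasurable v →
      (∫⁻ x, ‖lpLe ψ N v x‖ₑ ^ q * ‖x‖ₑ ^ (-a)) +
          ∫⁻ x, ‖v x - lpLe ψ N v x‖ₑ ^ q * ‖x‖ₑ ^ (-a) ≤
        C * ∫⁻ x, ‖v x‖ₑ ^ q * ‖x‖ₑ ^ (-a) := by
  obtain ⟨C, hC⟩ := exists_lintegral_enorm_lpLe_rpow_mul_enorm_rpow_neg_le hq ha ha₃ ψ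
  refine ⟨C + 2 ^ (q - 1) * (1 + C), fun N hN v hv => ?_⟩
  set I := ∫⁻ x, ‖v x‖ₑ ^ q * ‖x‖ₑ ^ (-a)
  calc (∫⁻ x, ‖lpLe ψ N v x‖ₑ ^ q * ‖x‖ₑ ^ (-a)) +
        ∫⁻ x, ‖v x - lpLe ψ N v x‖ₑ ^ q * ‖x‖ₑ ^ (-a)
      ≤ C * I + 2 ^ (q - 1) * (I + C * I) := by
        refine add_le_add (hC N hN v hv) ((lintegral_enorm_sub_rpow_mul_le hq
          hv.aestronglyMeasurable _ (by fun_prop)).trans ?_)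
        gcongr
        exact hC N hN v hv
    _ = ↑(C + 2 ^ (q - 1) * (1 + C)) * I := by
        rw [ENNReal.coe_add, ENNReal.coe_mul, ENNReal.coe_rpow_of_nonneg _ (by linarith)]
        push_cast
        ring

/-- Littlewood–Paley projections and the Morawetz weight: for `3 < p < 5`
there is a constant `C`, independent of `j ∈ ℤ` and `v`, with
`∫ |P_{≤j}v|^{p+1}/|x| + ∫ |P_{≥j}v|^{p+1}/|x| ≤ C ∫ |v|^{p+1}/|x|`. -/
theorem littlewoodPaley_morawetz_weight (p : ℝ) (hp3 : 3 < p) (hp5 : p < 5)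
    (ψ : SchwartzMap E3 ℝ) (hψ : IsLPKernel ⇑ψ) :
    ∃ C : ℝ≥0∞, C < ⊤ ∧
      ∀ (j : ℤ) (v : E3 → ℝ), Measurable v →
        (∫⁻ x : E3, (‖v x‖₊ : ℝ≥0∞) ^ (p + 1) / (‖x‖₊ : ℝ≥0∞)) < ⊤ →
        (∫⁻ x : E3, (‖lpLe ⇑ψ ((2 : ℝ) ^ j) v x‖₊ : ℝ≥0∞) ^ (p + 1) / (‖x‖₊ : ℝ≥0∞)) +
            (∫⁻ x : E3,
              (‖v x - lpLe ⇑ψ ((2 : ℝ) ^ j) v x‖₊ : ℝ≥0∞) ^ (p + 1) / (‖x‖₊ : ℝ≥0∞)) ≤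
          C * ∫⁻ x : E3, (‖v x‖₊ : ℝ≥0∞) ^ (p + 1) / (‖x‖₊ : ℝ≥0∞) := by
  obtain ⟨C, hC⟩ := littlewoodPaley_morawetz_weight_general (q := p + 1) (a := 1)
    (by linarith) zero_le_one (by norm_num) ψ
  exact ⟨C, ENNReal.coe_lt_top, fun j v hv _ => by
    simpa only [ENNReal.rpow_neg_one, ← div_eq_mul_inv, enorm_eq_nnnorm] using
      hC (2 ^ j) (by positivity) v hv.aemeasurable⟩

end
end

section
/- (Hyperbolic Morawetz estimate.) Let 3 < p < 5 and let ũ be a sufficiently smooth, decaying solution of (∂_ττ − ∂_ss − (2/s)∂_s) ũ + e^{−(p−3)τ}(s/sinh(s))^{p−1}|ũ|^{p−1}ũ = 0 for s > 0, on the time interval I = [0,T], with finite hyperbolic energy. Then ∫_0^T ∫₀^∞ e^{−(p−3)τ} (s/sinh(s))^{p−1} (cosh(s)/sinh(s)) |ũ(τ,s)|^{p+1} s² ds dτ ≤ C E(ũ)(0), where E(ũ)(τ) = ½∫₀^∞ (∂_s ũ)² s² ds + ½∫₀^∞ (∂_τ ũ)² s² ds + (1/(p+1))∫₀^∞ e^{−(p−3)τ}(s/sinh(s))^{p−1}|ũ|^{p+1}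 s² ds and C depends only on p. -/
open MeasureTheory Real Set Filter Topology
open scoped FourierTransform ENNReal NNReal

noncomputable section

/-!
The substitution `w = s ũ` turns the radial Laplacian into `∂_ss`, so that `W = (∂_τ + ∂_s) w`
satisfies `(∂_τ - ∂_s) W = -e^{-(p-3)τ} (sinh s)^{1-p} |w|^{p-1} w`. Multiplying by `W` and writing
`P = e^{-(p-3)τ} (sinh s)^{1-p} |w|^{p+1}` gives the balance law
`∂_τ (W² / 2 + P / (p+1)) + ∂_s (P / (p+1) - W² / 2) = -(p-3)/(p+1) P - (p-1)/(p+1) coth(s) P`.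
Integrated over `[0, T] × [0, R]`, with `R` beyond the support of `ũ`, all the remaining boundary
terms have the favourable sign, and the null energy at time `0` is at most twice `E(ũ)(0)`.
-/

section PartialDerivatives

variable {F : ℝ → ℝ → ℝ} {t s : ℝ}

lemma hasDerivAt_timeDeriv (hF : DifferentiableAt ℝ (Function.uncurry F) (t, s)) :
    HasDerivAt (fun x => F x s) (timeDeriv F t s) t :=
  (hF.comp t (f := fun x => (x, s)) (by fun_prop)).hasDerivAt

lemma hasDerivAt_deriv_right (hF : DifferentiableAt ℝ (Function.uncurry F) (t, s)) :
    HasDerivAt (F t) (deriv (F t) s) s :=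
  (hF.comp s (f := fun x => (t, x)) (by fun_prop)).hasDerivAt

lemma timeDeriv_eq_fderiv (hF : DifferentiableAt ℝ (Function.uncurry F) (t, s)) :
    timeDeriv F t s = fderiv ℝ (Function.uncurry F) (t, s) (1, 0) :=
  (hF.hasFDerivAt.comp_hasDerivAt (f := fun x => (x, s)) t
    ((hasDerivAt_id t).prodMk (hasDerivAt_const t s))).deriv

lemma deriv_right_eq_fderiv (hF : DifferentiableAt ℝ (Function.uncurry F) (t, s)) :
    deriv (F t) s = fderiv ℝ (Function.uncurry F) (t, s) (0, 1) :=
  (hF.hasFDerivAt.comp_hasDerivAt (f := fun x => (t, x)) s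
    ((hasDerivAt_const s t).prodMk (hasDerivAt_id s))).deriv

lemma uncurry_timeDeriv (hF : Differentiable ℝ (Function.uncurry F)) :
    Function.uncurry (timeDeriv F) = fun z => fderiv ℝ (Function.uncurry F) z (1, 0) :=
  funext fun z => timeDeriv_eq_fderiv (hF z)

lemma uncurry_deriv_right (hF : Differentiable ℝ (Function.uncurry F)) :
    Function.uncurry (fun t => deriv (F t)) =
      fun z => fderiv ℝ (Function.uncurry F) z (0, 1) :=
  funext fun z => deriv_right_eq_fderiv (hF z)

lemma contDiff_uncurry_timeDeriv {m n : WithTop ℕ∞} (hF : ContDiff ℝ n (Function.uncurry F))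
    (hmn : m + 1 ≤ n) : ContDiff ℝ m (Function.uncurry (timeDeriv F)) := by
  rw [uncurry_timeDeriv ((hF.of_le hmn).differentiable (by simp))]
  exact (hF.fderiv_right hmn).clm_apply contDiff_const

lemma contDiff_uncurry_deriv_right {m n : WithTop ℕ∞} (hF : ContDiff ℝ n (Function.uncurry F))
    (hmn : m + 1 ≤ n) : ContDiff ℝ m (Function.uncurry fun t => deriv (F t)) := by
  rw [uncurry_deriv_right ((hF.of_le hmn).differentiable (by simp))]
  exact (hF.fderiv_right hmn).clm_apply contDiff_const

lemma timeDeriv_deriv_right_comm (hF : ContDiff ℝ 2 (Function.uncurry F)) (t s : ℝ) :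
    timeDeriv (fun t => deriv (F t)) t s = deriv (timeDeriv F t) s := by
  have hF₁ : Differentiable ℝ (Function.uncurry F) := hF.differentiable (by norm_num)
  have hF₂ : Differentiable ℝ (fderiv ℝ (Function.uncurry F)) :=
    (hF.fderiv_right (m := 1) (by norm_num)).differentiable (by norm_num)
  have hsnd (u w : ℝ × ℝ) : fderiv ℝ (fun z => fderiv ℝ (Function.uncurry F) z u) (t, s) w =
      fderiv ℝ (fderiv ℝ (Function.uncurry F)) (t, s) w u := by
    rw [fderiv_clm_apply (hF₂ _) (differentiableAt_const u)]
    simp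
  rw [timeDeriv_eq_fderiv ((contDiff_uncurry_deriv_right hF
      (m := 1) (by norm_num)).differentiable (by norm_num) _),
    deriv_right_eq_fderiv ((contDiff_uncurry_timeDeriv hF
      (m := 1) (by norm_num)).differentiable (by norm_num) _),
    uncurry_deriv_right hF₁, uncurry_timeDeriv hF₁, hsnd, hsnd]
  exact hF.contDiffAt.isSymmSndFDerivAt (by simp) _ _

end PartialDerivatives

/-- The outgoing null derivative `(∂_t + ∂_s) F` of a function of `(t, s)`. -/
def nullDeriv (F : ℝ → ℝ → ℝ) (t s : ℝ) : ℝ := timeDeriv F t s + deriv (F t) s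

section NullDerivative

variable {F : ℝ → ℝ → ℝ} {t s : ℝ}

lemma hasDerivAt_nullDeriv (hF : DifferentiableAt ℝ (Function.uncurry F) (t, s)) :
    HasDerivAt (fun x => F (t + x) (s + x)) (nullDeriv F t s) 0 := by
  have hline : HasDerivAt (fun x => (t + x, s + x)) ((1 : ℝ), (1 : ℝ)) 0 :=
    ((hasDerivAt_id _).const_add t).prodMk ((hasDerivAt_id _).const_add s)
  have hF' : HasFDerivAt (Function.uncurry F) (fderiv ℝ (Function.uncurry F) (t, s))
      (t + 0, s + 0) := by simpa using hF.hasFDerivAt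
  refine (hF'.comp_hasDerivAt 0 hline).congr_deriv ?_
  rw [nullDeriv, timeDeriv_eq_fderiv hF, deriv_right_eq_fderiv hF, ← map_add]
  simp

lemma contDiff_uncurry_nullDeriv {m n : WithTop ℕ∞} (hF : ContDiff ℝ n (Function.uncurry F))
    (hmn : m + 1 ≤ n) : ContDiff ℝ m (Function.uncurry (nullDeriv F)) :=
  (contDiff_uncurry_timeDeriv hF hmn).add (contDiff_uncurry_deriv_right hF hmn)

lemma timeDeriv_sub_deriv_nullDeriv (hF : ContDiff ℝ 2 (Function.uncurry F)) (t s : ℝ) :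
    timeDeriv (nullDeriv F) t s - deriv (nullDeriv F t) s =
      timeDeriv2 F t s - deriv (deriv (F t)) s := by
  have hT : DifferentiableAt ℝ (Function.uncurry (timeDeriv F)) (t, s) :=
    (contDiff_uncurry_timeDeriv hF (m := 1) (by norm_num)).differentiable (by norm_num) _
  have hS : DifferentiableAt ℝ (Function.uncurry fun t => deriv (F t)) (t, s) :=
    (contDiff_uncurry_deriv_right hF (m := 1) (by norm_num)).differentiable (by norm_num) _
  have htime : timeDeriv (nullDeriv F) t s =
      timeDeriv2 F t s + timeDeriv (fun t => deriv (F t)) t s :=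
    ((hasDerivAt_timeDeriv hT).add (hasDerivAt_timeDeriv hS)).deriv
  have hspace : deriv (nullDeriv F t) s = deriv (timeDeriv F t) s + deriv (deriv (F t)) s :=
    ((hasDerivAt_deriv_right hT).add (hasDerivAt_deriv_right hS)).deriv
  rw [htime, hspace, timeDeriv_deriv_right_comm hF]
  ring

lemma nullDeriv_const_mul (c : ℝ) (F : ℝ → ℝ → ℝ) (t s : ℝ) :
    nullDeriv (fun t s => c * F t s) t s = c * nullDeriv F t s := by
  simp only [nullDeriv, timeDeriv, deriv_const_mul_field, mul_add]

lemma deriv_eq_zero_of_forall_ge {f : ℝ → ℝ} {a : ℝ} (hf : ∀ x, a ≤ x → f x = 0) :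
    deriv f a = 0 := by
  by_cases hfa : DifferentiableAt ℝ f a
  · rw [← hfa.derivWithin (uniqueDiffWithinAt_Ici a),
      derivWithin_congr (s := Ici a) (f := fun _ => 0) hf (hf a le_rfl),
      derivWithin_fun_const, Pi.zero_apply]
  · exact deriv_zero_of_not_differentiableAt hfa

lemma nullDeriv_eq_zero_of_forall_ge (hF : ∀ t x, s ≤ x → F t x = 0) :
    nullDeriv F t s = 0 := by
  simp [nullDeriv, timeDeriv, hF _ s le_rfl, deriv_eq_zero_of_forall_ge (hF t)]

end NullDerivative

section Integration

lemma setIntegral_Ioi_eq_intervalIntegral {E : Type*} [NormedAddCommGroup E] [NormedSpace ℝ E]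
    {f : ℝ → E} {a b : ℝ} (hab : a ≤ b) (hf : ∀ x, b < x → f x = 0) :
    ∫ x in Ioi a, f x = ∫ x in a..b, f x := by
  rw [intervalIntegral.integral_of_le hab]
  refine setIntegral_eq_of_subset_of_forall_sdiff_eq_zero measurableSet_Ioi
    Ioc_subset_Ioi_self fun x hx => hf x ?_
  exact not_le.1 fun hxb => hx.2 ⟨hx.1, hxb⟩

lemma intervalIntegral_intervalIntegral_mono {f g : ℝ → ℝ → ℝ} {a b c d : ℝ}
    (hf : Continuous (Function.uncurry f)) (hg : Continuous (Function.uncurry g)) (hab : a ≤ b)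
    (hcd : c ≤ d) (hfg : ∀ x ∈ Icc a b, ∀ y ∈ Icc c d, f x y ≤ g x y) :
    ∫ x in a..b, ∫ y in c..d, f x y ≤ ∫ x in a..b, ∫ y in c..d, g x y := by
  have hint {h : ℝ → ℝ → ℝ} (hh : Continuous (Function.uncurry h)) :=
    intervalIntegral.continuous_parametric_intervalIntegral_of_continuous' (μ := volume) hh c d
  refine intervalIntegral.integral_mono_on hab ((hint hf).intervalIntegrable a b)
    ((hint hg).intervalIntegrable a b) fun x hx => ?_
  exact intervalIntegral.integral_mono_on hcd ((hf.uncurry_left x).intervalIntegrable c d)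
    ((hg.uncurry_left x).intervalIntegrable c d) (hfg x hx)

lemma integral_timeDeriv_add_deriv_eq_boundary {f g q : ℝ → ℝ → ℝ} {a b c d : ℝ}
    (hab : a ≤ b) (hcd : c ≤ d)
    (hf : Continuous (Function.uncurry f)) (hg : Continuous (Function.uncurry g))
    (hq : Continuous (Function.uncurry q))
    (hf' : ∀ t ∈ Ioo a b, ∀ s ∈ Ioo c d, DifferentiableAt ℝ (Function.uncurry f) (t, s))
    (hg' : ∀ t ∈ Ioo a b, ∀ s ∈ Ioo c d, DifferentiableAt ℝ (Function.uncurry g) (t, s))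
    (hfgq : ∀ t ∈ Ioo a b, ∀ s ∈ Ioo c d, timeDeriv f t s + deriv (g t) s = q t s) :
    ∫ t in a..b, ∫ s in c..d, q t s =
      (((∫ t in a..b, g t d) - ∫ t in a..b, g t c) + ∫ s in c..d, f b s) -
        ∫ s in c..d, f a s := by
  have hdiv : ∀ t ∈ Ioo a b, ∀ s ∈ Ioo c d, fderiv ℝ (Function.uncurry f) (t, s) (1, 0) +
      fderiv ℝ (Function.uncurry g) (t, s) (0, 1) = q t s := fun t ht s hs => by
    rw [← timeDeriv_eq_fderiv (hf' t ht s hs), ← deriv_right_eq_fderiv (hg' t ht s hs),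
      hfgq t ht s hs]
  have hq_int : IntegrableOn (Function.uncurry q) (Ioo a b ×ˢ Ioo c d) :=
    (hq.continuousOn.integrableOn_compact (isCompact_Icc.prod isCompact_Icc)).mono_set
      (prod_mono Ioo_subset_Icc_self Ioo_subset_Icc_self)
  have hdiv_int : IntegrableOn (fun z => fderiv ℝ (Function.uncurry f) z (1, 0) +
      fderiv ℝ (Function.uncurry g) z (0, 1)) (uIcc a b ×ˢ uIcc c d) := by
    have hIoo : Ioo a b ×ˢ Ioo c d =ᵐ[volume] Icc a b ×ˢ Icc c d :=
      Measure.set_prod_ae_eq Ioo_ae_eq_Icc Ioo_ae_eq_Icc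
    rw [uIcc_of_le hab, uIcc_of_le hcd, ← integrableOn_congr_set_ae hIoo]
    exact hq_int.congr_fun (fun z hz => (hdiv z.1 hz.1 z.2 hz.2).symm)
      (measurableSet_Ioo.prod measurableSet_Ioo)
  have hbdry := integral2_divergence_prod_of_hasFDerivAt_off_countable (Function.uncurry f)
    (Function.uncurry g) _ _ a c b d ∅ countable_empty hf.continuousOn hg.continuousOn
    (fun z hz => (hf' z.1 (by simpa [hab] using hz.1.1) z.2
      (by simpa [hcd] using hz.1.2)).hasFDerivAt)
    (fun z hz => (hg' z.1 (by simpa [hab] using hz.1.1) z.2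
      (by simpa [hcd] using hz.1.2)).hasFDerivAt) hdiv_int
  refine Eq.trans ?_ hbdry
  exact intervalIntegral.integral_congr_Ioo_of_le hab fun t ht =>
    intervalIntegral.integral_congr_Ioo_of_le hcd fun s hs => (hdiv t ht s hs).symm

-- In null form, `∂_t (W² / 2 + G) + ∂_s (G - W² / 2) = W (∂_t - ∂_s) W + (∂_t + ∂_s) G`.
lemma integral_null_energy_identity {W G q : ℝ → ℝ → ℝ} {a b c d : ℝ}
    (hab : a ≤ b) (hcd : c ≤ d) (hW : ContDiff ℝ 1 (Function.uncurry W))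
    (hG : Continuous (Function.uncurry G)) (hq : Continuous (Function.uncurry q))
    (hG' : ∀ t ∈ Ioo a b, ∀ s ∈ Ioo c d, DifferentiableAt ℝ (Function.uncurry G) (t, s))
    (hWGq : ∀ t ∈ Ioo a b, ∀ s ∈ Ioo c d,
      W t s * (timeDeriv W t s - deriv (W t) s) + nullDeriv G t s = q t s) :
    ∫ t in a..b, ∫ s in c..d, q t s =
      (((∫ t in a..b, (G t d - 1 / 2 * W t d ^ 2)) -
        ∫ t in a..b, (G t c - 1 / 2 * W t c ^ 2)) +
        ∫ s in c..d, (1 / 2 * W b s ^ 2 + G b s)) -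
        ∫ s in c..d, (1 / 2 * W a s ^ 2 + G a s) := by
  have hWd : Differentiable ℝ (Function.uncurry W) := hW.differentiable (by norm_num)
  have hWc : Continuous (Function.uncurry W) := hW.continuous
  refine integral_timeDeriv_add_deriv_eq_boundary (f := fun t s => 1 / 2 * W t s ^ 2 + G t s)
    (g := fun t s => G t s - 1 / 2 * W t s ^ 2) hab hcd
    (((hWc.pow 2).const_mul _).add hG) (hG.sub ((hWc.pow 2).const_mul _)) hq
    (fun t ht s hs => (((hWd _).pow 2).const_mul _).add (hG' t ht s hs))
    (fun t ht s hs => (hG' t ht s hs).sub (((hWd _).pow 2).const_mul _)) fun t ht s hs => ?_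
  have htime : timeDeriv (fun t s => 1 / 2 * W t s ^ 2 + G t s) t s =
      W t s * timeDeriv W t s + timeDeriv G t s :=
    ((((hasDerivAt_timeDeriv (hWd (t, s))).fun_pow 2).const_mul (1 / 2)).fun_add
      (hasDerivAt_timeDeriv (hG' t ht s hs))).deriv.trans (by push_cast; ring)
  have hspace : deriv (fun s => G t s - 1 / 2 * W t s ^ 2) s =
      deriv (G t) s - W t s * deriv (W t) s :=
    ((hasDerivAt_deriv_right (hG' t ht s hs)).fun_sub
      (((hasDerivAt_deriv_right (hWd (t, s))).fun_pow 2).const_mul (1 / 2))).deriv.trans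
      (by push_cast; ring)
  rw [← hWGq t ht s hs, nullDeriv, htime, hspace]
  ring

-- The cross term in `(s f)'² = s² f'² + (s f²)'` is exact.
lemma integral_sq_deriv_id_mul {f : ℝ → ℝ} (hf : ContDiff ℝ 1 f) {b : ℝ} (hb : f b = 0) :
    ∫ s in 0..b, deriv (fun x => x * f x) s ^ 2 = ∫ s in 0..b, deriv f s ^ 2 * s ^ 2 := by
  have hfd (s : ℝ) : HasDerivAt f (deriv f s) s :=
    (hf.differentiable (by norm_num) s).hasDerivAt
  have hfc : Continuous f := hf.continuous
  have hexact : ∫ s in 0..b, (f s ^ 2 + s * (2 * f s * deriv f s)) = 0 := by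
    rw [intervalIntegral.integral_eq_sub_of_hasDerivAt (f := fun s => s * f s ^ 2)]
    · simp [hb]
    · exact fun s _ => ((hasDerivAt_id s).mul ((hfd s).pow 2)).congr_deriv (by simp)
    · exact Continuous.intervalIntegrable (by fun_prop) 0 b
  have hsq (s : ℝ) : deriv (fun x => x * f x) s ^ 2 =
      deriv f s ^ 2 * s ^ 2 + (f s ^ 2 + s * (2 * f s * deriv f s)) := by
    rw [((hasDerivAt_id' s).fun_mul (hfd s)).deriv]
    ring
  simp_rw [hsq]
  rw [intervalIntegral.integral_add (Continuous.intervalIntegrable (by fun_prop) 0 b)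
    (Continuous.intervalIntegrable (by fun_prop) 0 b), hexact, add_zero]

end Integration

section SinhWeights

lemma dslope_sinh_zero_pos (s : ℝ) : 0 < dslope sinh 0 s := by
  rcases eq_or_ne s 0 with rfl | hs
  · simp
  · rw [dslope_of_ne _ hs, slope_def_field, sinh_zero, sub_zero, sub_zero]
    rcases hs.lt_or_gt with hs | hs
    · exact div_pos_of_neg_of_neg (sinh_neg_iff.2 hs) hs
    · exact div_pos (sinh_pos_iff.2 hs) hs

-- The factor `s` hides the junk value `0 / sinh 0 = 0` at the removable singularity.
lemma continuous_div_sinh_rpow_mul_self (q : ℝ) :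
    Continuous fun s : ℝ => (s / sinh s) ^ q * s := by
  have hslope : (fun s : ℝ => (s / sinh s) ^ q * s) =
      fun s => (dslope sinh 0 s)⁻¹ ^ q * s := by
    funext s
    rcases eq_or_ne s 0 with rfl | hs
    · simp
    · simp [dslope_of_ne _ hs, slope_def_field]
  have hcont : Continuous (dslope sinh 0) := by
    rw [← continuousOn_univ, continuousOn_dslope univ_mem]
    exact ⟨continuous_sinh.continuousOn, differentiable_sinh _⟩
  have hne (s : ℝ) : dslope sinh 0 s ≠ 0 := (dslope_sinh_zero_pos s).ne'
  rw [hslope]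
  exact ((hcont.inv₀ hne).rpow_const fun s => Or.inl (inv_ne_zero (hne s))).mul continuous_id

lemma div_sinh_rpow_eq {s : ℝ} (hs : 0 < s) (q : ℝ) :
    (s / sinh s) ^ q = sinh s ^ (-q) * s ^ q := by
  have hsinh : 0 < sinh s := sinh_pos_iff.2 hs
  rw [div_rpow hs.le hsinh.le, rpow_neg hsinh.le]
  ring

end SinhWeights

/-- The wave equation of the theorem, for `v = ũ` and times in `I`. -/
def IsHypNLWSol (p : ℝ) (I : Set ℝ) (v : ℝ → ℝ → ℝ) : Prop :=
  ∀ τ ∈ I, ∀ s : ℝ, 0 < s →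
    timeDeriv2 v τ s - deriv (deriv (v τ)) s - (2 / s) * deriv (v τ) s +
      Real.exp (-(p - 3) * τ) * (s / Real.sinh s) ^ (p - 1) *
        (|v τ s| ^ (p - 1) * v τ s) = 0

/-- The substitution `w = s v`, which turns the radial Laplacian on `ℝ³` into `∂_ss`. -/
def radialReduction (v : ℝ → ℝ → ℝ) (τ s : ℝ) : ℝ := s * v τ s

/-- The integrand of the potential part of `hypEnergy`, with the volume factor `s ^ 2` but
without the factor `1 / (p + 1)`. -/
def hypPotential (p : ℝ) (v : ℝ → ℝ → ℝ) (τ s : ℝ) : ℝ :=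
  Real.exp (-(p - 3) * τ) * (s / Real.sinh s) ^ (p - 1) * |v τ s| ^ (p + 1) * s ^ 2

section RadialReduction

variable {v : ℝ → ℝ → ℝ}

lemma contDiff_uncurry_radialReduction {n : WithTop ℕ∞}
    (hv : ContDiff ℝ n (Function.uncurry v)) :
    ContDiff ℝ n (Function.uncurry (radialReduction v)) :=
  contDiff_snd.mul hv

lemma timeDeriv_radialReduction (v : ℝ → ℝ → ℝ) :
    timeDeriv (radialReduction v) = radialReduction (timeDeriv v) :=
  funext₂ fun _ _ => deriv_const_mul_field _

lemma deriv_deriv_id_mul {f : ℝ → ℝ} (hf : ContDiff ℝ 2 f) (s : ℝ) :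
    deriv (deriv fun x => x * f x) s = s * deriv (deriv f) s + 2 * deriv f s := by
  have hf₁ (x : ℝ) : HasDerivAt f (deriv f x) x :=
    (hf.differentiable (by norm_num) x).hasDerivAt
  have hf₂ : HasDerivAt (deriv f) (deriv (deriv f) s) s :=
    (hf.differentiable_deriv_two s).hasDerivAt
  have hderiv : (deriv fun x => x * f x) = fun x => f x + x * deriv f x :=
    funext fun x => by simpa using ((hasDerivAt_id' x).fun_mul (hf₁ x)).deriv
  rw [hderiv, ((hf₁ s).fun_add ((hasDerivAt_id' s).fun_mul hf₂)).deriv]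
  ring

lemma timeDeriv2_sub_deriv_radialReduction {p : ℝ} {I : Set ℝ} (hsol : IsHypNLWSol p I v)
    (hv : ContDiff ℝ 2 (Function.uncurry v)) {τ s : ℝ} (hτ : τ ∈ I) (hs : 0 < s) :
    timeDeriv2 (radialReduction v) τ s - deriv (deriv (radialReduction v τ)) s =
      -(Real.exp (-(p - 3) * τ) * sinh s ^ (1 - p) *
        (|radialReduction v τ s| ^ (p - 1) * radialReduction v τ s)) := by
  have htime : timeDeriv2 (radialReduction v) τ s = s * timeDeriv2 v τ s := by
    simp only [timeDeriv2, timeDeriv_radialReduction, radialReduction]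
  have hspace : deriv (deriv (radialReduction v τ)) s =
      s * deriv (deriv (v τ)) s + 2 * deriv (v τ) s :=
    deriv_deriv_id_mul (hv.comp (contDiff_prodMk_right τ)) s
  have hwave : timeDeriv2 v τ s = deriv (deriv (v τ)) s + 2 / s * deriv (v τ) s -
      Real.exp (-(p - 3) * τ) * (sinh s ^ (1 - p) * s ^ (p - 1)) *
        (|v τ s| ^ (p - 1) * v τ s) := by
    rw [show 1 - p = -(p - 1) by ring, ← div_sinh_rpow_eq hs]
    linarith [hsol τ hτ s hs]
  rw [htime, hspace, hwave, radialReduction, abs_mul, abs_of_pos hs,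
    mul_rpow hs.le (abs_nonneg _)]
  field_simp
  ring

end RadialReduction

section Potential

variable {p : ℝ} {v : ℝ → ℝ → ℝ} {τ s : ℝ}

lemma hypPotential_nonneg (hs : 0 ≤ s) : 0 ≤ hypPotential p v τ s := by
  unfold hypPotential
  positivity

lemma hypPotential_zero_right (p : ℝ) (v : ℝ → ℝ → ℝ) (τ : ℝ) : hypPotential p v τ 0 = 0 := by
  simp [hypPotential]

lemma hypPotential_eq_zero (hp : -1 < p) (hv : v τ s = 0) : hypPotential p v τ s = 0 := by
  simp [hypPotential, hv, zero_rpow (by linarith : p + 1 ≠ 0)]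

lemma hypPotential_eq_radialReduction (p : ℝ) (v : ℝ → ℝ → ℝ) (τ : ℝ) (hs : 0 < s) :
    hypPotential p v τ s =
      Real.exp (-(p - 3) * τ) * sinh s ^ (1 - p) * |radialReduction v τ s| ^ (p + 1) := by
  rw [hypPotential, show 1 - p = -(p - 1) by ring, div_sinh_rpow_eq hs, radialReduction, abs_mul,
    abs_of_pos hs, mul_rpow hs.le (abs_nonneg _), show p + 1 = p - 1 + 2 by ring, rpow_add hs,
    rpow_two]
  ring

lemma continuous_hypPotential (hp : -1 ≤ p) (hv : Continuous (Function.uncurry v)) :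
    Continuous (Function.uncurry (hypPotential p v)) := by
  have hexp : Continuous fun z : ℝ × ℝ => Real.exp (-(p - 3) * z.1) := by fun_prop
  have hweight : Continuous fun z : ℝ × ℝ => (z.2 / sinh z.2) ^ (p - 1) * z.2 :=
    (continuous_div_sinh_rpow_mul_self (p - 1)).comp continuous_snd
  have hpow : Continuous fun z : ℝ × ℝ => |Function.uncurry v z| ^ (p + 1) :=
    hv.abs.rpow_const fun _ => Or.inr (by linarith)
  refine (((hexp.fun_mul hweight).fun_mul hpow).fun_mul continuous_snd).congr fun z => ?_
  simp only [Function.uncurry, hypPotential]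
  ring

lemma continuous_coth_mul_hypPotential (hp : 0 < p) (hv : Continuous (Function.uncurry v)) :
    Continuous (Function.uncurry fun τ s => cosh s / sinh s * hypPotential p v τ s) := by
  have hexp : Continuous fun z : ℝ × ℝ => Real.exp (-(p - 3) * z.1) * cosh z.2 := by fun_prop
  have hweight : Continuous fun z : ℝ × ℝ => (z.2 / sinh z.2) ^ p * z.2 :=
    (continuous_div_sinh_rpow_mul_self p).comp continuous_snd
  have hpow : Continuous fun z : ℝ × ℝ => |Function.uncurry v z| ^ (p + 1) :=
    hv.abs.rpow_const fun _ => Or.inr (by linarith)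
  refine ((hexp.fun_mul hweight).fun_mul hpow).congr fun z => ?_
  rcases eq_or_ne z.2 0 with hz | hz
  · simp [Function.uncurry, hypPotential, hz]
  · have hsinh : sinh z.2 ≠ 0 := sinh_ne_zero.2 hz
    simp only [Function.uncurry, hypPotential,
      rpow_sub_one (div_ne_zero hz hsinh)]
    field_simp

lemma differentiableAt_hypPotential (hp : 0 < p)
    (hv : DifferentiableAt ℝ (Function.uncurry v) (τ, s)) (hs : 0 < s) :
    DifferentiableAt ℝ (Function.uncurry (hypPotential p v)) (τ, s) := by
  have hsinh : 0 < sinh s := sinh_pos_iff.2 hs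
  have hpow : DifferentiableAt ℝ (fun z => |Function.uncurry v z| ^ (p + 1)) (τ, s) :=
    (hasDerivAt_abs_rpow _ (by linarith)).differentiableAt.comp (τ, s) hv
  have hweight : DifferentiableAt ℝ (fun x => (x / sinh x) ^ (p - 1)) s :=
    (differentiableAt_id.fun_div differentiableAt_sinh hsinh.ne').rpow_const
      (Or.inl (div_pos hs hsinh).ne')
  exact (((by fun_prop : DifferentiableAt ℝ (fun z : ℝ × ℝ => Real.exp (-(p - 3) * z.1))
    (τ, s)).mul (hweight.comp (τ, s) differentiableAt_snd)).mul hpow).mul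
      (differentiableAt_snd.fun_pow 2)

-- In terms of `w = s v` the weight is `e^{-(p-3)τ} (sinh s)^{1-p}`, whose logarithmic null
-- derivative `-(p-3) - (p-1) coth s` is what produces the Morawetz density.
lemma nullDeriv_hypPotential (hp : 0 < p)
    (hv : DifferentiableAt ℝ (Function.uncurry v) (τ, s)) (hs : 0 < s) :
    nullDeriv (hypPotential p v) τ s =
      -((p - 3) + (p - 1) * (cosh s / sinh s)) * hypPotential p v τ s +
        (p + 1) * (Real.exp (-(p - 3) * τ) * sinh s ^ (1 - p) *
          (|radialReduction v τ s| ^ (p - 1) * radialReduction v τ s)) *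
          nullDeriv (radialReduction v) τ s := by
  have hsinh : 0 < sinh s := sinh_pos_iff.2 hs
  have hexp : HasDerivAt (fun x => Real.exp (-(p - 3) * (τ + x)))
      (Real.exp (-(p - 3) * τ) * -(p - 3)) 0 := by
    simpa using (((hasDerivAt_id' (0 : ℝ)).const_add τ).const_mul (-(p - 3))).exp
  have hweight : HasDerivAt (fun x => sinh (s + x) ^ (1 - p))
      (cosh s * (1 - p) * sinh s ^ (1 - p - 1)) 0 := by
    simpa using ((hasDerivAt_id' (0 : ℝ)).const_add s).sinh.rpow_const (p := 1 - p)
      (Or.inl (by simpa using hsinh.ne'))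
  have hw : HasDerivAt (fun x => radialReduction v (τ + x) (s + x))
      (nullDeriv (radialReduction v) τ s) 0 :=
    hasDerivAt_nullDeriv (differentiableAt_snd.mul hv)
  have hpow : HasDerivAt (fun x => |radialReduction v (τ + x) (s + x)| ^ (p + 1))
      ((p + 1) * |radialReduction v τ s| ^ (p - 1) * radialReduction v τ s *
        nullDeriv (radialReduction v) τ s) 0 := by
    refine ((hasDerivAt_abs_rpow _ (by linarith : 1 < p + 1)).comp 0 hw).congr_deriv ?_
    rw [add_zero, add_zero, show p + 1 - 2 = p - 1 by ring]
  have hP : (fun x => hypPotential p v (τ + x) (s + x)) =ᶠ[𝓝 0] fun x =>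
      Real.exp (-(p - 3) * (τ + x)) * sinh (s + x) ^ (1 - p) *
        |radialReduction v (τ + x) (s + x)| ^ (p + 1) := by
    filter_upwards [lt_mem_nhds (neg_lt_zero.2 hs)] with x hx
    exact hypPotential_eq_radialReduction p v _ (by linarith)
  rw [(hasDerivAt_nullDeriv (differentiableAt_hypPotential hp hv hs)).unique
    (((hexp.fun_mul hweight).fun_mul hpow).congr_of_eventuallyEq hP),
    hypPotential_eq_radialReduction p v τ hs, rpow_sub_one hsinh.ne']
  simp only [add_zero]
  ring

end Potential

section Morawetz

variable {p : ℝ} {v : ℝ → ℝ → ℝ}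

lemma null_energy_source {I : Set ℝ} (hp : 0 < p) (hv : ContDiff ℝ 2 (Function.uncurry v))
    (hsol : IsHypNLWSol p I v) {τ s : ℝ} (hτ : τ ∈ I) (hs : 0 < s) :
    nullDeriv (radialReduction v) τ s *
          (timeDeriv (nullDeriv (radialReduction v)) τ s -
            deriv (nullDeriv (radialReduction v) τ) s) +
        nullDeriv (fun τ s => 1 / (p + 1) * hypPotential p v τ s) τ s =
      -((p - 3) / (p + 1) * hypPotential p v τ s +
        (p - 1) / (p + 1) * (cosh s / sinh s * hypPotential p v τ s)) := by
  have hp1 : p + 1 ≠ 0 := by linarith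
  rw [timeDeriv_sub_deriv_nullDeriv (contDiff_uncurry_radialReduction hv),
    timeDeriv2_sub_deriv_radialReduction hsol hv hτ hs, nullDeriv_const_mul,
    nullDeriv_hypPotential hp (hv.differentiable (by norm_num) _) hs]
  field_simp
  ring

lemma null_energy_balance {T R : ℝ} (hp : 0 < p) (hT : 0 ≤ T) (hR : 0 ≤ R)
    (hv : ContDiff ℝ 2 (Function.uncurry v)) (hvR : ∀ τ s, R ≤ s → v τ s = 0)
    (hsol : IsHypNLWSol p (Ioo 0 T) v) :
    (∫ τ in 0..T, ∫ s in 0..R, ((p - 3) / (p + 1) * hypPotential p v τ s +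
        (p - 1) / (p + 1) * (cosh s / sinh s * hypPotential p v τ s))) +
        1 / 2 * (∫ τ in 0..T, nullDeriv (radialReduction v) τ 0 ^ 2) +
        ∫ s in 0..R, (1 / 2 * nullDeriv (radialReduction v) T s ^ 2 +
          1 / (p + 1) * hypPotential p v T s) =
      ∫ s in 0..R, (1 / 2 * nullDeriv (radialReduction v) 0 s ^ 2 +
        1 / (p + 1) * hypPotential p v 0 s) := by
  set W := nullDeriv (radialReduction v)
  set P := hypPotential p v
  have hW : ContDiff ℝ 1 (Function.uncurry W) :=
    contDiff_uncurry_nullDeriv (contDiff_uncurry_radialReduction hv) (by norm_num)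
  have hP : Continuous (Function.uncurry P) := continuous_hypPotential (by linarith) hv.continuous
  have hcothP : Continuous (Function.uncurry fun τ s => cosh s / sinh s * P τ s) :=
    continuous_coth_mul_hypPotential hp hv.continuous
  have hidentity := integral_null_energy_identity (W := W)
    (G := fun τ s => 1 / (p + 1) * P τ s)
    (q := fun τ s => -((p - 3) / (p + 1) * P τ s +
      (p - 1) / (p + 1) * (cosh s / sinh s * P τ s)))
    hT hR hW (hP.const_mul _) ((hP.const_mul _).fun_add (hcothP.const_mul _)).fun_neg
    (fun τ _ s hs => (differentiableAt_hypPotential hp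
      (hv.differentiable (by norm_num) _) hs.1).const_mul _)
    (fun τ hτ s hs => null_energy_source hp hv hsol hτ hs.1)
  have houter (τ : ℝ) : 1 / (p + 1) * P τ R - 1 / 2 * W τ R ^ 2 = 0 := by
    have hPR : P τ R = 0 := hypPotential_eq_zero (by linarith) (hvR τ R le_rfl)
    have hWR : W τ R = 0 := nullDeriv_eq_zero_of_forall_ge fun τ s hs => by
      simp [radialReduction, hvR τ s hs]
    simp [hPR, hWR]
  have hinner (τ : ℝ) : 1 / (p + 1) * P τ 0 - 1 / 2 * W τ 0 ^ 2 = -(1 / 2 * W τ 0 ^ 2) := by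
    rw [show P τ 0 = 0 from hypPotential_zero_right p v τ, mul_zero, zero_sub]
  simp only [houter, hinner, intervalIntegral.integral_neg, intervalIntegral.integral_zero,
    intervalIntegral.integral_const_mul] at hidentity
  linarith

lemma morawetz_le_initial_null_energy {T R : ℝ} (hp : 3 ≤ p) (hT : 0 ≤ T) (hR : 0 ≤ R)
    (hv : ContDiff ℝ 2 (Function.uncurry v)) (hvR : ∀ τ s, R ≤ s → v τ s = 0)
    (hsol : IsHypNLWSol p (Ioo 0 T) v) :
    (p - 1) / (p + 1) *
        ∫ τ in 0..T, ∫ s in 0..R, cosh s / sinh s * hypPotential p v τ s ≤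
      ∫ s in 0..R, (1 / 2 * nullDeriv (radialReduction v) 0 s ^ 2 +
        1 / (p + 1) * hypPotential p v 0 s) := by
  have hP : Continuous (Function.uncurry (hypPotential p v)) :=
    continuous_hypPotential (by linarith) hv.continuous
  have hcothP : Continuous (Function.uncurry fun τ s => cosh s / sinh s * hypPotential p v τ s) :=
    continuous_coth_mul_hypPotential (by linarith) hv.continuous
  have hinner : 0 ≤ ∫ τ in 0..T, nullDeriv (radialReduction v) τ 0 ^ 2 :=
    intervalIntegral.integral_nonneg hT fun _ _ => sq_nonneg _
  have hfinal : 0 ≤ ∫ s in 0..R, (1 / 2 * nullDeriv (radialReduction v) T s ^ 2 +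
      1 / (p + 1) * hypPotential p v T s) :=
    intervalIntegral.integral_nonneg hR fun s hs => by
      have hP_nonneg : 0 ≤ hypPotential p v T s := hypPotential_nonneg hs.1
      positivity
  have hbulk : (p - 1) / (p + 1) *
        ∫ τ in 0..T, ∫ s in 0..R, cosh s / sinh s * hypPotential p v τ s ≤
      ∫ τ in 0..T, ∫ s in 0..R, ((p - 3) / (p + 1) * hypPotential p v τ s +
        (p - 1) / (p + 1) * (cosh s / sinh s * hypPotential p v τ s)) := by
    simp only [← intervalIntegral.integral_const_mul]
    refine intervalIntegral_intervalIntegral_mono (hcothP.const_mul _)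
      ((hP.const_mul _).add (hcothP.const_mul _)) hT hR fun τ _ s hs =>
      le_add_of_nonneg_left (mul_nonneg ?_ (hypPotential_nonneg hs.1))
    exact div_nonneg (by linarith) (by linarith)
  linarith [null_energy_balance (by linarith) hT hR hv hvR hsol]

lemma hypEnergy_eq_radialReduction (hp : -1 < p) (hv : ContDiff ℝ 1 (Function.uncurry v))
    {R : ℝ} (hR : 0 ≤ R) (hvR : ∀ τ s, R ≤ s → v τ s = 0) (τ : ℝ) :
    hypEnergy p v τ =
      1 / 2 * (∫ s in 0..R, deriv (radialReduction v τ) s ^ 2) +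
        1 / 2 * (∫ s in 0..R, timeDeriv (radialReduction v) τ s ^ 2) +
        1 / (p + 1) * ∫ s in 0..R, hypPotential p v τ s := by
  have hspace : ∫ s in Ioi 0, deriv (v τ) s ^ 2 * s ^ 2 =
      ∫ s in 0..R, deriv (radialReduction v τ) s ^ 2 := by
    rw [setIntegral_Ioi_eq_intervalIntegral hR fun s hs => by
      rw [deriv_eq_zero_of_forall_ge fun x hx => hvR τ x (hs.le.trans hx)]; ring]
    exact (integral_sq_deriv_id_mul (hv.comp (contDiff_prodMk_right τ)) (hvR τ R le_rfl)).symm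
  have htime : ∫ s in Ioi 0, timeDeriv v τ s ^ 2 * s ^ 2 =
      ∫ s in 0..R, timeDeriv (radialReduction v) τ s ^ 2 := by
    rw [setIntegral_Ioi_eq_intervalIntegral hR fun s hs => by
      simp [timeDeriv, hvR _ s hs.le]]
    simp only [timeDeriv_radialReduction, radialReduction, mul_pow, mul_comm]
  have hpot : ∫ s in Ioi 0, hypPotential p v τ s = ∫ s in 0..R, hypPotential p v τ s :=
    setIntegral_Ioi_eq_intervalIntegral hR fun s hs => hypPotential_eq_zero hp (hvR τ s hs.le)
  rw [← hspace, ← htime, ← hpot]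
  rfl

lemma null_energy_le_two_mul_hypEnergy (hp : -1 < p) (hv : ContDiff ℝ 1 (Function.uncurry v))
    {R : ℝ} (hR : 0 ≤ R) (hvR : ∀ τ s, R ≤ s → v τ s = 0) (τ : ℝ) :
    ∫ s in 0..R, (1 / 2 * nullDeriv (radialReduction v) τ s ^ 2 +
        1 / (p + 1) * hypPotential p v τ s) ≤
      2 * hypEnergy p v τ := by
  have hw : ContDiff ℝ 1 (Function.uncurry (radialReduction v)) :=
    contDiff_uncurry_radialReduction hv
  have hwτ : Continuous (timeDeriv (radialReduction v) τ) :=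
    (contDiff_uncurry_timeDeriv hw (m := 0) (by norm_num)).continuous.uncurry_left τ
  have hP : Continuous (hypPotential p v τ) :=
    (continuous_hypPotential hp.le hv.continuous).uncurry_left τ
  have hp1 : 0 < p + 1 := by linarith
  calc
    _ ≤ ∫ s in 0..R, (deriv (radialReduction v τ) s ^ 2 +
          timeDeriv (radialReduction v) τ s ^ 2 + 2 / (p + 1) * hypPotential p v τ s) := by
      unfold nullDeriv
      refine intervalIntegral.integral_mono_on hR
        (Continuous.intervalIntegrable (by fun_prop) 0 R)
        (Continuous.intervalIntegrable (by fun_prop) 0 R) fun s hs => add_le_add ?_ ?_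
      · linarith [two_mul_le_add_sq (timeDeriv (radialReduction v) τ s)
          (deriv (radialReduction v τ) s)]
      · have hP_nonneg : 0 ≤ hypPotential p v τ s := hypPotential_nonneg hs.1
        gcongr
        norm_num
    _ = 2 * hypEnergy p v τ := by
      rw [intervalIntegral.integral_add (Continuous.intervalIntegrable (by fun_prop) 0 R)
          (Continuous.intervalIntegrable (by fun_prop) 0 R),
        intervalIntegral.integral_add (Continuous.intervalIntegrable (by fun_prop) 0 R)
          (Continuous.intervalIntegrable (by fun_prop) 0 R),
        intervalIntegral.integral_const_mul, hypEnergy_eq_radialReduction hp hv hR hvR]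
      ring

theorem hyperbolic_morawetz_general {T R : ℝ} (hp : 3 ≤ p) (hT : 0 ≤ T)
    (hv : ContDiff ℝ 2 (Function.uncurry v)) (hvR : ∀ τ s, R ≤ s → v τ s = 0)
    (hsol : IsHypNLWSol p (Ioo 0 T) v) :
    ∫ τ in Icc 0 T, ∫ s in Ioi 0, Real.exp (-(p - 3) * τ) * (s / sinh s) ^ (p - 1) *
        (cosh s / sinh s) * |v τ s| ^ (p + 1) * s ^ 2 ≤
      2 * ((p + 1) / (p - 1)) * hypEnergy p v 0 := by
  have hR : 0 ≤ max R 0 := le_max_right R 0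
  have hvR' : ∀ τ s, max R 0 ≤ s → v τ s = 0 := fun τ s hs => hvR τ s ((le_max_left R 0).trans hs)
  have hdensity : ∫ τ in Icc 0 T, ∫ s in Ioi 0, Real.exp (-(p - 3) * τ) *
        (s / sinh s) ^ (p - 1) * (cosh s / sinh s) * |v τ s| ^ (p + 1) * s ^ 2 =
      ∫ τ in 0..T, ∫ s in 0..max R 0, cosh s / sinh s * hypPotential p v τ s := by
    rw [integral_Icc_eq_integral_Ioc, ← intervalIntegral.integral_of_le hT]
    congr! 2 with τ
    rw [← setIntegral_Ioi_eq_intervalIntegral hR fun s hs => by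
      rw [hypPotential_eq_zero (by linarith) (hvR' τ s hs.le), mul_zero]]
    congr! 2 with s
    rw [hypPotential]
    ring
  have hmorawetz := (morawetz_le_initial_null_energy hp hT hR hv hvR' hsol).trans
    (null_energy_le_two_mul_hypEnergy (by linarith) (hv.of_le (by norm_num)) hR hvR' 0)
  rw [hdensity, mul_right_comm, ← mul_div_assoc, le_div_iff₀ (by linarith)]
  rw [div_mul_eq_mul_div, div_le_iff₀ (by linarith)] at hmorawetz
  linarith

end Morawetz

/-- Hyperbolic Morawetz estimate: for a sufficiently smooth, decaying
solution `ũ` of the equation in hyperbolic coordinates on `[0,T]`,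
`∫_0^T ∫ e^{-(p-3)τ}(s/sinh s)^{p-1}(cosh s/sinh s)|ũ|^{p+1} s² ds dτ ≤ C E(ũ)(0)`, with `C`
depending only on `p`. -/
theorem hyperbolic_morawetz (p : ℝ) (hp3 : 3 < p) (hp5 : p < 5) :
    ∃ C : ℝ, 0 < C ∧
      ∀ (T : ℝ), 0 < T → ∀ v : ℝ → ℝ → ℝ,
        ContDiff ℝ 2 (fun z : ℝ × ℝ => v z.1 z.2) →
        (∃ R : ℝ, ∀ τ s : ℝ, R ≤ s → v τ s = 0) →
        (∀ τ ∈ Set.Icc (0 : ℝ) T, ∀ s : ℝ, 0 < s →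
          timeDeriv2 v τ s - deriv (deriv (v τ)) s - (2 / s) * deriv (v τ) s +
            Real.exp (-(p - 3) * τ) * (s / Real.sinh s) ^ (p - 1) *
              (|v τ s| ^ (p - 1) * v τ s) = 0) →
        (∫ τ in Set.Icc (0 : ℝ) T, ∫ s in Set.Ioi (0 : ℝ),
            Real.exp (-(p - 3) * τ) * (s / Real.sinh s) ^ (p - 1) *
              (Real.cosh s / Real.sinh s) * |v τ s| ^ (p + 1) * s ^ 2) ≤
          C * hypEnergy p v 0 := by
  refine ⟨2 * ((p + 1) / (p - 1)), mul_pos two_pos (div_pos (by linarith) (by linarith)), ?_⟩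
  rintro T hT v hv ⟨R, hvR⟩ hsol
  exact hyperbolic_morawetz_general hp3.le hT.le hv hvR
    fun τ hτ => hsol τ (Ioo_subset_Icc_self hτ)

end
end
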